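/- arXiv:2508.03479 — 5 statements merged into one kernel-verified Lean document; each statement's English description precedes it below -/
import Mathlib

section
/- Let G be a finite group and let H be a subgroup of G. Then |{x ∈ G : H ∩ H^x ≠ 1}| / |G| ≤ Σ_C |C ∩ H|² / |C|, where the sum (of rational numbers) is over all conjugacy classes C of G whose elements have prime order. -/
/-!
If `H ∩ K^x` is non-trivial, it contains an element `a` of prime order, and then `a ∈ H` and
`x a x⁻¹ ∈ K`. For a fixed `a` in a class `C`, the element `x a x⁻¹` is uniformly distributed on
`C` when `x` is uniform on `G`, so it lies in `K` with probability `|C ∩ K| / |C|`. Now take the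
union bound over the elements `a ∈ C ∩ H` and over the classes `C` of elements of prime order.
-/

theorem ncard_div_le_sum_of_subset_biUnion {𝕜 ι α : Type*} [Field 𝕜] [LinearOrder 𝕜]
    [IsStrictOrderedRing 𝕜] [Finite α] {A : Set α} {t : Finset ι} {B : ι → Set α}
    (hA : A ⊆ ⋃ i ∈ t, B i) (n : ℕ) :
    (A.ncard : 𝕜) / n ≤ ∑ i ∈ t, ((B i).ncard : 𝕜) / n := by
  rw [← Finset.sum_div]
  gcongr
  exact_mod_cast (Set.ncard_le_ncard hA).trans (t.set_ncard_biUnion_le B)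

section Orbit

open MulAction

theorem ncard_setOf_smul_mem_mul_ncard_orbit {G X : Type*} [Group G] [MulAction G X] (a : X)
    (S : Set X) :
    {g : G | g • a ∈ S}.ncard * (orbit G a).ncard = (orbit G a ∩ S).ncard * Nat.card G := by
  let φ : G ⧸ stabilizer G a → X := ofQuotientStabilizer G a
  have range_φ : Set.range φ = orbit G a := by
    ext b
    exact QuotientGroup.mk_surjective.exists
  have ncard_setOf : {g : G | g • a ∈ S}.ncard = Nat.card (stabilizer G a) * (φ ⁻¹' S).ncard :=
    QuotientGroup.card_preimage_mk _ (φ ⁻¹' S)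
  have ncard_preimage : (φ ⁻¹' S).ncard = (orbit G a ∩ S).ncard := by
    rw [← Set.preimage_range_inter, range_φ, Set.ncard_preimage_of_injective_subset_range
      (injective_ofQuotientStabilizer G a) (range_φ ▸ Set.inter_subset_left)]
  rw [ncard_setOf, ncard_preimage, ← index_stabilizer, mul_right_comm, Subgroup.card_mul_index,
    mul_comm]

end Orbit

section Group

variable {G : Type*} [Group G]

theorem orderOf_eq_of_isConj {a b : G} (h : IsConj a b) : orderOf a = orderOf b :=
  let ⟨c, hc⟩ := h
  hc.orderOf_eq (c : G)

theorem exists_mem_prime_orderOf_of_ne_bot {H : Subgroup G} [Finite H] (hH : H ≠ ⊥) :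
    ∃ a ∈ H, (orderOf a).Prime := by
  obtain ⟨p, hp, hpH⟩ := Nat.exists_prime_and_dvd (mt Subgroup.card_eq_one.mp hH)
  have := Fact.mk hp
  obtain ⟨a, ha⟩ := exists_prime_orderOf_dvd_card' p hpH
  exact ⟨a, a.2, by rwa [Subgroup.orderOf_coe, ha]⟩

theorem mem_map_conj_inv_iff {K : Subgroup G} {x a : G} :
    a ∈ K.map (MulAut.conj x⁻¹).toMonoidHom ↔ x * a * x⁻¹ ∈ K :=
  Subgroup.mem_map_equiv.trans (by simp)

theorem exists_conjClasses_prime_orderOf_of_inf_map_conj_ne_bot {H K : Subgroup G}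
    [Finite H] {x : G} (hx : H ⊓ K.map (MulAut.conj x⁻¹).toMonoidHom ≠ ⊥) :
    ∃ C : ConjClasses G, (∀ g ∈ C.carrier, (orderOf g).Prime) ∧
      ∃ a ∈ C.carrier ∩ H, x * a * x⁻¹ ∈ K := by
  have : Finite (H ⊓ K.map (MulAut.conj x⁻¹).toMonoidHom : Subgroup G) :=
    .of_injective _ (Subgroup.inclusion_injective inf_le_left)
  obtain ⟨a, ⟨haH, haK⟩, ha⟩ := exists_mem_prime_orderOf_of_ne_bot hx
  refine ⟨ConjClasses.mk a, fun g hg ↦ ?_, a, ⟨ConjClasses.mem_carrier_mk, haH⟩,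
    mem_map_conj_inv_iff.mp haK⟩
  have hga : IsConj g a :=
    ConjClasses.mk_eq_mk_iff_isConj.mp (ConjClasses.mem_carrier_iff_mk_eq.mp hg)
  rwa [orderOf_eq_of_isConj hga]

theorem ncard_setOf_conj_mem_mul_ncard_carrier {C : ConjClasses G} {a : G} (ha : a ∈ C.carrier)
    (S : Set G) :
    {x : G | x * a * x⁻¹ ∈ S}.ncard * C.carrier.ncard = (C.carrier ∩ S).ncard * Nat.card G := by
  rw [← ConjClasses.mem_carrier_iff_mk_eq.mp ha, ← ConjAct.orbit_eq_carrier_conjClasses]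
  exact ncard_setOf_smul_mem_mul_ncard_orbit (G := ConjAct G) a S

variable [Finite G]

theorem ncard_setOf_conj_mem_div_card {C : ConjClasses G} {a : G} (ha : a ∈ C.carrier)
    (S : Set G) :
    ({x : G | x * a * x⁻¹ ∈ S}.ncard : ℚ) / Nat.card G
      = (C.carrier ∩ S).ncard / C.carrier.ncard := by
  have hG : (Nat.card G : ℚ) ≠ 0 := Nat.cast_ne_zero.mpr Nat.card_pos.ne'
  have hC : (C.carrier.ncard : ℚ) ≠ 0 := Nat.cast_ne_zero.mpr (Set.ncard_ne_zero_of_mem ha)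
  rw [div_eq_div_iff hG hC]
  exact_mod_cast ncard_setOf_conj_mem_mul_ncard_carrier ha S

theorem ncard_setOf_exists_conj_mem_div_card_le (C : ConjClasses G) (S T : Set G) :
    ({x : G | ∃ a ∈ C.carrier ∩ S, x * a * x⁻¹ ∈ T}.ncard : ℚ) / Nat.card G
      ≤ (C.carrier ∩ S).ncard * (C.carrier ∩ T).ncard / C.carrier.ncard := by
  have hS := (C.carrier ∩ S).toFinite
  have cover : {x : G | ∃ a ∈ C.carrier ∩ S, x * a * x⁻¹ ∈ T}
      ⊆ ⋃ a ∈ hS.toFinset, {x : G | x * a * x⁻¹ ∈ T} := fun x ⟨a, ha, hax⟩ ↦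
    Set.mem_biUnion (hS.mem_toFinset.mpr ha) hax
  calc ({x : G | ∃ a ∈ C.carrier ∩ S, x * a * x⁻¹ ∈ T}.ncard : ℚ) / Nat.card G
      ≤ ∑ a ∈ hS.toFinset, ({x : G | x * a * x⁻¹ ∈ T}.ncard : ℚ) / Nat.card G :=
        ncard_div_le_sum_of_subset_biUnion cover _
    _ = ∑ _a ∈ hS.toFinset, ((C.carrier ∩ T).ncard : ℚ) / C.carrier.ncard :=
        Finset.sum_congr rfl fun a ha ↦
          ncard_setOf_conj_mem_div_card (hS.mem_toFinset.mp ha).1 T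
    _ = (C.carrier ∩ S).ncard * (C.carrier ∩ T).ncard / C.carrier.ncard := by
        rw [Finset.sum_const, nsmul_eq_mul, ← Set.ncard_eq_toFinset_card _ hS, mul_div_assoc]

end Group

theorem stmt5_general {G : Type*} [Group G] [Finite G] (H K : Subgroup G) :
    (Nat.card {x : G | H ⊓ Subgroup.map (MulAut.conj x⁻¹).toMonoidHom K ≠ ⊥} : ℚ)
        / (Nat.card G : ℚ)
      ≤ ∑ᶠ (C : ConjClasses G) (_ : ∀ g ∈ C.carrier, (orderOf g).Prime),
          (Nat.card (C.carrier ∩ (H : Set G) : Set G) : ℚ)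
            * (Nat.card (C.carrier ∩ (K : Set G) : Set G) : ℚ) / (Nat.card C.carrier : ℚ) := by
  let P : Set (ConjClasses G) := {C | ∀ g ∈ C.carrier, (orderOf g).Prime}
  let B (C : ConjClasses G) : Set G := {x | ∃ a ∈ C.carrier ∩ H, x * a * x⁻¹ ∈ K}
  have hP : P.Finite := P.toFinite
  have cover : {x : G | H ⊓ K.map (MulAut.conj x⁻¹).toMonoidHom ≠ ⊥} ⊆
      ⋃ C ∈ hP.toFinset, B C := fun x hx ↦ by
    obtain ⟨C, hC, hxC⟩ := exists_conjClasses_prime_orderOf_of_inf_map_conj_ne_bot hx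
    exact Set.mem_biUnion (hP.mem_toFinset.mpr hC) hxC
  calc ({x : G | H ⊓ K.map (MulAut.conj x⁻¹).toMonoidHom ≠ ⊥}.ncard : ℚ) / Nat.card G
      ≤ ∑ C ∈ hP.toFinset, ((B C).ncard : ℚ) / Nat.card G :=
        ncard_div_le_sum_of_subset_biUnion cover _
    _ ≤ ∑ C ∈ hP.toFinset,
          ((C.carrier ∩ H).ncard * (C.carrier ∩ K).ncard / C.carrier.ncard : ℚ) :=
        Finset.sum_le_sum fun C _ ↦ ncard_setOf_exists_conj_mem_div_card_le C H K
    _ = ∑ᶠ C ∈ P, ((C.carrier ∩ H).ncard * (C.carrier ∩ K).ncard / C.carrier.ncard : ℚ) :=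
        (finsum_mem_eq_finite_toFinset_sum _ hP).symm

/-- For a finite group `G` and a subgroup `H`, the probability that a uniformly random
`x ∈ G` has `H ⊓ H^x ≠ 1` is at most `∑_C |C ∩ H|² / |C|`, the sum running over the
conjugacy classes `C` of `G` all of whose elements have prime order. -/
theorem stmt5 {G : Type*} [Group G] [Finite G] (H : Subgroup G) :
    (Nat.card {x : G | H ⊓ Subgroup.map (MulAut.conj x⁻¹).toMonoidHom H ≠ ⊥} : ℚ)
        / (Nat.card G : ℚ)
      ≤ ∑ᶠ (C : ConjClasses G) (_ : ∀ g ∈ C.carrier, (orderOf g).Prime),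
          (Nat.card (C.carrier ∩ (H : Set G) : Set G) : ℚ) ^ 2
            / (Nat.card C.carrier : ℚ) := by
  simpa only [sq] using stmt5_general H H
end

section
/- Let G be a finite group, let p be a prime and let H be a Sylow p-subgroup of G. If there exists some x₀ ∈ G with H ∩ H^{x₀} = 1, then |{x ∈ G : H ∩ H^x ≠ 1}| ≤ |G| − |H| · |N_G(H)|, where N_G(H) is the normalizer of H in G. -/
/-!
If `H ⊓ H^x = 1` then `H ⊓ H^y = 1` for every `y` in the double coset `H x N_G(H)`, because
`H ⊓ H^{hxn}` is the conjugate of `H ⊓ H^x` by `n`. Moreover `(h, n) ↦ h x n` is injective on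
`H × N_G(H)` as soon as `H^x ⊓ N_G(H) = 1`, so that this double coset has `|H| |N_G(H)|` elements.
For a Sylow subgroup the two conditions on `x` coincide: a `p`-subgroup normalizing `H` lies in `H`.
-/

section

open DoubleCoset MulAut Subgroup
open scoped Pointwise

variable {G : Type*} [Group G] {H K : Subgroup G} {x y : G}

theorem conj_smul_eq_self_of_mem_normalizer (hx : x ∈ normalizer (H : Set G)) :
    conj x • H = H :=
  mem_normalizer_iff_map_conj_eq.mp hx

theorem inf_conj_smul_eq_bot_of_mem_doubleCoset (hx : H ⊓ conj x⁻¹ • K = ⊥)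
    (hy : y ∈ doubleCoset x (normalizer (K : Set G)) (normalizer (H : Set G))) :
    H ⊓ conj y⁻¹ • K = ⊥ := by
  obtain ⟨k, hk, n, hn, rfl⟩ := mem_doubleCoset.mp hy
  calc H ⊓ conj (k * x * n)⁻¹ • K
      = conj n⁻¹ • H ⊓ conj n⁻¹ • conj x⁻¹ • conj k⁻¹ • K := by
        rw [conj_smul_eq_self_of_mem_normalizer (inv_mem hn)]
        simp only [mul_inv_rev, map_mul, mul_smul]
    _ = conj n⁻¹ • (H ⊓ conj x⁻¹ • K) := by
        rw [conj_smul_eq_self_of_mem_normalizer (inv_mem hk), smul_inf]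
    _ = ⊥ := by rw [hx, smul_bot]

theorem mul_mul_injective_of_disjoint (h : Disjoint (conj x⁻¹ • H) K) :
    Function.Injective fun a : H × K ↦ (a.1 * x * a.2 : G) := by
  have hconj : Function.Injective (Prod.map (equivSMul (conj x⁻¹) H) (id : K → K)) :=
    (equivSMul (conj x⁻¹) H).injective.prodMap Function.injective_id
  convert (mul_right_injective x).comp ((mul_injective_of_disjoint h).comp hconj) using 2
  simp [mul_assoc]

theorem natCard_doubleCoset_of_disjoint (h : Disjoint (conj x⁻¹ • H) K) :
    Nat.card (doubleCoset x H K) = Nat.card H * Nat.card K := by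
  have hrange : doubleCoset x H K = Set.range fun a : H × K ↦ (a.1 * x * a.2 : G) := by
    ext y
    simp [mem_doubleCoset, eq_comm]
  rw [hrange, Nat.card_range_of_injective (mul_mul_injective_of_disjoint h), Nat.card_prod]

theorem natCard_mul_natCard_normalizer_le [Finite G]
    (hx : conj x⁻¹ • H ⊓ normalizer (H : Set G) = ⊥) :
    Nat.card H * Nat.card (normalizer (H : Set G)) ≤
      Nat.card {y : G | H ⊓ conj y⁻¹ • H = ⊥} := by
  have hinf : H ⊓ conj x⁻¹ • H = ⊥ := by
    rw [inf_comm, ← le_bot_iff, ← hx]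
    exact inf_le_inf_left _ le_normalizer
  have hsub : doubleCoset x H (normalizer (H : Set G)) ⊆ {y : G | H ⊓ conj y⁻¹ • H = ⊥} :=
    fun y hy ↦ inf_conj_smul_eq_bot_of_mem_doubleCoset hinf
      (Set.mul_subset_mul_right (Set.mul_subset_mul_right le_normalizer) hy)
  rw [← natCard_doubleCoset_of_disjoint (disjoint_iff.mpr hx)]
  exact Nat.card_mono (Set.toFinite _) hsub

theorem conj_smul_inf_normalizer_sylow {p : ℕ} (P : Sylow p G) (x : G) :
    conj x • (P : Subgroup G) ⊓ normalizer ((P : Subgroup G) : Set G) =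
      conj x • (P : Subgroup G) ⊓ P :=
  (P.isPGroup'.map (conj x).toMonoidHom).inf_normalizer_sylow P

theorem stmt6_general [Finite G] (H : Subgroup G)
    (h0 : ∃ x₀ : G, conj x₀⁻¹ • H ⊓ normalizer (H : Set G) = ⊥) :
    (Nat.card {x : G | H ⊓ conj x⁻¹ • H ≠ ⊥} : ℤ) ≤
      (Nat.card G : ℤ) - (Nat.card H : ℤ) * (Nat.card (normalizer (H : Set G)) : ℤ) := by
  obtain ⟨x₀, hx₀⟩ := h0
  have hle := natCard_mul_natCard_normalizer_le hx₀
  have hcompl := Set.ncard_add_ncard_compl {x : G | H ⊓ conj x⁻¹ • H = ⊥}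
  rw [Set.compl_ofPred] at hcompl
  simp only [Nat.card_coe_set_eq] at hle ⊢
  zify at hle hcompl
  linarith

end

/-- Let `G` be a finite group, `p` a prime and `H` a Sylow `p`-subgroup of `G`. If
`H ⊓ H^{x₀} = 1` for some `x₀ ∈ G`, then
`|{x ∈ G : H ⊓ H^x ≠ 1}| ≤ |G| - |H|·|N_G(H)|`. -/
theorem stmt6 {G : Type*} [Group G] [Finite G]
    (p : ℕ) (hp : p.Prime) (H : Sylow p G)
    (h0 : ∃ x₀ : G, (H : Subgroup G) ⊓
      Subgroup.map (MulAut.conj x₀⁻¹).toMonoidHom (H : Subgroup G) = ⊥) :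
    (Nat.card {x : G | (H : Subgroup G) ⊓
        Subgroup.map (MulAut.conj x⁻¹).toMonoidHom (H : Subgroup G) ≠ ⊥} : ℤ)
      ≤ (Nat.card G : ℤ) -
          (Nat.card (H : Subgroup G) : ℤ) *
            (Nat.card (Subgroup.normalizer ((H : Subgroup G) : Set G)) : ℤ) :=
  stmt6_general (H : Subgroup G) <| h0.imp fun x₀ hx₀ ↦
    (conj_smul_inf_normalizer_sylow H x₀⁻¹).trans ((inf_comm _ _).trans hx₀)
end

section
/- Let r be a prime, let q = r^f be a power of r, let n ≥ 2, let G = PSL_n(q), and let H be a Sylow r-subgroup of G. Then there exists an element x ∈ G such that H ∩ H^x = 1. -/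
open Matrix

/-!
For a function `b` from the indices to a linear order, the matrices `g` with `g i j = δ i j`
whenever `b j ≤ b i` form the unipotent radical of a parabolic subgroup of `SLₘ`. If `b` is
injective this is a maximal unipotent subgroup, of order `q ^ (n choose 2)` over a field with `q`
elements, and this is the full power of the characteristic dividing
`|GLₙ(q)| = q ^ (n choose 2) * ∏ (q ^ (n - i) - 1)`; hence its image in `PSLₙ(q)` is a Sylow
subgroup. Reversing the order gives the opposite radical, and the two meet trivially modulo scalars:
a matrix in the first which is a scalar multiple of one in the second vanishes off the diagonal.
Since Sylow subgroups are conjugate, one pair meeting trivially yields a conjugate of any given `H`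
meeting `H` trivially.
-/

open scoped Pointwise

section Sylow

variable {G : Type*} [Group G] {p : ℕ} [Fact p.Prime] [Finite (Sylow p G)]

theorem exists_inf_conj_smul_eq_bot_of_inf_eq_bot {P Q : Sylow p G}
    (hPQ : (P : Subgroup G) ⊓ Q = ⊥) (H : Sylow p G) :
    ∃ x : G, (H : Subgroup G) ⊓ MulAut.conj x⁻¹ • (H : Subgroup G) = ⊥ := by
  obtain ⟨g, rfl⟩ := MulAction.exists_smul_eq G H P
  obtain ⟨k, rfl⟩ := MulAction.exists_smul_eq G H Q
  refine ⟨k⁻¹ * g, ?_⟩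
  calc (H : Subgroup G) ⊓ MulAut.conj (k⁻¹ * g)⁻¹ • (H : Subgroup G)
    _ = MulAut.conj g⁻¹ • (((g • H : Sylow p G) : Subgroup G) ⊓ (k • H : Sylow p G)) := by
      simp only [Sylow.coe_subgroup_smul, Subgroup.smul_inf, smul_smul, ← map_mul,
        _root_.mul_inv_rev, inv_inv, inv_mul_cancel, map_one, one_smul]
    _ = ⊥ := by rw [hPQ, Subgroup.smul_bot]

end Sylow

section BlockUnitriangular

variable {m α R : Type*} [LinearOrder α]

theorem natCard_lt_eq_choose_two [Fintype m] {b : m → α} (hb : b.Injective) :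
    Nat.card {p : m × m // b p.1 < b p.2} = (Fintype.card m).choose 2 := by
  let := LinearOrder.lift' b hb
  rw [Nat.card_eq_fintype_card, Fintype.card_subtype]
  exact Fintype.card_product_filter_lt

section Semiring

variable [Semiring R] {M N : Matrix m m R} {b : m → α}

/-- Block upper unitriangular matrices with respect to the blocks `b i = const`: block triangular
matrices whose diagonal blocks are identity matrices. They are the ordinary upper unitriangular
matrices when `b = id`, and the lower ones when `b = OrderDual.toDual`. -/
def IsBlockUnitriangular [DecidableEq m] (M : Matrix m m R) (b : m → α) : Prop :=
  ∀ ⦃i j⦄, b j ≤ b i → M i j = (1 : Matrix m m R) i j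

namespace IsBlockUnitriangular

variable [DecidableEq m]

theorem blockTriangular (hM : IsBlockUnitriangular M b) : M.BlockTriangular b := by
  intro i j hij
  rw [hM hij.le, one_apply_ne (ne_of_apply_ne b hij.ne')]

theorem one : IsBlockUnitriangular (1 : Matrix m m R) b :=
  fun _ _ _ ↦ rfl

theorem eq_one_of_eq_smul (hM : IsBlockUnitriangular M b)
    (hN : IsBlockUnitriangular N (OrderDual.toDual ∘ b)) {c : R} (h : M = c • N) : M = 1 := by
  ext i j
  rcases le_total (b j) (b i) with hij | hij
  · exact hM hij
  · obtain rfl | hne := eq_or_ne i j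
    · exact hM le_rfl
    · rw [h, Matrix.smul_apply, hN hij, one_apply_ne hne, smul_zero]

variable [Fintype m]

theorem mul_apply (hM : IsBlockUnitriangular M b) (hN : N.BlockTriangular b) {i j : m}
    (hij : b j ≤ b i) : (M * N) i j = N i j := by
  rw [Matrix.mul_apply, Finset.sum_eq_single i _ (by simp), hM le_rfl, one_apply_eq, one_mul]
  intro k _ hki
  rcases le_or_gt (b k) (b i) with hk | hk
  · rw [hM hk, one_apply_ne hki.symm, zero_mul]
  · rw [hN (hij.trans_lt hk), mul_zero]

theorem mul (hM : IsBlockUnitriangular M b) (hN : IsBlockUnitriangular N b) :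
    IsBlockUnitriangular (M * N) b :=
  fun _ _ hij ↦ (hM.mul_apply hN.blockTriangular hij).trans (hN hij)

end IsBlockUnitriangular

/-- The block unitriangular matrix with prescribed entries strictly above the diagonal blocks. -/
def blockUnitriangularOf [DecidableEq m] (v : {p : m × m // b p.1 < b p.2} → R) : Matrix m m R :=
  of fun i j ↦ if h : b i < b j then v ⟨(i, j), h⟩ else (1 : Matrix m m R) i j

theorem isBlockUnitriangular_blockUnitriangularOf [DecidableEq m]
    (v : {p : m × m // b p.1 < b p.2} → R) : IsBlockUnitriangular (blockUnitriangularOf v) b :=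
  fun _ _ hij ↦ dif_neg hij.not_gt

end Semiring

section CommRing

variable [Fintype m] [DecidableEq m] [CommRing R] {M : Matrix m m R} {b : m → α}

namespace IsBlockUnitriangular

theorem det_eq_one (hM : IsBlockUnitriangular M b) : M.det = 1 := by
  have toSquareBlock_eq_one (a : α) : M.toSquareBlock b a = 1 := by
    ext i j
    rw [toSquareBlock_def, of_apply, hM (j.2.trans i.2.symm).le]
    simp only [one_apply, Subtype.ext_iff]
  simp only [hM.blockTriangular.det, toSquareBlock_eq_one, det_one, Finset.prod_const_one]

theorem inv (hM : IsBlockUnitriangular M b) : IsBlockUnitriangular M⁻¹ b := by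
  have hdet : IsUnit M.det := hM.det_eq_one ▸ isUnit_one
  let := M.invertibleOfIsUnitDet hdet
  intro i j hij
  rw [← hM.mul_apply (blockTriangular_inv_of_blockTriangular hM.blockTriangular) hij,
    M.mul_nonsing_inv hdet]

end IsBlockUnitriangular

variable (R b) in
/-- The block upper unitriangular matrices as a subgroup of the special linear group: the unipotent
radical of the parabolic subgroup of block upper triangular matrices. -/
def blockUnitriangularSubgroup : Subgroup (SpecialLinearGroup m R) where
  carrier := {g | IsBlockUnitriangular g.1 b}
  one_mem' := .one
  mul_mem' := .mul
  inv_mem' {g} hg := by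
    have hinv : ((g⁻¹ : SpecialLinearGroup m R) : Matrix m m R) = (g : Matrix m m R)⁻¹ := by
      rw [Matrix.SpecialLinearGroup.coe_inv, inv_def, g.2, Ring.inverse_one, one_smul]
    change IsBlockUnitriangular ((g⁻¹ : SpecialLinearGroup m R) : Matrix m m R) b
    exact hinv ▸ hg.inv

theorem map_blockUnitriangularSubgroup_inf_map_toDual :
    (blockUnitriangularSubgroup R b).map
        (QuotientGroup.mk' (Subgroup.center (SpecialLinearGroup m R))) ⊓
      (blockUnitriangularSubgroup R (OrderDual.toDual ∘ b)).map
        (QuotientGroup.mk' (Subgroup.center (SpecialLinearGroup m R))) = ⊥ := by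
  rw [eq_bot_iff]
  rintro _ ⟨⟨u, hu, rfl⟩, l, hl, hlu⟩
  obtain ⟨z, hz, hlz⟩ := (QuotientGroup.mk'_eq_mk' _).1 hlu
  obtain ⟨c, -, hc⟩ := Matrix.SpecialLinearGroup.mem_center_iff.1 hz
  have hul : u.1 = c • l.1 := by
    rw [smul_eq_mul_diagonal, ← scalar_apply, hc, ← Matrix.SpecialLinearGroup.coe_mul, hlz]
  have hu_one : u = 1 := Subtype.ext (hu.eq_one_of_eq_smul hl hul)
  rw [hu_one, map_one]
  exact one_mem _

variable (R b) in
/-- Block unitriangular matrices are parametrized by their entries strictly above the diagonal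
blocks. -/
def blockUnitriangularSubgroupEquiv :
    blockUnitriangularSubgroup R b ≃ ({p : m × m // b p.1 < b p.2} → R) where
  toFun g p := g.1.1 p.1.1 p.1.2
  invFun v := ⟨⟨blockUnitriangularOf v, (isBlockUnitriangular_blockUnitriangularOf v).det_eq_one⟩,
    isBlockUnitriangular_blockUnitriangularOf v⟩
  left_inv g := by
    ext i j
    by_cases h : b i < b j
    · exact dif_pos h
    · exact (dif_neg h).trans (g.2 (not_lt.1 h)).symm
  right_inv _ := funext fun p ↦ dif_pos p.2

theorem natCard_blockUnitriangularSubgroup :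
    Nat.card (blockUnitriangularSubgroup R b) =
      Nat.card R ^ Nat.card {p : m × m // b p.1 < b p.2} := by
  rw [Nat.card_congr (blockUnitriangularSubgroupEquiv R b), Nat.card_fun]

end CommRing

end BlockUnitriangular

section FiniteField

variable (F : Type*) [Field F] [Finite F]

theorem natCard_GL_eq_pow_mul_prod (n : ℕ) :
    Nat.card (GL (Fin n) F) =
      Nat.card F ^ n.choose 2 * ∏ i : Fin n, (Nat.card F ^ (n - i : ℕ) - 1) := by
  have := Fintype.ofFinite F
  have sum_eq_choose : ∑ i : Fin n, (i : ℕ) = n.choose 2 := by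
    rw [Fin.sum_univ_eq_sum_range (fun i ↦ i), Finset.sum_range_id, Nat.choose_two_right]
  rw [card_GL_field, ← sum_eq_choose, ← Finset.prod_pow_eq_pow_sum, ← Finset.prod_mul_distrib,
    Nat.card_eq_fintype_card]
  refine Finset.prod_congr rfl fun i _ ↦ ?_
  rw [Nat.mul_sub, ← pow_add, mul_one, Nat.add_sub_cancel' i.2.le]

variable (p : ℕ) [CharP F p]

theorem isPGroup_blockUnitriangularSubgroup {m α : Type*} [Fintype m] [DecidableEq m]
    [LinearOrder α] (b : m → α) : IsPGroup p (blockUnitriangularSubgroup F b) := by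
  have := Fintype.ofFinite F
  obtain ⟨k, -, hk⟩ := FiniteField.card F p
  refine .of_card (n := k * Nat.card {i : m × m // b i.1 < b i.2}) ?_
  rw [natCard_blockUnitriangularSubgroup, Nat.card_eq_fintype_card, hk, pow_mul]

theorem not_dvd_prod_card_pow_sub_one (n : ℕ) :
    ¬ p ∣ ∏ i : Fin n, (Nat.card F ^ (n - i : ℕ) - 1) := by
  have := Fintype.ofFinite F
  rw [← CharP.cast_eq_zero_iff F p, Nat.cast_prod, Finset.prod_eq_zero_iff]
  rintro ⟨i, -, hi⟩
  have hexp : n - (i : ℕ) ≠ 0 := Nat.sub_ne_zero_of_lt i.2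
  rw [Nat.cast_pred (pow_pos Nat.card_pos _), Nat.cast_pow, Nat.card_eq_fintype_card,
    FiniteField.cast_card_eq_zero, zero_pow hexp, zero_sub, neg_eq_zero] at hi
  exact one_ne_zero hi

variable {n : ℕ} {α : Type*} [LinearOrder α] {b : Fin n → α}

theorem not_dvd_index_blockUnitriangularSubgroup (hb : b.Injective) :
    ¬ p ∣ (blockUnitriangularSubgroup F b).index := by
  have hcard : Nat.card (blockUnitriangularSubgroup F b) = Nat.card F ^ n.choose 2 := by
    rw [natCard_blockUnitriangularSubgroup, natCard_lt_eq_choose_two hb, Fintype.card_fin]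
  have hdvd : Nat.card (SpecialLinearGroup (Fin n) F) ∣ Nat.card (GL (Fin n) F) :=
    Subgroup.card_dvd_of_injective SpecialLinearGroup.toGL SpecialLinearGroup.toGL_injective
  rw [← Subgroup.card_mul_index (blockUnitriangularSubgroup F b), hcard,
    natCard_GL_eq_pow_mul_prod] at hdvd
  have hindex := Nat.dvd_of_mul_dvd_mul_left (pow_pos Nat.card_pos _) hdvd
  exact fun h ↦ not_dvd_prod_card_pow_sub_one F p n (h.trans hindex)

/-- The Sylow subgroup of `PSLₙ(F)`, for `F` of characteristic `p`, consisting of the images of the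
matrices which are unitriangular for the order on the indices pulled back along `b`. -/
def unitriangularSylow [Fact p.Prime] (hb : b.Injective) :
    Sylow p (ProjectiveSpecialLinearGroup (Fin n) F) :=
  (isPGroup_blockUnitriangularSubgroup F p b).toSylow
    (not_dvd_index_blockUnitriangularSubgroup F p hb) |>.mapSurjective
      (QuotientGroup.mk'_surjective _)

theorem unitriangularSylow_inf_toDual [Fact p.Prime] (hb : b.Injective) :
    (unitriangularSylow F p hb : Subgroup (ProjectiveSpecialLinearGroup (Fin n) F)) ⊓
      unitriangularSylow F p (OrderDual.toDual.injective.comp hb) = ⊥ :=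
  map_blockUnitriangularSubgroup_inf_map_toDual

end FiniteField

/-- If `q = r^f` for a prime `r`, `G = PSLₙ(q)` with `n ≥ 2`, and `H` is a Sylow
`r`-subgroup of `G`, then `H ⊓ H^x = 1` for some `x ∈ G`. -/
theorem stmt15 (r f n q : ℕ) (hr : r.Prime) (hf : 0 < f) (hq : q = r ^ f) (hn : 2 ≤ n)
    (F : Type*) [Field F] [Fintype F] (hF : Fintype.card F = q)
    (H : Sylow r (ProjectiveSpecialLinearGroup (Fin n) F)) :
    ∃ x : ProjectiveSpecialLinearGroup (Fin n) F,
      (H : Subgroup (ProjectiveSpecialLinearGroup (Fin n) F)) ⊓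
        Subgroup.map (MulAut.conj x⁻¹).toMonoidHom
          (H : Subgroup (ProjectiveSpecialLinearGroup (Fin n) F)) = ⊥ := by
  have : Fact r.Prime := ⟨hr⟩
  have : CharP F r := charP_of_card_eq_prime_pow (hF.trans hq)
  exact exists_inf_conj_smul_eq_bot_of_inf_eq_bot
    (unitriangularSylow_inf_toDual F r (Function.injective_id (α := Fin n))) H
end

section
/- Let q ≥ 7 be a Mersenne prime (i.e. q = 2^k − 1 is prime for some integer k), let G = PSL_2(q), and let H be a Sylow 2-subgroup of G. Then |{x ∈ G : H ∩ H^x ≠ 1}| / |G| = 1/2 + (q+3)/(2q(q−1)). In particular Q_2(G) > 1/2. -/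
open Matrix

/-
The involutions of `PSL(2, q)`, for `q ≡ 3 mod 4`, are the images of the trace-zero elements of
`SL(2, q)` and form a single conjugacy class. If `q + 1` is a power of two, the Sylow 2-subgroups
are the centralizers of involutions, so two of them meet nontrivially exactly when the involutions
`t` and `s` commute with a common nontrivial element. The commutator `ts - st` of lifts
anticommutes with `t` and `s` and has determinant `4 - tr(ts) ^ 2`; a common commuting element
exists exactly when this is a square. For fixed `t`, the trace-zero `s` with `tr(ts) = n` are in
bijection with the points of the circle `X ^ 2 + Y ^ 2 = n ^ 2 - 4`, of which there are `q + 1`, or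
one if `n = ± 2`. Summing over `n` gives `q (q - 1)` trace-zero elements, of which
`(q ^ 2 + 3) / 2` satisfy the square condition.
-/

namespace SylowIntersection

open Finset
open scoped MatrixGroups

section GroupTheory

open MulAction

lemma card_div_card_quotient {G : Type*} [Group G] [Finite G] (H : Subgroup G) (P : Set (G ⧸ H)) :
    (Nat.card P : ℚ) / Nat.card (G ⧸ H) =
      Nat.card {g : G | (g : G ⧸ H) ∈ P} / Nat.card G := by
  have hP : Nat.card {g : G | (g : G ⧸ H) ∈ P} = Nat.card H * Nat.card P :=
    (Nat.card_congr (QuotientGroup.preimageMkEquivSubgroupProdSet H P)).trans (Nat.card_prod _ _)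
  rw [hP, H.card_eq_card_quotient_mul_card_subgroup, mul_comm (Nat.card (G ⧸ H)),
    Nat.cast_mul, Nat.cast_mul, mul_div_mul_left _ _ (Nat.cast_ne_zero.2 Nat.card_pos.ne')]

lemma card_smul_mem_div_card {G X : Type*} [Group G] [Finite G] [MulAction G X] (a : X)
    (P : Set X) :
    (Nat.card {g : G | g • a ∈ P} : ℚ) / Nat.card G =
      Nat.card (orbit G a ∩ P : Set X) / Nat.card (orbit G a) := by
  have himage : (orbit G a ∩ P : Set X) =
      ofQuotientStabilizer G a '' {c | ofQuotientStabilizer G a c ∈ P} := by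
    have hrange : orbit G a = Set.range (ofQuotientStabilizer G a) :=
      Set.ext fun x => (QuotientGroup.mk_surjective.exists (p := fun c =>
        ofQuotientStabilizer G a c = x)).symm
    rw [hrange, Set.inter_comm, ← Set.image_preimage_eq_inter_range]
    rfl
  rw [himage, Nat.card_image_of_injective (injective_ofQuotientStabilizer G a),
    Nat.card_congr (orbitEquivQuotientStabilizer G a), card_div_card_quotient]
  rfl

lemma card_conj_mem_div_card {G : Type*} [Group G] [Finite G] (a : G) (P : Set G) :
    (Nat.card {g : G | g⁻¹ * a * g ∈ P} : ℚ) / Nat.card G =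
      Nat.card {b | IsConj a b ∧ b ∈ P} / Nat.card {b | IsConj a b} := by
  have horbit : orbit (ConjAct G) a = {b | IsConj a b} := by
    ext b
    exact ConjAct.mem_orbit_conjAct.trans isConj_comm
  have : Finite (ConjAct G) := ‹Finite G›
  have hinv : Nat.card {g : G | g⁻¹ * a * g ∈ P} = Nat.card {g : ConjAct G | g • a ∈ P} :=
    Nat.card_congr (((Equiv.inv G).trans ConjAct.toConjAct.toEquiv).subtypeEquiv fun g => by
      simp [ConjAct.smul_def])
  rw [hinv, Nat.card_congr (ConjAct.toConjAct (G := G)).toEquiv, card_smul_mem_div_card, horbit]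
  rfl

lemma centralizer_inf_conj_ne_bot_iff {G : Type*} [Group G] (t x : G) :
    Subgroup.centralizer {t} ⊓
        (Subgroup.centralizer {t}).map (MulAut.conj x⁻¹).toMonoidHom ≠ ⊥ ↔
      ∃ v, v ≠ 1 ∧ Commute v t ∧ Commute v (x⁻¹ * t * x) := by
  have hmap : (Subgroup.centralizer {t}).map (MulAut.conj x⁻¹).toMonoidHom =
      Subgroup.centralizer {x⁻¹ * t * x} := by
    ext v
    rw [Subgroup.mem_map_equiv, Subgroup.mem_centralizer_singleton_iff,
      Subgroup.mem_centralizer_singleton_iff, MulAut.conj_symm_apply, inv_inv]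
    constructor <;> intro h
    · have := congrArg (fun y => x⁻¹ * y * x) h
      simpa [mul_assoc] using this
    · have := congrArg (fun y => x * y * x⁻¹) h
      simpa [mul_assoc] using this
  rw [hmap, Subgroup.ne_bot_iff_exists_ne_one]
  simp [Subgroup.mem_inf, Subgroup.mem_centralizer_singleton_iff, Commute, SemiconjBy, and_comm]

lemma exists_eq_centralizer_of_sylow {p : ℕ} [Fact p.Prime] {G : Type*} [Group G] [Finite G]
    (hG : p ∣ Nat.card G)
    (hp : ∀ t : G, orderOf t = p → IsPGroup p (Subgroup.centralizer {t}))
    (H : Sylow p G) :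
    ∃ t : G, orderOf t = p ∧ (H : Subgroup G) = Subgroup.centralizer {t} := by
  have : Nontrivial H := (Subgroup.nontrivial_iff_ne_bot _).2 (H.ne_bot_of_dvd_card hG)
  have := H.isPGroup'.center_nontrivial
  obtain ⟨n, hn, hcard⟩ := (H.isPGroup'.to_subgroup (Subgroup.center H)).nontrivial_iff_card.1 this
  obtain ⟨t, ht⟩ := exists_prime_orderOf_dvd_card' (G := Subgroup.center H) p
    (hcard ▸ dvd_pow_self p hn.ne')
  rw [← Subgroup.orderOf_coe, ← Subgroup.orderOf_coe] at ht
  refine ⟨t, ht, (H.is_maximal' (hp t ht) fun u hu => ?_).symm⟩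
  rw [Subgroup.mem_centralizer_singleton_iff]
  exact congrArg Subtype.val (Subgroup.mem_center_iff.1 t.2 ⟨u, hu⟩)

end GroupTheory

section SumsOfTwoSquares

variable {F : Type*} [Field F]

lemma two_ne_zero_of_not_isSquare_neg_one (h : ¬ IsSquare (-1 : F)) : (2 : F) ≠ 0 :=
  fun h2 => h ⟨1, by linear_combination -h2⟩

lemma eq_zero_and_eq_zero_of_sq_add_sq_eq_zero (h : ¬ IsSquare (-1 : F)) {x y : F}
    (hxy : x ^ 2 + y ^ 2 = 0) : x = 0 ∧ y = 0 := by
  have hy : y = 0 := by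
    by_contra hy
    exact h ⟨x / y, by field_simp; linear_combination -hxy⟩
  subst hy
  simpa using hxy

lemma ringChar_ne_two_of_not_isSquare_neg_one [Finite F] (h : ¬ IsSquare (-1 : F)) :
    ringChar F ≠ 2 :=
  fun h2 => h (FiniteField.isSquare_of_char_two h2 _)

lemma exists_sq_add_sq_eq [Finite F] (m : F) : ∃ x y : F, x ^ 2 + y ^ 2 = m := by
  cases nonempty_fintype F
  by_cases hchar : ringChar F = 2
  · obtain ⟨x, rfl⟩ := FiniteField.isSquare_of_char_two hchar m
    exact ⟨x, 0, by ring⟩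
  · obtain ⟨x, y, hxy⟩ := FiniteField.exists_root_sum_quadratic (R := F) (f := .X ^ 2)
      (g := .X ^ 2 - .C m) (Polynomial.degree_X_pow 2)
      (Polynomial.degree_X_pow_sub_C two_pos m) (FiniteField.odd_card_of_char_ne_two hchar)
    refine ⟨x, y, ?_⟩
    simp only [Polynomial.eval_pow, Polynomial.eval_X, Polynomial.eval_sub,
      Polynomial.eval_C] at hxy
    linear_combination hxy

variable [Fintype F] [DecidableEq F]

lemma sum_quadraticChar_mul_quadraticChar_sub (h : ¬ IsSquare (-1 : F)) {m : F} (hm : m ≠ 0) :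
    ∑ a : F, quadraticChar F a * quadraticChar F (m - a) = 1 := by
  have jacobi : ∑ a : F, quadraticChar F a * quadraticChar F (1 - a) = 1 := by
    have hj := jacobiSum_nontrivial_inv
      (quadraticChar_ne_one (ringChar_ne_two_of_not_isSquare_neg_one h))
    rwa [(quadraticChar_isQuadratic F).inv, quadraticChar_neg_one_iff_not_isSquare.2 h,
      neg_neg] at hj
  rw [← jacobi, ← Equiv.sum_comp (Equiv.mulLeft₀ m hm)]
  refine sum_congr rfl fun a _ => ?_
  have hsub : m - m * a = m * (1 - a) := by ring
  rw [Equiv.mulLeft₀_apply, hsub, map_mul, map_mul]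
  linear_combination
    (quadraticChar F a * quadraticChar F (1 - a)) * quadraticChar_sq_one hm

lemma card_filter_sq_eq (h : ringChar F ≠ 2) (a : F) :
    (#{x : F | x ^ 2 = a} : ℤ) = quadraticChar F a + 1 := by
  rw [← quadraticChar_card_sqrts h]
  congr 2
  ext
  simp

lemma sum_comp_sq (h : ringChar F ≠ 2) (f : F → ℤ) :
    ∑ x : F, f (x ^ 2) = ∑ a : F, (quadraticChar F a + 1) * f a := by
  rw [← sum_fiberwise univ (fun x : F => x ^ 2)]
  refine sum_congr rfl fun a _ => ?_
  rw [sum_congr rfl fun x hx => congrArg f (mem_filter.1 hx).2, sum_const, nsmul_eq_mul,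
    card_filter_sq_eq h]

lemma sum_quadraticChar_sub_sq (h : ¬ IsSquare (-1 : F)) {m : F} (hm : m ≠ 0) :
    ∑ x : F, quadraticChar F (m - x ^ 2) = 1 := by
  have hchar := ringChar_ne_two_of_not_isSquare_neg_one h
  have hsub : ∑ a : F, quadraticChar F (m - a) = 0 :=
    (Equiv.sum_comp (Equiv.subLeft m) (quadraticChar F)).trans (quadraticChar_sum_zero hchar)
  rw [sum_comp_sq hchar fun a => quadraticChar F (m - a)]
  simp only [add_mul, one_mul, sum_add_distrib]
  rw [sum_quadraticChar_mul_quadraticChar_sub h hm, hsub, add_zero]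

lemma card_sq_add_sq_eq (h : ¬ IsSquare (-1 : F)) (m : F) :
    (#{w : F × F | w.1 ^ 2 + w.2 ^ 2 = m} : ℤ) =
      if m = 0 then 1 else (Fintype.card F + 1 : ℤ) := by
  split_ifs with hm
  · have hzero : ({w : F × F | w.1 ^ 2 + w.2 ^ 2 = m} : Finset (F × F)) = {(0, 0)} := by
      ext ⟨x, y⟩
      simp only [mem_filter_univ, mem_singleton, Prod.mk.injEq, hm]
      exact ⟨eq_zero_and_eq_zero_of_sq_add_sq_eq_zero h, fun h => by simp [h]⟩
    simp [hzero]
  · calc (#{w : F × F | w.1 ^ 2 + w.2 ^ 2 = m} : ℤ)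
        = ∑ x : F, (#{y : F | y ^ 2 = m - x ^ 2} : ℤ) := by
          simp only [card_filter, Fintype.sum_prod_type, eq_sub_iff_add_eq', Nat.cast_sum]
      _ = ∑ x : F, (quadraticChar F (m - x ^ 2) + 1) := by
          simp only [card_filter_sq_eq (ringChar_ne_two_of_not_isSquare_neg_one h)]
      _ = Fintype.card F + 1 := by
          rw [sum_add_distrib, sum_quadraticChar_sub_sq h hm, add_comm]
          simp

end SumsOfTwoSquares

section MatrixIdentities

variable {R : Type*} [CommRing R]

-- The polarisation of the Cayley–Hamilton identity `mul_self_eq`.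
lemma mul_add_mul_eq (A B : Matrix (Fin 2) (Fin 2) R) :
    A * B + B * A =
      trace A • B + trace B • A + (trace (A * B) - trace A * trace B) • 1 := by
  ext i j
  fin_cases i <;> fin_cases j <;> simp [Matrix.mul_apply, trace_fin_two] <;> ring

lemma mul_self_eq (A : Matrix (Fin 2) (Fin 2) R) : A * A = trace A • A - det A • 1 := by
  ext i j
  fin_cases i <;> fin_cases j <;> simp [Matrix.mul_apply, trace_fin_two, det_fin_two] <;> ring

lemma mul_self_eq_neg_one {A : Matrix (Fin 2) (Fin 2) R} (htr : trace A = 0) (hdet : det A = 1) :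
    A * A = -1 := by
  simp [mul_self_eq, htr, hdet]

lemma det_smul_one_add_smul (a b : R) (A : Matrix (Fin 2) (Fin 2) R) :
    det (a • 1 + b • A) = a ^ 2 + a * b * trace A + b ^ 2 * det A := by
  simp only [det_fin_two, trace_fin_two, Matrix.add_apply, Matrix.smul_apply, one_apply,
    smul_eq_mul, Fin.isValue, reduceIte, zero_ne_one, one_ne_zero]
  ring

lemma trace_smul_one_add_smul {A : Matrix (Fin 2) (Fin 2) R} (htr : trace A = 0) (a b : R) :
    trace (a • 1 + b • A) = 2 * a := by
  simp [htr, mul_comm]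

/-- The relation `A * B = ± B * A`: for matrices of determinant one it says that their images in
the projective special linear group commute, the scalar matrices of determinant one being `± 1`. -/
def CommuteUpToSign (A B : Matrix (Fin 2) (Fin 2) R) : Prop :=
  A * B = B * A ∨ A * B = -(B * A)

end MatrixIdentities

section TraceZeroMatrices

variable {F : Type*} [Field F] {A B U : Matrix (Fin 2) (Fin 2) F}

lemma exists_eq_smul_one_add_smul_of_commute (h2 : (2 : F) ≠ 0) (htr : trace A = 0)
    (hdet : det A = 1) (h : B * A = A * B) : ∃ a b : F, B = a • 1 + b • A := by
  refine ⟨trace B / 2, -trace (B * A) / 2, ?_⟩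
  have hBA : (2 : F) • (B * A) = trace B • A + trace (B * A) • 1 := by
    simpa [htr, h, two_smul] using mul_add_mul_eq B A
  have hAA := mul_self_eq_neg_one htr hdet
  have hB : (2 : F) • B = trace B • 1 - trace (B * A) • A := by
    have := congrArg (fun M => -(M * A)) hBA
    simpa [add_mul, Matrix.mul_assoc, hAA, sub_eq_add_neg, add_comm] using this
  apply smul_right_injective _ h2
  simp only [hB, smul_add, smul_smul, mul_div_cancel₀ _ h2, neg_smul, sub_eq_add_neg]

lemma anticommute_iff (h2 : (2 : F) ≠ 0) (htr : trace A = 0) (hdet : det A = 1) :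
    B * A = -(A * B) ↔ trace B = 0 ∧ trace (B * A) = 0 := by
  have polar := mul_add_mul_eq B A
  refine ⟨fun h => ?_, fun ⟨hB, hBA⟩ => ?_⟩
  · have hBA : trace (B * A) = 0 := by
      have := congrArg trace h
      rw [trace_neg, trace_mul_comm A B] at this
      exact (mul_eq_zero.1 (by linear_combination this : 2 * trace (B * A) = 0)).resolve_left h2
    rw [h, neg_add_cancel, htr, ← h, hBA] at polar
    have hA : A ≠ 0 := by
      rintro rfl
      simp at hdet
    exact ⟨by simpa [hA, eq_comm] using polar, hBA⟩
  · rw [eq_neg_iff_add_eq_zero, polar, htr, hB, hBA]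
    simp

lemma sq_add_sq_eq_one_of_det_eq_one (htr : trace A = 0) (hdet : det A = 1) {a b : F}
    (h : det (a • 1 + b • A) = 1) : a ^ 2 + b ^ 2 = 1 := by
  simpa [det_smul_one_add_smul, htr, hdet] using h

lemma isSquare_of_commute (h2 : (2 : F) ≠ 0) (htr : trace A = 0) (hdet : det A = 1)
    (hdetB : det B = 1) (h : B * A = A * B) : IsSquare (4 - trace B ^ 2) := by
  obtain ⟨a, b, rfl⟩ := exists_eq_smul_one_add_smul_of_commute h2 htr hdet h
  have hab := sq_add_sq_eq_one_of_det_eq_one htr hdet hdetB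
  refine ⟨2 * b, ?_⟩
  rw [trace_smul_one_add_smul htr]
  linear_combination -4 * hab

lemma eq_zero_of_anticommute_of_det_eq_zero (h1 : ¬ IsSquare (-1 : F)) (hA : trace A = 0)
    (hdetA : det A = 1) (hBA : B * A = -(A * B)) (hdetB : det B = 0) : B = 0 := by
  obtain ⟨hB, hBA⟩ :=
    (anticommute_iff (two_ne_zero_of_not_isSquare_neg_one h1) hA hdetA).1 hBA
  have hA11 : A 1 1 = -A 0 0 := by
    rw [trace_fin_two] at hA
    linear_combination hA
  have hB11 : B 1 1 = -B 0 0 := by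
    rw [trace_fin_two] at hB
    linear_combination hB
  rw [det_fin_two, hA11] at hdetA
  rw [det_fin_two, hB11] at hdetB
  simp only [trace_fin_two, mul_apply, Fin.sum_univ_two, hA11, hB11] at hBA
  have hA01 : A 0 1 ≠ 0 := fun h0 => h1 ⟨A 0 0, by linear_combination hdetA + A 1 0 * h0⟩
  -- On the plane orthogonal to `A`, the form `A 0 1 ^ 2 * det` is a sum of two squares.
  have hsq : (A 0 1 * B 0 0 - A 0 0 * B 0 1) ^ 2 + B 0 1 ^ 2 = 0 := by
    linear_combination -B 0 1 ^ 2 * hdetA - A 0 1 ^ 2 * hdetB - A 0 1 * B 0 1 * hBA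
  obtain ⟨h00, h01⟩ := eq_zero_and_eq_zero_of_sq_add_sq_eq_zero h1 hsq
  have hB00 : B 0 0 = 0 := by simpa [h01, hA01] using h00
  have hB10 : B 1 0 = 0 := by simpa [h01, hB00, hA01] using hBA
  ext i j
  fin_cases i <;> fin_cases j <;> simp [hB00, h01, hB10, hB11]

lemma trace_mul_eq_zero_of_commute_of_anticommute (h2 : (2 : F) ≠ 0) (hA : trace A = 0)
    (hdetA : det A = 1) (hB : trace B = 0) (hdetB : det B = 1) (hU : ∀ c : F, U ≠ c • 1)
    (hUA : U * A = A * U) (hUB : U * B = -(B * U)) : trace (A * B) = 0 := by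
  obtain ⟨a, b, rfl⟩ := exists_eq_smul_one_add_smul_of_commute h2 hA hdetA hUA
  obtain ⟨htr, htrB⟩ := (anticommute_iff h2 hB hdetB).1 hUB
  rw [trace_smul_one_add_smul hA] at htr
  have ha : a = 0 := (mul_eq_zero.1 htr).resolve_left h2
  have hb : b ≠ 0 := fun hb => hU a (by simp [hb])
  simpa [ha, hb] using htrB

lemma isSquare_of_commuteUpToSign (h2 : (2 : F) ≠ 0) (hA : trace A = 0)
    (hdetA : det A = 1) (hB : trace B = 0) (hdetB : det B = 1) (hdetU : det U = 1)
    (hU : ∀ c : F, U ≠ c • 1) (hUA : CommuteUpToSign U A) (hUB : CommuteUpToSign U B) :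
    IsSquare (4 - trace (A * B) ^ 2) := by
  have hdetAB : det (A * B) = 1 := by rw [det_mul, hdetA, hdetB, one_mul]
  have four : IsSquare (4 - 0 ^ 2 : F) := ⟨2, by norm_num⟩
  rcases hUA with hUA | hUA <;> rcases hUB with hUB | hUB
  · obtain ⟨a, b, rfl⟩ := exists_eq_smul_one_add_smul_of_commute h2 hA hdetA hUA
    have hb : b ≠ 0 := fun hb => hU a (by simp [hb])
    have hBA : B * A = A * B := by simpa [add_mul, mul_add, hb, eq_comm] using hUB
    refine isSquare_of_commute h2 hA hdetA hdetAB ?_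
    rw [Matrix.mul_assoc, hBA]
  · rwa [trace_mul_eq_zero_of_commute_of_anticommute h2 hA hdetA hB hdetB hU hUA hUB]
  · rwa [trace_mul_comm,
      trace_mul_eq_zero_of_commute_of_anticommute h2 hB hdetB hA hdetA hU hUB hUA]
  · refine isSquare_of_commute h2 ((anticommute_iff h2 hA hdetA).1 hUA).1 hdetU hdetAB ?_
    rw [Matrix.mul_assoc, ← neg_eq_iff_eq_neg.2 hUB, mul_neg, ← Matrix.mul_assoc,
      ← Matrix.mul_assoc, hUA, neg_mul]

lemma commutator_anticommute (hA : trace A = 0) (hdetA : det A = 1) :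
    (A * B - B * A) * A = -(A * (A * B - B * A)) := by
  have hAA := mul_self_eq_neg_one hA hdetA
  rw [sub_mul, mul_sub, ← Matrix.mul_assoc A A B, Matrix.mul_assoc B A A, hAA]
  simp [Matrix.mul_assoc, sub_eq_add_neg, add_comm]

lemma det_commutator (hA : trace A = 0) (hdetA : det A = 1) (hB : trace B = 0)
    (hdetB : det B = 1) : det (A * B - B * A) = 4 - trace (A * B) ^ 2 := by
  have hC : A * B - B * A = -trace (A * B) • 1 + (2 : F) • (A * B) := by
    have polar : A * B + B * A = trace (A * B) • 1 := by simpa [hA, hB] using mul_add_mul_eq A B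
    rw [neg_smul, ← polar, two_smul]
    abel
  rw [hC, det_smul_one_add_smul, det_mul, hdetA, hdetB]
  ring

lemma exists_commuteUpToSign_of_isSquare (h1 : ¬ IsSquare (-1 : F)) (hA : trace A = 0)
    (hdetA : det A = 1) (hB : trace B = 0) (hdetB : det B = 1)
    (h : IsSquare (4 - trace (A * B) ^ 2)) :
    ∃ U : Matrix (Fin 2) (Fin 2) F, det U = 1 ∧ trace U = 0 ∧
      CommuteUpToSign U A ∧ CommuteUpToSign U B := by
  obtain ⟨r, hr⟩ := h
  have hdet : det (A * B - B * A) = r * r := by rw [det_commutator hA hdetA hB hdetB, hr]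
  have hCA := commutator_anticommute (B := B) hA hdetA
  have hCB : (A * B - B * A) * B = -(B * (A * B - B * A)) := by
    rw [← neg_sub, neg_mul, mul_neg, commutator_anticommute hB hdetB]
  by_cases hr0 : r = 0
  · have hC : A * B - B * A = 0 :=
      eq_zero_of_anticommute_of_det_eq_zero h1 hA hdetA hCA (by rw [hdet, hr0, zero_mul])
    exact ⟨A, hdetA, hA, .inl rfl, .inl (sub_eq_zero.1 hC)⟩
  · refine ⟨r⁻¹ • (A * B - B * A), ?_, ?_, .inr ?_, .inr ?_⟩
    · rw [det_smul, hdet, Fintype.card_fin]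
      field_simp
    · rw [trace_smul, trace_sub, trace_mul_comm, sub_self, smul_zero]
    · rw [Matrix.smul_mul, hCA, Matrix.mul_smul, smul_neg]
    · rw [Matrix.smul_mul, hCB, Matrix.mul_smul, smul_neg]

end TraceZeroMatrices

section ProjectiveSpecialLinearGroup

variable {F : Type*} [Field F]

lemma mem_center_iff_eq_smul_one {u : SL(2, F)} :
    u ∈ Subgroup.center SL(2, F) ↔ ∃ c : F, u.1 = c • 1 := by
  simp only [Matrix.SpecialLinearGroup.mem_center_iff, scalar_apply, ← smul_one_eq_diagonal]
  refine ⟨fun ⟨c, _, hc⟩ => ⟨c, hc.symm⟩, fun ⟨c, hc⟩ => ⟨c, ?_, hc.symm⟩⟩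
  simpa [hc] using u.det_coe

lemma coe_eq_one_iff {u : SL(2, F)} :
    (u : PSL(2, F)) = 1 ↔ ∃ c : F, u.1 = c • 1 :=
  (QuotientGroup.eq_one_iff u).trans mem_center_iff_eq_smul_one

lemma commute_coe_iff {u t : SL(2, F)} :
    Commute (u : PSL(2, F)) t ↔ CommuteUpToSign u.1 t.1 := by
  have hcenter : Commute (u : PSL(2, F)) t ↔ (t * u)⁻¹ * (u * t) ∈ Subgroup.center SL(2, F) := by
    rw [← QuotientGroup.eq]
    exact eq_comm
  rw [hcenter, Matrix.SpecialLinearGroup.mem_center_iff]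
  constructor
  · rintro ⟨r, hr, hc⟩
    have hut : u.1 * t.1 = t.1 * u.1 * scalar (Fin 2) r := by
      rw [hc, ← Matrix.SpecialLinearGroup.coe_mul, ← Matrix.SpecialLinearGroup.coe_mul,
        ← Matrix.SpecialLinearGroup.coe_mul, mul_inv_cancel_left]
    rcases sq_eq_one_iff.1 hr with rfl | rfl
    · exact .inl (by simpa using hut)
    · exact .inr (by simpa [← smul_one_eq_diagonal] using hut)
  · rintro (h | h)
    · have hut : u * t = t * u := Subtype.ext h
      exact ⟨1, by simp [hut]⟩
    · have hut : u * t = -(t * u) := Subtype.ext h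
      exact ⟨-1, by simp [hut, ← smul_one_eq_diagonal]⟩

lemma orderOf_coe_eq_two_iff (h2 : (2 : F) ≠ 0) {u : SL(2, F)} :
    orderOf (u : PSL(2, F)) = 2 ↔ trace u.1 = 0 := by
  have hsq : (u : PSL(2, F)) ^ 2 = ((u * u : SL(2, F)) : PSL(2, F)) := sq _
  rw [orderOf_eq_prime_iff, hsq, Ne, coe_eq_one_iff, coe_eq_one_iff,
    Matrix.SpecialLinearGroup.coe_mul, mul_self_eq, u.det_coe, one_smul]
  constructor
  · rintro ⟨⟨c, hc⟩, hu⟩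
    by_contra htr
    refine hu ⟨(trace u.1)⁻¹ * (c + 1), ?_⟩
    rw [mul_smul, add_smul, ← hc, one_smul, sub_add_cancel, inv_smul_smul₀ htr]
  · intro htr
    refine ⟨⟨-1, by simp [htr]⟩, fun ⟨c, hc⟩ => ?_⟩
    have hc0 : c = 0 := by simpa [hc, h2] using htr
    simpa [hc, hc0] using u.det_coe

lemma exists_commute_coe_iff (h1 : ¬ IsSquare (-1 : F)) {s t : SL(2, F)}
    (ht : trace t.1 = 0) (hs : trace s.1 = 0) :
    (∃ v : PSL(2, F), v ≠ 1 ∧ Commute v t ∧ Commute v s) ↔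
      IsSquare (4 - trace (t.1 * s.1) ^ 2) := by
  have h2 := two_ne_zero_of_not_isSquare_neg_one h1
  constructor
  · rintro ⟨v, hv, hvt, hvs⟩
    obtain ⟨u, rfl⟩ := QuotientGroup.mk_surjective v
    exact isSquare_of_commuteUpToSign h2 ht t.det_coe hs s.det_coe u.det_coe
      (fun c hc => hv (coe_eq_one_iff.2 ⟨c, hc⟩)) (commute_coe_iff.1 hvt) (commute_coe_iff.1 hvs)
  · intro h
    obtain ⟨U, hU, htr, hUt, hUs⟩ :=
      exists_commuteUpToSign_of_isSquare h1 ht t.det_coe hs s.det_coe h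
    let u : SL(2, F) := ⟨U, hU⟩
    have hu : orderOf (u : PSL(2, F)) = 2 := (orderOf_coe_eq_two_iff h2).2 htr
    refine ⟨u, fun hu1 => ?_, commute_coe_iff.2 hUt, commute_coe_iff.2 hUs⟩
    simp [hu1] at hu

end ProjectiveSpecialLinearGroup

section Conjugacy

variable {F : Type*} [Field F]

/-- The rotation by a right angle, a trace-zero element of `SL(2, R)` that serves as the base
point of the conjugacy class of all trace-zero elements. -/
def quarterTurn (R : Type*) [CommRing R] : SL(2, R) := ⟨!![0, 1; -1, 0], by simp⟩

lemma trace_quarterTurn (R : Type*) [CommRing R] : trace (quarterTurn R).1 = 0 := by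
  simp [quarterTurn, trace_fin_two]

lemma trace_quarterTurn_mul {R : Type*} [CommRing R] (A : Matrix (Fin 2) (Fin 2) R) :
    trace ((quarterTurn R).1 * A) = A 1 0 - A 0 1 := by
  simp only [quarterTurn, trace_fin_two, mul_apply, Fin.sum_univ_two, of_apply, cons_val_zero,
    cons_val_one]
  ring

lemma mul_sub_mul_eq_one {R : Type*} [CommRing R] (u : SL(2, R)) :
    u.1 0 0 * u.1 1 1 - u.1 0 1 * u.1 1 0 = 1 :=
  (det_fin_two u.1).symm.trans u.det_coe

lemma trace_conj {R : Type*} [CommRing R] (g u : SL(2, R)) :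
    trace (g * u * g⁻¹).1 = trace u.1 := by
  rw [Matrix.SpecialLinearGroup.coe_mul, trace_mul_comm, ← Matrix.SpecialLinearGroup.coe_mul,
    ← mul_assoc, inv_mul_cancel, one_mul]

variable [Finite F]

lemma isConj_quarterTurn_of_trace_eq_zero (h1 : ¬ IsSquare (-1 : F)) {u : SL(2, F)}
    (hu : trace u.1 = 0) : IsConj (quarterTurn F) u := by
  have hdet := mul_sub_mul_eq_one u
  have h11 : u.1 1 1 = -u.1 0 0 := by
    rw [trace_fin_two] at hu
    linear_combination hu
  rw [h11] at hdet
  have hb : u.1 0 1 ≠ 0 := fun h0 => h1 ⟨u.1 0 0, by linear_combination hdet + u.1 1 0 * h0⟩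
  obtain ⟨X, y, hXy⟩ := exists_sq_add_sq_eq (u.1 0 1)
  -- The rows of the conjugating matrix are `v = (x, y)` and `v u`; its determinant is one because
  -- `u.1 0 1` times it equals `(u.1 0 1 * x - u.1 0 0 * y) ^ 2 + y ^ 2`.
  let x := (X + u.1 0 0 * y) / u.1 0 1
  have hX : X = u.1 0 1 * x - u.1 0 0 * y := by
    rw [mul_div_cancel₀ _ hb]
    ring
  let g : SL(2, F) := ⟨!![x, y; x * u.1 0 0 + y * u.1 1 0, x * u.1 0 1 - y * u.1 0 0], by
    rw [det_fin_two_of]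
    apply mul_left_cancel₀ hb
    rw [hX] at hXy
    linear_combination hXy + y ^ 2 * hdet⟩
  refine isConj_iff.2 ⟨g⁻¹, ?_⟩
  rw [inv_inv, mul_assoc, inv_mul_eq_iff_eq_mul]
  have hmul : (quarterTurn F).1 * g.1 = g.1 * u.1 := by
    rw [← Matrix.ext_iff]
    simp only [quarterTurn, g, mul_apply, Fin.forall_fin_two, Fin.sum_univ_two, of_apply,
      cons_val_zero, cons_val_one, h11]
    refine ⟨⟨by ring, by ring⟩, ⟨?_, ?_⟩⟩
    · linear_combination x * hdet
    · linear_combination y * hdet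
  exact Subtype.ext hmul

lemma isConj_iff_trace_eq_zero (h1 : ¬ IsSquare (-1 : F)) {s t : SL(2, F)}
    (ht : trace t.1 = 0) : IsConj t s ↔ trace s.1 = 0 := by
  refine ⟨fun h => ?_, fun hs => (isConj_quarterTurn_of_trace_eq_zero h1 ht).symm.trans
    (isConj_quarterTurn_of_trace_eq_zero h1 hs)⟩
  obtain ⟨g, rfl⟩ := isConj_iff.1 h
  rwa [trace_conj]

lemma card_centralizer_inf_conj_ne_bot_div_card (h1 : ¬ IsSquare (-1 : F)) {t : SL(2, F)}
    (ht : trace t.1 = 0) :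
    (Nat.card {x : PSL(2, F) | Subgroup.centralizer {(t : PSL(2, F))} ⊓
        (Subgroup.centralizer {(t : PSL(2, F))}).map (MulAut.conj x⁻¹).toMonoidHom ≠ ⊥} : ℚ) /
        Nat.card PSL(2, F) =
      Nat.card {s : SL(2, F) | trace s.1 = 0 ∧ IsSquare (4 - trace (t.1 * s.1) ^ 2)} /
        Nat.card {s : SL(2, F) | trace s.1 = 0} := by
  rw [card_div_card_quotient]
  have hcriterion (g : SL(2, F)) :
      (g : PSL(2, F)) ∈ {x : PSL(2, F) | Subgroup.centralizer {(t : PSL(2, F))} ⊓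
        (Subgroup.centralizer {(t : PSL(2, F))}).map (MulAut.conj x⁻¹).toMonoidHom ≠ ⊥} ↔
      g⁻¹ * t * g ∈ {s : SL(2, F) | IsSquare (4 - trace (t.1 * s.1) ^ 2)} := by
    have hconj : IsConj t (g⁻¹ * t * g) := isConj_iff.2 ⟨g⁻¹, by rw [inv_inv]⟩
    exact (centralizer_inf_conj_ne_bot_iff _ _).trans
      (exists_commute_coe_iff h1 ht ((isConj_iff_trace_eq_zero h1 ht).1 hconj))
  simp only [hcriterion]
  rw [card_conj_mem_div_card]
  simp only [isConj_iff_trace_eq_zero h1 ht, Set.mem_ofPred_eq]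

end Conjugacy

section Counting

variable {F : Type*} [Field F] [Fintype F] [DecidableEq F]

lemma card_trace_mul_eq_of_isConj (n : F) {s t : SL(2, F)} (h : IsConj s t) :
    #{u : SL(2, F) | trace u.1 = 0 ∧ trace (s.1 * u.1) = n} =
      #{u : SL(2, F) | trace u.1 = 0 ∧ trace (t.1 * u.1) = n} := by
  obtain ⟨g, rfl⟩ := isConj_iff.1 h
  have hiff (u : SL(2, F)) : trace u.1 = 0 ∧ trace (s.1 * u.1) = n ↔
      trace (g * u * g⁻¹).1 = 0 ∧ trace ((g * s * g⁻¹).1 * (g * u * g⁻¹).1) = n := by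
    rw [← Matrix.SpecialLinearGroup.coe_mul, ← Matrix.SpecialLinearGroup.coe_mul, conj_mul,
      trace_conj, trace_conj]
  rw [← Fintype.card_subtype, ← Fintype.card_subtype]
  exact Fintype.card_congr ((MulAut.conj g).toEquiv.subtypeEquiv hiff)

lemma card_trace_quarterTurn_mul_eq (h2 : (2 : F) ≠ 0) (n : F) :
    #{s : SL(2, F) | trace s.1 = 0 ∧ trace ((quarterTurn F).1 * s.1) = n} =
      #{w : F × F | w.1 ^ 2 + w.2 ^ 2 = n ^ 2 - 4} := by
  simp only [trace_quarterTurn_mul]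
  simp only [trace_fin_two]
  refine card_bij (fun s _ => (2 * s.1 0 0, s.1 0 1 + s.1 1 0)) ?_ ?_ ?_
  · intro s hs
    rw [mem_filter_univ] at hs ⊢
    linear_combination
      -4 * mul_sub_mul_eq_one s + 4 * s.1 0 0 * hs.1 + (s.1 1 0 - s.1 0 1 + n) * hs.2
  · intro s hs s' hs' h
    rw [mem_filter_univ] at hs hs'
    obtain ⟨h00, h01⟩ := Prod.mk.inj h
    replace h00 := mul_left_cancel₀ h2 h00
    replace h01 : s.1 0 1 = s'.1 0 1 :=
      mul_left_cancel₀ h2 (by linear_combination h01 - hs.2 + hs'.2)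
    have h10 : s.1 1 0 = s'.1 1 0 := by linear_combination hs.2 - hs'.2 + h01
    have h11 : s.1 1 1 = s'.1 1 1 := by linear_combination hs.1 - hs'.1 - h00
    apply Subtype.ext
    rw [eta_fin_two s.1, eta_fin_two s'.1, h00, h01, h10, h11]
  · rintro ⟨X, Y⟩ hw
    rw [mem_filter_univ] at hw
    let s : SL(2, F) := ⟨!![X / 2, (Y - n) / 2; (Y + n) / 2, -(X / 2)], by
      rw [det_fin_two_of]
      field_simp
      linear_combination -hw⟩
    refine ⟨s, mem_filter.2 ⟨mem_univ s, add_neg_cancel _, ?_⟩, Prod.ext ?_ ?_⟩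
    · change (Y + n) / 2 - (Y - n) / 2 = n
      field_simp
      ring
    · exact mul_div_cancel₀ X h2
    · change (Y - n) / 2 + (Y + n) / 2 = Y
      field_simp
      ring

lemma card_trace_eq_zero_and (h1 : ¬ IsSquare (-1 : F)) {t : SL(2, F)} (ht : trace t.1 = 0)
    (P : F → Prop) [DecidablePred P] :
    (#{s : SL(2, F) | trace s.1 = 0 ∧ P (trace (t.1 * s.1))} : ℤ) =
      ∑ n with P n, if n ^ 2 = 4 then 1 else (Fintype.card F + 1 : ℤ) := by
  rw [card_eq_sum_card_fiberwise (f := fun s : SL(2, F) => trace (t.1 * s.1))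
    (t := univ.filter P) (fun s hs => by simpa using (mem_filter_univ _).1 hs |>.2), Nat.cast_sum]
  refine sum_congr rfl fun n hn => ?_
  rw [mem_filter_univ] at hn
  have hfiber (s : SL(2, F)) : (trace s.1 = 0 ∧ P (trace (t.1 * s.1))) ∧ trace (t.1 * s.1) = n ↔
      trace s.1 = 0 ∧ trace (t.1 * s.1) = n :=
    ⟨fun h => ⟨h.1.1, h.2⟩, fun h => ⟨⟨h.1, h.2.symm ▸ hn⟩, h.2⟩⟩
  simp only [filter_filter, hfiber]
  rw [← card_trace_mul_eq_of_isConj n (isConj_quarterTurn_of_trace_eq_zero h1 ht),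
    card_trace_quarterTurn_mul_eq (two_ne_zero_of_not_isSquare_neg_one h1), card_sq_add_sq_eq h1]
  simp only [sub_eq_zero]

lemma card_sq_eq_four (h1 : ¬ IsSquare (-1 : F)) : (#{n : F | n ^ 2 = 4} : ℤ) = 2 := by
  have h2 := two_ne_zero_of_not_isSquare_neg_one h1
  have h4 : (4 : F) = 2 ^ 2 := by norm_num
  rw [card_filter_sq_eq (ringChar_ne_two_of_not_isSquare_neg_one h1), h4,
    quadraticChar_sq_one' h2]
  rfl

lemma card_trace_eq_zero (h1 : ¬ IsSquare (-1 : F)) :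
    (#{s : SL(2, F) | trace s.1 = 0} : ℤ) = Fintype.card F * (Fintype.card F - 1) := by
  have hcount := card_trace_eq_zero_and h1 (trace_quarterTurn F) fun _ => True
  simp only [and_true, filter_true] at hcount
  have hterm (n : F) : (if n ^ 2 = 4 then 1 else (Fintype.card F + 1 : ℤ)) =
      Fintype.card F + 1 - Fintype.card F * if n ^ 2 = 4 then 1 else 0 := by
    split_ifs <;> ring
  have hroots := card_sq_eq_four h1
  rw [card_filter, Nat.cast_sum] at hroots
  push_cast at hroots
  rw [hcount, sum_congr rfl fun n _ => hterm n, sum_sub_distrib, ← mul_sum, hroots, sum_const,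
    nsmul_eq_mul, card_univ]
  ring

lemma two_mul_card_trace_eq_zero_and_isSquare (h1 : ¬ IsSquare (-1 : F)) {t : SL(2, F)}
    (ht : trace t.1 = 0) :
    (2 * #{s : SL(2, F) | trace s.1 = 0 ∧ IsSquare (4 - trace (t.1 * s.1) ^ 2)} : ℤ) =
      Fintype.card F ^ 2 + 3 := by
  have h4 : (4 : F) ≠ 0 := by
    have h22 : (2 : F) * 2 ≠ 0 := mul_self_ne_zero.2 (two_ne_zero_of_not_isSquare_neg_one h1)
    rwa [two_mul, two_add_two_eq_four] at h22
  have hterm (n : F) : (if IsSquare (4 - n ^ 2) then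
      2 * (if n ^ 2 = 4 then 1 else (Fintype.card F + 1 : ℤ)) else 0) =
      (Fintype.card F + 1) * (1 + quadraticChar F (4 - n ^ 2)) +
        (1 - Fintype.card F) * if n ^ 2 = 4 then 1 else 0 := by
    rcases eq_or_ne (n ^ 2) 4 with hn | hn
    · simp only [hn, sub_self, IsSquare.zero, reduceIte, quadraticChar_zero]
      ring
    · have hne : 4 - n ^ 2 ≠ 0 := sub_ne_zero.2 hn.symm
      by_cases hsq : IsSquare (4 - n ^ 2)
      · rw [(quadraticChar_one_iff_isSquare hne).2 hsq, if_pos hsq]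
        simp only [if_neg hn]
        ring
      · rw [quadraticChar_neg_one_iff_not_isSquare.2 hsq, if_neg hsq, if_neg hn]
        ring
  have hroots := card_sq_eq_four h1
  rw [card_filter, Nat.cast_sum] at hroots
  push_cast at hroots
  rw [card_trace_eq_zero_and h1 ht fun n => IsSquare (4 - n ^ 2), sum_filter, mul_sum]
  simp only [mul_ite, mul_zero]
  simp only [← mul_ite, hterm]
  rw [sum_add_distrib, ← mul_sum, ← mul_sum, hroots, sum_add_distrib,
    sum_quadraticChar_sub_sq h1 h4, sum_const, nsmul_eq_mul, card_univ]
  ring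

end Counting

section Ratio

variable {F : Type*} [Field F] [Fintype F]

lemma card_centralizer_inf_conj_ne_bot_div_card_eq (h1 : ¬ IsSquare (-1 : F)) {t : PSL(2, F)}
    (ht : orderOf t = 2) :
    (Nat.card {x : PSL(2, F) | Subgroup.centralizer {t} ⊓
        (Subgroup.centralizer {t}).map (MulAut.conj x⁻¹).toMonoidHom ≠ ⊥} : ℚ) /
        Nat.card PSL(2, F) =
      (Fintype.card F ^ 2 + 3) / (2 * (Fintype.card F * (Fintype.card F - 1))) := by
  classical
  obtain ⟨s, rfl⟩ := QuotientGroup.mk_surjective t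
  have hs := (orderOf_coe_eq_two_iff (two_ne_zero_of_not_isSquare_neg_one h1)).1 ht
  have hmeet := congrArg (Int.cast : ℤ → ℚ) (two_mul_card_trace_eq_zero_and_isSquare h1 hs)
  have htotal := congrArg (Int.cast : ℤ → ℚ) (card_trace_eq_zero h1)
  push_cast at hmeet htotal
  rw [card_centralizer_inf_conj_ne_bot_div_card h1 hs, ← hmeet, ← htotal,
    mul_div_mul_left _ _ two_ne_zero]
  simp only [Nat.card_coe_set_eq, Set.ncard_eq_toFinset_card', Set.toFinset_ofPred]

end Ratio

section Sylow

variable {F : Type*} [Field F] [Fintype F]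

lemma card_centralizer_of_trace_eq_zero (h1 : ¬ IsSquare (-1 : F)) {t : SL(2, F)}
    (ht : trace t.1 = 0) : Nat.card (Subgroup.centralizer {t}) = Fintype.card F + 1 := by
  classical
  have h2 := two_ne_zero_of_not_isSquare_neg_one h1
  have hcomm (a b : F) : (a • 1 + b • t.1) * t.1 = t.1 * (a • 1 + b • t.1) := by
    simp [add_mul, mul_add]
  let f (w : {w : F × F // w.1 ^ 2 + w.2 ^ 2 = 1}) : Subgroup.centralizer {t} :=
    ⟨⟨w.1.1 • 1 + w.1.2 • t.1, by simpa [det_smul_one_add_smul, ht] using w.2⟩,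
      Subgroup.mem_centralizer_singleton_iff.2 (Subtype.ext (hcomm w.1.1 w.1.2))⟩
  have hinj : Function.Injective f := by
    rintro ⟨⟨a, b⟩, hw⟩ ⟨⟨a', b'⟩, hw'⟩ h
    have hmat : a • 1 + b • t.1 = a' • 1 + b' • t.1 := congrArg (fun u => u.1.1) h
    have ha : a = a' := by
      have htr := congrArg trace hmat
      rw [trace_smul_one_add_smul ht, trace_smul_one_add_smul ht] at htr
      exact mul_left_cancel₀ h2 htr
    have ht0 : t.1 ≠ 0 := fun h0 => by simpa [h0] using t.det_coe
    rw [ha, add_right_inj] at hmat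
    have hb : b = b' := smul_left_injective F ht0 hmat
    simp [ha, hb]
  have hsurj : Function.Surjective f := by
    rintro ⟨u, hu⟩
    rw [Subgroup.mem_centralizer_singleton_iff] at hu
    obtain ⟨a, b, hab⟩ :=
      exists_eq_smul_one_add_smul_of_commute h2 ht t.det_coe (congrArg Subtype.val hu)
    exact ⟨⟨(a, b), sq_add_sq_eq_one_of_det_eq_one ht t.det_coe (hab ▸ u.det_coe)⟩,
      Subtype.ext (Subtype.ext hab.symm)⟩
  have hcircle := card_sq_add_sq_eq h1 1
  rw [if_neg one_ne_zero] at hcircle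
  rw [← Nat.card_eq_of_bijective f ⟨hinj, hsurj⟩, Nat.card_eq_fintype_card, Fintype.card_subtype]
  exact_mod_cast hcircle

lemma mod_four_eq_three_of_add_one_eq_two_pow {q k : ℕ} (hq : 1 < q) (hk : q + 1 = 2 ^ k) :
    q % 4 = 3 := by
  have hk2 : 2 ≤ k := by
    by_contra! h
    interval_cases k <;> omega
  obtain ⟨m, hm⟩ := pow_dvd_pow 2 hk2
  omega

lemma not_isSquare_neg_one_of_card_add_one_eq_two_pow {k : ℕ}
    (hk : Fintype.card F + 1 = 2 ^ k) : ¬ IsSquare (-1 : F) := fun h =>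
  FiniteField.isSquare_neg_one_iff.1 h
    (mod_four_eq_three_of_add_one_eq_two_pow Fintype.one_lt_card hk)

lemma isPGroup_two_centralizer_coe {k : ℕ} (hk : Fintype.card F + 1 = 2 ^ k) {t : SL(2, F)}
    (ht : trace t.1 = 0) : IsPGroup 2 (Subgroup.centralizer {(t : PSL(2, F))}) := by
  have h1 := not_isSquare_neg_one_of_card_add_one_eq_two_pow hk
  have h2 := two_ne_zero_of_not_isSquare_neg_one h1
  rintro ⟨v, hv⟩
  obtain ⟨u, rfl⟩ := QuotientGroup.mk_surjective v
  rw [Subgroup.mem_centralizer_singleton_iff] at hv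
  rcases commute_coe_iff.1 hv with hut | hut
  · have hu : u ∈ Subgroup.centralizer {t} :=
      Subgroup.mem_centralizer_singleton_iff.2 (Subtype.ext hut)
    have hpow : u ^ 2 ^ k = 1 := by
      rw [← hk, ← card_centralizer_of_trace_eq_zero h1 ht]
      exact congrArg Subtype.val (pow_card_eq_one' (x := (⟨u, hu⟩ : Subgroup.centralizer {t})))
    exact ⟨k, Subtype.ext (congrArg ((↑) : SL(2, F) → PSL(2, F)) hpow)⟩
  · have hu : orderOf (u : PSL(2, F)) = 2 :=
      (orderOf_coe_eq_two_iff h2).2 ((anticommute_iff h2 ht t.det_coe).1 hut).1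
    exact ⟨1, Subtype.ext (by simpa [hu] using pow_orderOf_eq_one (u : PSL(2, F)))⟩

lemma exists_sylow_two_eq_centralizer {k : ℕ} (hk : Fintype.card F + 1 = 2 ^ k)
    (H : Sylow 2 PSL(2, F)) :
    ∃ t : PSL(2, F), orderOf t = 2 ∧ (H : Subgroup PSL(2, F)) = Subgroup.centralizer {t} := by
  have h2 := two_ne_zero_of_not_isSquare_neg_one
    (not_isSquare_neg_one_of_card_add_one_eq_two_pow hk)
  have hdvd : 2 ∣ Nat.card PSL(2, F) := by
    have hord := (orderOf_coe_eq_two_iff h2).2 (trace_quarterTurn F)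
    exact hord.symm.dvd.trans (orderOf_dvd_natCard _)
  refine exists_eq_centralizer_of_sylow hdvd (fun v hv => ?_) H
  obtain ⟨t, rfl⟩ := QuotientGroup.mk_surjective v
  exact isPGroup_two_centralizer_coe hk ((orderOf_coe_eq_two_iff h2).1 hv)

end Sylow

end SylowIntersection

theorem stmt16_general {F : Type*} [Field F] [Fintype F] (hF : Fintype.card F % 4 = 3)
    (H : Subgroup (ProjectiveSpecialLinearGroup (Fin 2) F))
    (hH : ∃ t, orderOf t = 2 ∧ H = Subgroup.centralizer {t}) :
    (Nat.card {x : ProjectiveSpecialLinearGroup (Fin 2) F |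
          H ⊓ Subgroup.map (MulAut.conj x⁻¹).toMonoidHom H ≠ ⊥} : ℚ)
          / (Nat.card (ProjectiveSpecialLinearGroup (Fin 2) F) : ℚ)
        = 1 / 2 + ((Fintype.card F : ℚ) + 3) /
            (2 * (Fintype.card F : ℚ) * ((Fintype.card F : ℚ) - 1)) ∧
    1 / 2 < (Nat.card {x : ProjectiveSpecialLinearGroup (Fin 2) F |
          H ⊓ Subgroup.map (MulAut.conj x⁻¹).toMonoidHom H ≠ ⊥} : ℚ)
          / (Nat.card (ProjectiveSpecialLinearGroup (Fin 2) F) : ℚ) := by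
  obtain ⟨t, ht, rfl⟩ := hH
  have h1 : ¬ IsSquare (-1 : F) := fun h => FiniteField.isSquare_neg_one_iff.1 h hF
  have hq : 1 < (Fintype.card F : ℚ) := by exact_mod_cast Fintype.one_lt_card
  have hq1 : 0 < (Fintype.card F : ℚ) - 1 := sub_pos.2 hq
  have hratio := SylowIntersection.card_centralizer_inf_conj_ne_bot_div_card_eq h1 ht
  have hsplit : ((Fintype.card F : ℚ) ^ 2 + 3) / (2 * (Fintype.card F * (Fintype.card F - 1))) =
      1 / 2 + (Fintype.card F + 3) / (2 * Fintype.card F * (Fintype.card F - 1)) := by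
    field_simp
    ring
  have hpos : 0 < ((Fintype.card F : ℚ) + 3) / (2 * Fintype.card F * (Fintype.card F - 1)) := by
    positivity
  rw [hratio, hsplit]
  exact ⟨rfl, lt_add_of_pos_right _ hpos⟩

/-- If `q ≥ 7` is a Mersenne prime, `G = PSL₂(q)` and `H` is a Sylow `2`-subgroup of
`G`, then `Q₂(G) = |{x ∈ G : H ⊓ H^x ≠ 1}|/|G| = 1/2 + (q+3)/(2q(q-1))`; in
particular `Q₂(G) > 1/2`. -/
theorem stmt16 (q : ℕ) (hq7 : 7 ≤ q) (hqprime : q.Prime)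
    (hmersenne : ∃ k : ℕ, q = 2 ^ k - 1)
    (F : Type*) [Field F] [Fintype F] (hF : Fintype.card F = q)
    (H : Sylow 2 (ProjectiveSpecialLinearGroup (Fin 2) F)) :
    (Nat.card {x : ProjectiveSpecialLinearGroup (Fin 2) F |
          (H : Subgroup (ProjectiveSpecialLinearGroup (Fin 2) F)) ⊓
            Subgroup.map (MulAut.conj x⁻¹).toMonoidHom
              (H : Subgroup (ProjectiveSpecialLinearGroup (Fin 2) F)) ≠ ⊥} : ℚ)
          / (Nat.card (ProjectiveSpecialLinearGroup (Fin 2) F) : ℚ)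
        = 1 / 2 + ((q : ℚ) + 3) / (2 * (q : ℚ) * ((q : ℚ) - 1)) ∧
    1 / 2 < (Nat.card {x : ProjectiveSpecialLinearGroup (Fin 2) F |
          (H : Subgroup (ProjectiveSpecialLinearGroup (Fin 2) F)) ⊓
            Subgroup.map (MulAut.conj x⁻¹).toMonoidHom
              (H : Subgroup (ProjectiveSpecialLinearGroup (Fin 2) F)) ≠ ⊥} : ℚ)
          / (Nat.card (ProjectiveSpecialLinearGroup (Fin 2) F) : ℚ) := by
  subst hF
  obtain ⟨k, hk⟩ := hmersenne
  have hcard : Fintype.card F + 1 = 2 ^ k := by lia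
  exact stmt16_general
    (SylowIntersection.mod_four_eq_three_of_add_one_eq_two_pow Fintype.one_lt_card hcard) H
    (SylowIntersection.exists_sylow_two_eq_centralizer hcard H)
end

section
/- For every real ε > 0 there exists N such that the following holds: for every prime r, every power q = r^f of r, and every n ≥ 3, if G = PSL_n(q) satisfies |G| ≥ N, then Σ_p Q_p(G) < ε, where the sum is over all prime divisors p of |G| with p ≠ r. -/
open Matrix

/-!
If `P` is a Sylow `p`-subgroup and `P ∩ x⁻¹Px ≠ 1`, then `x z x⁻¹ ∈ P` for some `z ∈ P` of order
`p`, and each pair of elements of `P` arises from at most `|C(z)|` such `x`. Let `q = |F|`. Since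
`p ∤ q`, a matrix representing `z` is semisimple, and bounding the dimension of its centralizer
gives `|C(z)| ≤ q ^ (n² - 2n + 2)`, and even `|C(z)| ≤ q ^ (n² - 4n + 10)` unless `z` comes from a
pseudoreflection. The two kinds of elements are counted separately.

Choose at most `n` pseudoreflections from a finite `p`-group of matrices whose root lines span all
of its root lines. Every other one shares its root line with one of these, or else fails to
commute with one of these, which requires `p = 2` and confines its root line to a plane. Hence `P`
contains at most `n (q + 1)` images of pseudoreflections of exponent `p`. On the other hand `|P| ≤
2 min(2, 3q/4)ⁿ q ^ (n - 1)` by the order formula of `SLₙ(q)`.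

Together these bounds give `Q_p = O(n⁴ (9/16)ⁿ / q)`. There are at most `n² (log₂ q + 1)` primes
`p`, so the sum is `O(n⁶ (9/16)ⁿ (log₂ q + 1) / q)`, a product of a null sequence in `n` and one
in `q`.
-/

section FiniteGroups

variable {G : Type*} [Group G] [Finite G] {p : ℕ}

theorem natCard_setOf_conj_eq_le (z w : G) :
    Nat.card {x : G | x * z * x⁻¹ = w} ≤ Nat.card (Subgroup.centralizer {z}) := by
  obtain hempty | ⟨⟨y, hy⟩⟩ := isEmpty_or_nonempty {x : G | x * z * x⁻¹ = w}
  · simp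
  · have hmem : ∀ x : {x : G | x * z * x⁻¹ = w}, y⁻¹ * x ∈ Subgroup.centralizer {z} := by
      rintro ⟨x, hx⟩
      have hxy : x * z = y * z * y⁻¹ * x := mul_inv_eq_iff_eq_mul.mp (hx.trans hy.symm)
      rw [Subgroup.mem_centralizer_singleton_iff, mul_assoc, hxy]
      group
    exact Nat.card_le_card_of_injective (fun x ↦ ⟨y⁻¹ * x, hmem x⟩) fun x x' h ↦
      Subtype.ext (mul_left_cancel (congrArg Subtype.val h))

theorem natCard_setOf_exists_conj_mem_le {S T : Set G} {M : ℕ}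
    (hM : ∀ z ∈ S, Nat.card (Subgroup.centralizer {z}) ≤ M) :
    Nat.card {x : G | ∃ z ∈ S, x * z * x⁻¹ ∈ T} ≤ Nat.card S * Nat.card T * M := by
  classical
  have := Fintype.ofFinite S
  have := Fintype.ofFinite T
  have hinj : Nat.card {x : G | ∃ z ∈ S, x * z * x⁻¹ ∈ T} ≤
      Nat.card (Σ a : S × T, {x : G | x * a.1 * x⁻¹ = a.2}) := by
    choose z hz using fun x : {x : G | ∃ z ∈ S, x * z * x⁻¹ ∈ T} ↦ x.2
    refine Nat.card_le_card_of_injective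
      (fun x ↦ ⟨(⟨z x, (hz x).1⟩, ⟨x.1 * z x * x.1⁻¹, (hz x).2⟩), ⟨x.1, rfl⟩⟩) fun x y h ↦ ?_
    exact Subtype.ext (congrArg (fun b : Σ a : S × T, {x : G | x * a.1 * x⁻¹ = a.2} ↦ b.2.1) h)
  rw [Nat.card_sigma] at hinj
  refine hinj.trans ((Finset.sum_le_card_nsmul _ _ M fun a _ ↦
    (natCard_setOf_conj_eq_le _ _).trans (hM _ a.1.2)).trans_eq ?_)
  simp [Nat.card_eq_fintype_card]

theorem natCard_comap_of_surjective {Q : Type*} [Group Q] {f : G →* Q}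
    (hf : Function.Surjective f) (K : Subgroup Q) :
    Nat.card (K.comap f) = Nat.card f.ker * Nat.card K := by
  have := Finite.of_surjective f hf
  refine Nat.eq_of_mul_eq_mul_right (Nat.pos_of_ne_zero K.index_ne_zero_of_finite) ?_
  rw [← Subgroup.index_comap_of_surjective K hf, Subgroup.card_mul_index,
    Subgroup.index_comap_of_surjective K hf, mul_assoc, K.card_mul_index,
    ← f.ker.card_mul_index, Subgroup.index_ker, f.range_eq_top.mpr hf, Subgroup.card_top]

theorem natCard_centralizer_map_le {Q : Type*} [Group Q] {f : G →* Q}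
    (hf : Function.Surjective f) (g : G) :
    Nat.card (Subgroup.centralizer {f g}) ≤ Nat.card (Subgroup.centralizer {g}) := by
  have hpre : ((Subgroup.centralizer {f g}).comap f : Set G) =
      {x | ∃ z ∈ ({g} : Set G), x * z * x⁻¹ ∈ (fun k ↦ k * g) '' (f.ker : Set G)} := by
    ext x
    simp [Subgroup.mem_centralizer_singleton_iff, MonoidHom.mem_ker, mul_inv_eq_iff_eq_mul]
  have hle := natCard_setOf_exists_conj_mem_le (S := {g}) (T := (fun k ↦ k * g) '' (f.ker : Set G))
    (M := Nat.card (Subgroup.centralizer {g})) (by simp)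
  rw [← hpre, Nat.card_image_of_injective (mul_left_injective g), Nat.card_coe_set_eq {g},
    Set.ncard_singleton, one_mul] at hle
  refine Nat.le_of_mul_le_mul_left (c := Nat.card f.ker) ?_ Nat.card_pos
  exact (natCard_comap_of_surjective hf _).symm.trans_le hle

/-- The proportion `Q_p(G)` of `x ∈ G` for which the subgroup `P` meets its conjugate
`x⁻¹ P x` nontrivially. -/
noncomputable def intersectionRatio (P : Subgroup G) : ℝ :=
  (Nat.card {x : G | P ⊓ P.map (MulAut.conj x⁻¹).toMonoidHom ≠ ⊥} : ℝ) / Nat.card G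

theorem exists_orderOf_eq_conj_mem [Fact p.Prime] {P : Subgroup G} (hP : IsPGroup p P) {x : G}
    (hx : P ⊓ P.map (MulAut.conj x⁻¹).toMonoidHom ≠ ⊥) :
    ∃ z ∈ P, orderOf z = p ∧ x * z * x⁻¹ ∈ P := by
  have hK : IsPGroup p (P ⊓ P.map (MulAut.conj x⁻¹).toMonoidHom : Subgroup G) :=
    hP.to_le inf_le_left
  have := (Subgroup.nontrivial_iff_ne_bot _).mpr hx
  obtain ⟨⟨_, hzP, y, hy, rfl⟩, hz⟩ := exists_prime_orderOf_dvd_card' p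
    (hK.card_eq_or_dvd.resolve_left Finite.one_lt_card.ne')
  refine ⟨_, hzP, (Subgroup.orderOf_coe _).trans hz, ?_⟩
  simpa [mul_assoc] using hy

theorem natCard_inf_conj_ne_bot_le [Fact p.Prime] {P : Subgroup G} (hP : IsPGroup p P)
    {T : Set G} (hT : ∀ x z : G, z ∈ T → x * z * x⁻¹ ∈ T) {M₁ M₂ : ℕ}
    (h₁ : ∀ z ∈ T, orderOf z = p → Nat.card (Subgroup.centralizer {z}) ≤ M₁)
    (h₂ : ∀ z ∉ T, orderOf z = p → Nat.card (Subgroup.centralizer {z}) ≤ M₂) :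
    Nat.card {x : G | P ⊓ P.map (MulAut.conj x⁻¹).toMonoidHom ≠ ⊥} ≤
      Nat.card {z : G | z ∈ P ∧ orderOf z = p ∧ z ∈ T} ^ 2 * M₁ + Nat.card P ^ 2 * M₂ := by
  set S₁ : Set G := {z | z ∈ P ∧ orderOf z = p ∧ z ∈ T}
  set S₂ : Set G := {z | z ∈ P ∧ orderOf z = p ∧ z ∉ T}
  have hcover : {x : G | P ⊓ P.map (MulAut.conj x⁻¹).toMonoidHom ≠ ⊥} ⊆
      {x | ∃ z ∈ S₁, x * z * x⁻¹ ∈ S₁} ∪ {x | ∃ z ∈ S₂, x * z * x⁻¹ ∈ (P : Set G)} := by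
    intro x hx
    obtain ⟨z, hzP, hzp, hxz⟩ := exists_orderOf_eq_conj_mem hP hx
    by_cases hzT : z ∈ T
    · have hord : orderOf (x * z * x⁻¹) = p := by
        rw [← hzp]; exact orderOf_injective (MulAut.conj x).toMonoidHom (MulAut.conj x).injective z
      exact .inl ⟨z, ⟨hzP, hzp, hzT⟩, hxz, hord, hT x z hzT⟩
    · exact .inr ⟨z, ⟨hzP, hzp, hzT⟩, hxz⟩
  have hS₂ : Nat.card S₂ ≤ Nat.card P :=
    Nat.card_mono (P : Set G).toFinite fun z hz ↦ hz.1
  calc _ ≤ _ := Nat.card_mono (Set.toFinite _) hcover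
    _ ≤ _ := by simpa only [Nat.card_coe_set_eq] using Set.ncard_union_le _ _
    _ ≤ Nat.card S₁ * Nat.card S₁ * M₁ + Nat.card S₂ * Nat.card P * M₂ :=
      add_le_add (natCard_setOf_exists_conj_mem_le fun z hz ↦ h₁ z hz.2.2 hz.2.1)
        (natCard_setOf_exists_conj_mem_le fun z hz ↦ h₂ z hz.2.2 hz.2.1)
    _ ≤ _ := by rw [pow_two, pow_two]; gcongr

end FiniteGroups

theorem exists_isPGroup_forall_pow_eq_one_mem {N : Type*} [Group N] [Finite N] [Group.IsNilpotent N]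
    (p : ℕ) [Fact p.Prime] : ∃ S : Subgroup N, IsPGroup p S ∧ ∀ a : N, a ^ p = 1 → a ∈ S := by
  obtain ⟨P⟩ : Nonempty (Sylow p N) := inferInstance
  have hnormal : (P : Subgroup N).Normal :=
    ((Group.isNilpotent_of_finite_tfae (G := N)).out 0 3 rfl rfl).mp ‹_› p ‹_› P
  refine ⟨P, P.isPGroup', fun a ha ↦ ?_⟩
  have hzpow : IsPGroup p (Subgroup.zpowers a) :=
    IsPGroup.of_card_dvd_pow (n := 1)
      (by simpa [Nat.card_zpowers] using orderOf_dvd_of_pow_eq_one ha)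
  obtain ⟨R, hR⟩ := hzpow.exists_le_sylow
  have := Sylow.unique_of_normal P hnormal
  exact Subsingleton.elim R P ▸ hR (Subgroup.mem_zpowers a)

section Centralizer

open Module

variable {F V : Type*} [Field F] [AddCommGroup V] [Module F V]

theorem isSemisimple_of_pow_eq_smul_one {z : End F V} {m : ℕ} {s : F} (hm : (m : F) ≠ 0)
    (hs : s ≠ 0) (hz : z ^ m = s • 1) : z.IsSemisimple :=
  End.isSemisimple_of_squarefree_aeval_eq_zero
    (Polynomial.separable_X_pow_sub_C s hm hs).squarefree
    (by simp [hz, Algebra.algebraMap_eq_smul_one])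

theorem commute_of_mem_centralizer {z f : End F V} (hf : f ∈ Subalgebra.centralizer F {z}) :
    Commute z f :=
  Subalgebra.mem_centralizer_iff F |>.mp hf z rfl

theorem disjoint_eigenspace_range {z : End F V} (hz : z.IsSemisimple) (a : F) :
    Disjoint (z.eigenspace a) (LinearMap.range (z - algebraMap F (End F V) a)) := by
  rw [Submodule.disjoint_def]
  rintro _ hmem ⟨y, rfl⟩
  have hy : y ∈ z.genEigenspace a 2 := by
    rw [← Nat.cast_two, End.mem_genEigenspace_nat, pow_two, ← Algebra.algebraMap_eq_smul_one]
    rwa [End.eigenspace_def, ← Algebra.algebraMap_eq_smul_one] at hmem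
  rwa [hz.isFinitelySemisimple.genEigenspace_eq_eigenspace a two_pos, End.mem_eigenspace_iff,
    ← sub_eq_zero] at hy

section FiniteDimensional

variable [FiniteDimensional F V]

theorem finrank_eigenspace_add_finrank_range (z : End F V) (a : F) :
    finrank F (z.eigenspace a) + finrank F (LinearMap.range (z - algebraMap F (End F V) a)) =
      finrank F V := by
  rw [End.eigenspace_def, ← Algebra.algebraMap_eq_smul_one, add_comm]
  exact LinearMap.finrank_range_add_finrank_ker _

theorem isCompl_eigenspace_range {z : End F V} (hz : z.IsSemisimple) (a : F) :
    IsCompl (z.eigenspace a) (LinearMap.range (z - algebraMap F (End F V) a)) :=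
  (Submodule.isCompl_iff_disjoint _ _ (finrank_eigenspace_add_finrank_range z a).ge).mpr
    (disjoint_eigenspace_range hz a)

theorem finrank_centralizer_le_sq (z : End F V) :
    finrank F (Subalgebra.centralizer F {z}) ≤ finrank F V ^ 2 := by
  rw [pow_two, ← finrank_linearMap F F V V, ← Subalgebra.finrank_toSubmodule]
  exact Submodule.finrank_le _

end FiniteDimensional

theorem apply_mem_range_of_mem_centralizer {z f : End F V} (hf : f ∈ Subalgebra.centralizer F {z})
    (a : F) : ∀ x ∈ LinearMap.range (z - algebraMap F (End F V) a),
      f x ∈ LinearMap.range (z - algebraMap F (End F V) a) := by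
  rintro _ ⟨y, rfl⟩
  exact ⟨f y, DFunLike.congr_fun ((commute_of_mem_centralizer hf).sub_left
    (Algebra.commutes a f)).eq y⟩

theorem self_mem_centralizer (z : End F V) : z ∈ Subalgebra.centralizer F {z} :=
  Subalgebra.mem_centralizer_iff F |>.mpr fun _ h ↦ by rw [h]

theorem finrank_centralizer_le_eigenspace_sq_add [FiniteDimensional F V] {z : End F V}
    (hz : z.IsSemisimple) (a : F) :
    finrank F (Subalgebra.centralizer F {z}) ≤ finrank F (z.eigenspace a) ^ 2 +
      finrank F (Subalgebra.centralizer F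
        {z.restrict (apply_mem_range_of_mem_centralizer (self_mem_centralizer z) a)}) := by
  set R := LinearMap.range (z - algebraMap F (End F V) a)
  set zR : End F R := z.restrict (apply_mem_range_of_mem_centralizer (self_mem_centralizer z) a)
  have hE : ∀ f ∈ Subalgebra.centralizer F {z}, ∀ x ∈ z.eigenspace a, f x ∈ z.eigenspace a :=
    fun f hf ↦ End.mapsTo_genEigenspace_of_comm (commute_of_mem_centralizer hf) a 1
  have hR : ∀ f ∈ Subalgebra.centralizer F {z}, ∀ x ∈ R, f x ∈ R :=
    fun f hf ↦ apply_mem_range_of_mem_centralizer hf a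
  let Φ : Subalgebra.centralizer F {z} →ₗ[F]
      End F (z.eigenspace a) × Subalgebra.centralizer F {zR} :=
    { toFun f := (f.1.restrict (hE f.1 f.2), ⟨f.1.restrict (hR f.1 f.2), by
        rintro _ rfl
        ext x
        exact DFunLike.congr_fun (commute_of_mem_centralizer f.2).eq x.1⟩)
      map_add' _ _ := rfl
      map_smul' _ _ := rfl }
  have hΦ : Function.Injective Φ := by
    intro f g hfg
    refine Subtype.ext (LinearMap.ext fun x ↦ ?_)
    obtain ⟨e, he, r, hr, rfl⟩ := Submodule.mem_sup.mp
      ((isCompl_eigenspace_range hz a).sup_eq_top.ge (Submodule.mem_top (x := x)))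
    have hfge : f.1 e = g.1 e := congrArg (fun h ↦ ((h.1 ⟨e, he⟩ : z.eigenspace a) : V)) hfg
    have hfgr : f.1 r = g.1 r := congrArg (fun h ↦ ((h.2.1 ⟨r, hr⟩ : R) : V)) hfg
    rw [map_add, map_add, hfge, hfgr]
  have : Free F (Subalgebra.centralizer F {zR}) :=
    Free.of_divisionRing (K := F) (V := Subalgebra.centralizer F {zR})
  calc _ ≤ finrank F (End F (z.eigenspace a) × Subalgebra.centralizer F {zR}) :=
        LinearMap.finrank_le_finrank_of_injective hΦ
    _ = _ := by rw [finrank_prod, finrank_linearMap, pow_two]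

/-- The largest subspace on which all endomorphisms in `D` vanish. The dimension of a space of maps
commuting with `z` is bounded by induction on the codimension of its common kernel. -/
def commonKernel (D : Submodule F (End F V)) : Submodule F V := ⨅ f ∈ D, LinearMap.ker f

theorem mem_commonKernel {D : Submodule F (End F V)} {x : V} :
    x ∈ commonKernel D ↔ ∀ f ∈ D, f x = 0 := by
  simp [commonKernel, Submodule.mem_iInf]

theorem eq_bot_of_commonKernel_eq_top {D : Submodule F (End F V)} (h : commonKernel D = ⊤) :
    D = ⊥ :=
  (Submodule.eq_bot_iff D).mpr fun f hf ↦ LinearMap.ext fun x ↦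
    mem_commonKernel.mp (h ▸ Submodule.mem_top (x := x)) f hf

theorem apply_mem_commonKernel {z : End F V} {D : Submodule F (End F V)}
    (hD : D ≤ Subalgebra.toSubmodule (Subalgebra.centralizer F {z})) {x : V}
    (hx : x ∈ commonKernel D) : z x ∈ commonKernel D := by
  rw [mem_commonKernel] at hx ⊢
  intro f hf
  rw [← End.mul_apply, ← (commute_of_mem_centralizer (hD hf)).eq, End.mul_apply, hx f hf, map_zero]

theorem mem_commonKernel_inf_ker_applyₗ (D : Submodule F (End F V)) (v : V) :
    v ∈ commonKernel (D ⊓ LinearMap.ker (LinearMap.applyₗ v)) :=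
  mem_commonKernel.mpr fun _ hf ↦ hf.2

theorem commonKernel_sup_span_singleton_le (D : Submodule F (End F V)) (v : V) :
    commonKernel D ⊔ F ∙ v ≤ commonKernel (D ⊓ LinearMap.ker (LinearMap.applyₗ v)) :=
  sup_le (fun _ hx ↦ mem_commonKernel.mpr fun f hf ↦ mem_commonKernel.mp hx f hf.1)
    ((Submodule.span_singleton_le_iff_mem _ _).mpr (mem_commonKernel_inf_ker_applyₗ D v))

variable [FiniteDimensional F V]

theorem finrank_le_add_finrank_inf_ker_applyₗ (D : Submodule F (End F V)) (v : V) :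
    finrank F D ≤ finrank F V +
      finrank F (D ⊓ LinearMap.ker (LinearMap.applyₗ v) : Submodule F (End F V)) := by
  let ev : D →ₗ[F] V := (LinearMap.applyₗ v).domRestrict D
  have hker : finrank F (LinearMap.ker ev) =
      finrank F (D ⊓ LinearMap.ker (LinearMap.applyₗ v) : Submodule F (End F V)) := by
    rw [LinearMap.ker_domRestrict, ← Submodule.map_comap_subtype, Submodule.finrank_map_subtype_eq]
  calc finrank F D = finrank F (LinearMap.range ev) + finrank F (LinearMap.ker ev) :=
        (LinearMap.finrank_range_add_finrank_ker ev).symm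
    _ ≤ _ := add_le_add (Submodule.finrank_le _) hker.le

theorem exists_forall_sub_smul_notMem {z : End F V} {c : ℕ}
    (hc : ∀ a, finrank F (z.eigenspace a) ≤ c) {U : Submodule F V} (hU : ∀ u ∈ U, z u ∈ U)
    (hcard : finrank F U + c < finrank F V) : ∃ v, ∀ a : F, z v - a • v ∉ U := by
  by_contra! h
  have hdep : ∀ v, ¬ LinearIndependent F ![v, U.mapQ U z hU v] := by
    intro v
    obtain ⟨v, rfl⟩ := U.mkQ_surjective v
    obtain ⟨a, ha⟩ := h v
    rw [← Submodule.Quotient.mk_eq_zero, Submodule.Quotient.mk_sub, sub_eq_zero] at ha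
    intro hli
    have := LinearIndependent.pair_iff.mp hli a (-1) (by simp [ha])
    simp at this
  obtain ⟨a, ha⟩ := LinearMap.exists_eq_smul_id_of_forall_notLinearIndependent hdep
  have hrange : LinearMap.range (z - algebraMap F (End F V) a) ≤ U := by
    rintro _ ⟨v, rfl⟩
    rw [← Submodule.Quotient.mk_eq_zero]
    simpa [sub_eq_zero] using DFunLike.congr_fun ha (Submodule.Quotient.mk v)
  have := Submodule.finrank_mono hrange
  have := finrank_eigenspace_add_finrank_range z a
  have := hc a
  omega

theorem finrank_lt_finrank_sup_span_singleton {U : Submodule F V} {v : V} (hv : v ∉ U) :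
    finrank F U < finrank F (U ⊔ F ∙ v : Submodule F V) :=
  Submodule.finrank_lt_finrank_of_lt (left_lt_sup.mpr
    (by rwa [Submodule.span_singleton_le_iff_mem]))

theorem finrank_commonKernel_add_two_le {z : End F V} {D : Submodule F (End F V)}
    (hD : D ≤ Subalgebra.toSubmodule (Subalgebra.centralizer F {z})) {v : V}
    (hv : ∀ a : F, z v - a • v ∉ commonKernel D) :
    finrank F (commonKernel D) + 2 ≤
      finrank F (commonKernel (D ⊓ LinearMap.ker (LinearMap.applyₗ v))) := by
  set U := commonKernel D
  set U' := commonKernel (D ⊓ LinearMap.ker (LinearMap.applyₗ v))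
  have hUU' : U ⊔ F ∙ v ≤ U' := commonKernel_sup_span_singleton_le D v
  have hvU : v ∉ U := fun h ↦ hv 0 (by simpa using apply_mem_commonKernel hD h)
  have hzv : z v ∉ U ⊔ F ∙ v := by
    rw [Submodule.mem_sup]
    rintro ⟨u, hu, w, hw, huw⟩
    obtain ⟨a, rfl⟩ := Submodule.mem_span_singleton.mp hw
    exact hv a (by simpa [← huw] using hu)
  have hzv' : z v ∈ U' :=
    apply_mem_commonKernel (inf_le_left.trans hD) (mem_commonKernel_inf_ker_applyₗ D v)
  have hle : (U ⊔ F ∙ v) ⊔ F ∙ z v ≤ U' :=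
    sup_le hUU' ((Submodule.span_singleton_le_iff_mem _ _).mpr hzv')
  have := finrank_lt_finrank_sup_span_singleton hvU
  have := finrank_lt_finrank_sup_span_singleton hzv
  have := Submodule.finrank_mono hle
  omega

/- Restricting to the maps killing `v` costs at most `dim V` dimensions and enlarges the common
kernel by one dimension, and by two if `v` and `z v` are independent modulo it. -/
theorem finrank_le_mul_min_of_finrank_le_commonKernel_add {z : End F V} {c : ℕ}
    (hc : ∀ a, finrank F (z.eigenspace a) ≤ c) (k : ℕ) {D : Submodule F (End F V)}
    (hD : D ≤ Subalgebra.toSubmodule (Subalgebra.centralizer F {z}))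
    (hk : finrank F V ≤ finrank F (commonKernel D) + k) :
    finrank F D ≤ finrank F V * min k ((k + c) / 2) := by
  induction k using Nat.strong_induction_on generalizing D with
  | _ k ih =>
  have descend : ∀ v j, j < k →
      finrank F V ≤ finrank F (commonKernel (D ⊓ LinearMap.ker (LinearMap.applyₗ v))) + j →
      min j ((j + c) / 2) + 1 ≤ min k ((k + c) / 2) →
      finrank F D ≤ finrank F V * min k ((k + c) / 2) := fun v j hjk hj hmin ↦
    calc finrank F D ≤ finrank F V + finrank F V * min j ((j + c) / 2) :=
          (finrank_le_add_finrank_inf_ker_applyₗ D v).trans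
            (Nat.add_le_add_left (ih j hjk (inf_le_left.trans hD) hj) _)
      _ = finrank F V * (min j ((j + c) / 2) + 1) := by ring
      _ ≤ _ := Nat.mul_le_mul_left _ hmin
  by_cases htop : commonKernel D = ⊤
  · rw [eq_bot_of_commonKernel_eq_top htop, finrank_bot]
    exact Nat.zero_le _
  have hlt := Submodule.finrank_lt htop
  obtain hcodim | hcodim := lt_or_ge (finrank F (commonKernel D) + c) (finrank F V)
  · obtain ⟨v, hv⟩ :=
      exists_forall_sub_smul_notMem hc (fun _ ↦ apply_mem_commonKernel hD) hcodim
    have := finrank_commonKernel_add_two_le hD hv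
    have := Submodule.finrank_le (commonKernel (D ⊓ LinearMap.ker (LinearMap.applyₗ v)))
    exact descend v (k - 2) (by omega) (by omega) (by omega)
  · obtain ⟨v, -, hv⟩ := SetLike.exists_of_lt (lt_top_iff_ne_top.mpr htop)
    have := (finrank_lt_finrank_sup_span_singleton hv).trans_le
      (Submodule.finrank_mono (commonKernel_sup_span_singleton_le D v))
    exact descend v (finrank F V - finrank F (commonKernel D) - 1) (by omega) (by omega) (by omega)

theorem finrank_centralizer_le_of_finrank_eigenspace_le {z : End F V} {c : ℕ}
    (hc : ∀ a, finrank F (z.eigenspace a) ≤ c) :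
    finrank F (Subalgebra.centralizer F {z}) ≤ finrank F V * ((finrank F V + c) / 2) := by
  rw [← Subalgebra.finrank_toSubmodule]
  exact (finrank_le_mul_min_of_finrank_le_commonKernel_add hc (finrank F V) le_rfl
    (Nat.le_add_left _ _)).trans (Nat.mul_le_mul_left _ (min_le_right _ _))

theorem finrank_centralizer_le_of_finrank_eigenspace_le_one {z : End F V} (hz : z.IsSemisimple)
    (h : ∀ a, finrank F (z.eigenspace a) ≤ 1) (hn : 2 ≤ finrank F V) :
    finrank F (Subalgebra.centralizer F {z}) ≤ finrank F V * (finrank F V / 2) := by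
  by_cases h₀ : ∀ a, finrank F (z.eigenspace a) ≤ 0
  · exact finrank_centralizer_le_of_finrank_eigenspace_le h₀
  push Not at h₀
  obtain ⟨a, ha⟩ := h₀
  have hdim := finrank_eigenspace_add_finrank_range z a
  have hle := finrank_centralizer_le_eigenspace_sq_add hz a
  have hR := apply_mem_range_of_mem_centralizer (self_mem_centralizer z) a
  have hrestrict : ∀ b, finrank F (End.eigenspace (z.restrict hR) b) ≤ 1 := fun b ↦
    (Submodule.finrank_map_subtype_eq _ _).symm.trans_le
      ((Submodule.finrank_mono (End.eigenspace_restrict_le_eigenspace z hR b)).trans (h b))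
  have hle' := finrank_centralizer_le_of_finrank_eigenspace_le hrestrict
  rw [(h a).antisymm ha] at hle hdim
  calc finrank F (Subalgebra.centralizer F {z})
      ≤ 1 + finrank F (LinearMap.range (z - algebraMap F (End F V) a)) * (finrank F V / 2) := by
        rw [← hdim, add_comm 1]
        exact hle.trans (by simpa [add_comm] using hle')
    _ ≤ finrank F V * (finrank F V / 2) := by
        rw [← hdim, add_mul, one_mul]
        exact Nat.add_le_add_right (by omega) _

theorem finrank_centralizer_add_le {z : End F V} (hz : z.IsSemisimple)
    (hscalar : ∀ a : F, z ≠ algebraMap F (End F V) a) (hn : 3 ≤ finrank F V) :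
    (∃ a : F, finrank F (LinearMap.range (z - algebraMap F (End F V) a)) = 1) ∧
      finrank F (Subalgebra.centralizer F {z}) + 2 * finrank F V ≤ finrank F V ^ 2 + 2 ∨
    finrank F (Subalgebra.centralizer F {z}) + 2 * finrank F V ≤ finrank F V ^ 2 ∧
      finrank F (Subalgebra.centralizer F {z}) + 4 * finrank F V ≤ finrank F V ^ 2 + 10 := by
  by_cases hbig : ∃ a, 2 ≤ finrank F (z.eigenspace a)
  · obtain ⟨a, ha⟩ := hbig
    have hdim := finrank_eigenspace_add_finrank_range z a
    have hle := (finrank_centralizer_le_eigenspace_sq_add hz a).trans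
      (Nat.add_le_add_left (finrank_centralizer_le_sq _) _)
    have hpos : finrank F (LinearMap.range (z - algebraMap F (End F V) a)) ≠ 0 := fun h ↦
      hscalar a (sub_eq_zero.mp (LinearMap.range_eq_bot.mp (Submodule.finrank_eq_zero.mp h)))
    obtain hr | hr := eq_or_ne (finrank F (LinearMap.range (z - algebraMap F (End F V) a))) 1
    · rw [hr] at hle hdim
      exact .inl ⟨⟨a, hr⟩, by rw [← hdim]; nlinarith⟩
    · generalize finrank F (LinearMap.range (z - algebraMap F (End F V) a)) = r at *
      exact .inr (by rw [← hdim]; constructor <;> nlinarith [show 2 ≤ r by omega])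
  · push Not at hbig
    have hle := finrank_centralizer_le_of_finrank_eigenspace_le_one hz
      (fun a ↦ Nat.le_of_lt_succ (hbig a)) (by omega)
    refine .inr ?_
    generalize finrank F V = n at hle hn
    obtain ⟨k, rfl | rfl⟩ := n.even_or_odd'
    · rw [Nat.mul_div_cancel_left k two_pos] at hle
      constructor
      · nlinarith [show 2 ≤ k by omega]
      · zify at hle ⊢
        nlinarith [sq_nonneg ((k : ℤ) - 2)]
    · rw [show (2 * k + 1) / 2 = k by omega] at hle
      constructor
      · nlinarith
      · zify at hle ⊢
        nlinarith [sq_nonneg ((k : ℤ) - 2)]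

end Centralizer

section Pseudoreflection

open Module
open scoped Pointwise

variable {F V : Type*} [Field F] [AddCommGroup V] [Module F V]

/-- The root space of `u` is the image of `u - 1`, i.e. the commutator space `[V, u]`. For a
pseudoreflection it is the root line, by which pseudoreflections are counted. -/
def rootSpace (u : V ≃ₗ[F] V) : Submodule F V := LinearMap.range ((u : V →ₗ[F] V) - 1)

/-- A pseudoreflection is an automorphism `u` for which `u - 1` has rank one, so that transvections
are included. These have exceptionally large centralizers. -/
def IsPseudoreflection (u : V ≃ₗ[F] V) : Prop := finrank F (rootSpace u) = 1

theorem mem_rootSpace {u : V ≃ₗ[F] V} {x : V} : x ∈ rootSpace u ↔ ∃ y, u y - y = x := Iff.rfl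

theorem sub_mem_rootSpace (u : V ≃ₗ[F] V) (x : V) : u x - x ∈ rootSpace u := ⟨x, rfl⟩

theorem smul_eq_self_of_rootSpace_le [FiniteDimensional F V] {u : V ≃ₗ[F] V} {U : Submodule F V}
    (hu : rootSpace u ≤ U) : u • U = U := by
  refine Submodule.eq_of_le_of_finrank_eq ?_ (u.finrank_map_eq U)
  rintro _ ⟨x, hx, rfl⟩
  simpa using U.add_mem (hu (sub_mem_rootSpace u x)) hx

theorem rootSpace_conj (h u : V ≃ₗ[F] V) : rootSpace (h * u * h⁻¹) = h • rootSpace u := by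
  ext x
  simp only [mem_rootSpace, Submodule.mem_smul_pointwise_iff_exists]
  constructor
  · rintro ⟨y, rfl⟩
    exact ⟨_, ⟨h⁻¹ y, rfl⟩, by simp [map_sub, LinearEquiv.smul_def]⟩
  · rintro ⟨_, ⟨y, rfl⟩, rfl⟩
    exact ⟨h y, by simp [LinearEquiv.smul_def]⟩

theorem isPseudoreflection_conj_iff (h : V ≃ₗ[F] V) {u : V ≃ₗ[F] V} :
    IsPseudoreflection (h * u * h⁻¹) ↔ IsPseudoreflection u := by
  rw [IsPseudoreflection, IsPseudoreflection, rootSpace_conj]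
  exact iff_of_eq (congrArg (· = 1) (h.finrank_map_eq (rootSpace u)))

theorem exists_forall_apply_eq_smul {L : Submodule F V} (hL : finrank F L = 1)
    {u : V ≃ₗ[F] V} (hu : u • L = L) : ∃ a : F, ∀ x ∈ L, u x = a • x := by
  obtain ⟨⟨w, hw⟩, -, hspan⟩ := finrank_eq_one_iff'.mp hL
  have huw : u w ∈ L := hu ▸ Submodule.smul_mem_pointwise_smul w u L hw
  obtain ⟨a, ha⟩ := hspan ⟨u w, huw⟩
  refine ⟨a, fun x hx ↦ ?_⟩
  obtain ⟨c, hc⟩ := hspan ⟨x, hx⟩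
  obtain rfl : c • w = x := congrArg Subtype.val hc
  rw [map_smul, ← show a • w = u w from congrArg Subtype.val ha, smul_comm]

theorem IsPseudoreflection.exists_forall_apply_eq_smul [FiniteDimensional F V] {u : V ≃ₗ[F] V}
    (hu : IsPseudoreflection u) : ∃ a : F, ∀ x ∈ rootSpace u, u x = a • x :=
  _root_.exists_forall_apply_eq_smul hu (smul_eq_self_of_rootSpace_le le_rfl)

theorem le_rootSpace_or_forall_apply_eq {L : Submodule F V} (hL : finrank F L = 1)
    {u : V ≃ₗ[F] V} (hu : u • L = L) : L ≤ rootSpace u ∨ ∀ x ∈ L, u x = x := by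
  obtain ⟨a, ha⟩ := exists_forall_apply_eq_smul hL hu
  obtain rfl | ha1 := eq_or_ne a 1
  · exact .inr fun x hx ↦ by rw [ha x hx, one_smul]
  · refine .inl fun x hx ↦ ⟨(a - 1)⁻¹ • x, ?_⟩
    calc u ((a - 1)⁻¹ • x) - (a - 1)⁻¹ • x = (a - 1)⁻¹ • (a - 1) • x := by
          rw [map_smul, ha x hx, sub_smul, one_smul, smul_sub]
      _ = x := inv_smul_smul₀ (sub_ne_zero.mpr ha1) x

/- Summation over the group generated by `R` annihilates every root space, whereas it multiplies the
fixed vector `x` by the group order. -/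
theorem eq_zero_of_mem_iSup_rootSpace {R : Set (V ≃ₗ[F] V)} [Finite (Subgroup.closure R)]
    (hR : (Nat.card (Subgroup.closure R) : F) ≠ 0) {x : V} (hx : x ∈ ⨆ u ∈ R, rootSpace u)
    (hfix : ∀ u ∈ R, u x = x) : x = 0 := by
  let := Fintype.ofFinite (Subgroup.closure R)
  let average : V →ₗ[F] V := ∑ k : Subgroup.closure R, ((k : V ≃ₗ[F] V) : V →ₗ[F] V)
  have average_apply (y : V) : average y = ∑ k : Subgroup.closure R, (k : V ≃ₗ[F] V) y :=
    LinearMap.sum_apply _ _ _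
  have hker : ⨆ u ∈ R, rootSpace u ≤ LinearMap.ker average := by
    refine iSup₂_le fun u hu ↦ ?_
    rintro _ ⟨y, rfl⟩
    have : average (u y) = average y := by
      simp only [average_apply]
      exact Fintype.sum_equiv (Equiv.mulRight ⟨u, Subgroup.subset_closure hu⟩) _ _ fun _ ↦ rfl
    rw [LinearMap.mem_ker, LinearMap.sub_apply, map_sub, sub_eq_zero]
    exact this
  have hstab : Subgroup.closure R ≤ MulAction.stabilizer (V ≃ₗ[F] V) x :=
    (Subgroup.closure_le _).mpr hfix
  have hstab_apply (k : Subgroup.closure R) : (k : V ≃ₗ[F] V) x = x := hstab k.2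
  have : (Nat.card (Subgroup.closure R) : F) • x = 0 := by
    rw [← LinearMap.mem_ker.mp (hker hx), average_apply]
    simp only [hstab_apply, Finset.sum_const, Finset.card_univ, Nat.card_eq_fintype_card,
      Nat.cast_smul_eq_nsmul]
  exact (smul_eq_zero.mp this).resolve_left hR

theorem natCard_lines [Finite F] (U : Submodule F V) :
    Nat.card {L : Submodule F V // L ≤ U ∧ finrank F L = 1} =
      ∑ i ∈ Finset.range (finrank F U), Nat.card F ^ i := by
  rw [← Projectivization.card_of_finrank F U rfl]
  refine Nat.card_congr (.trans ?_ (Projectivization.equivSubmodule F U).symm)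
  exact (Equiv.subtypeSubtypeEquivSubtypeInter _ _).symm.trans
    ((Submodule.mapIic U).toEquiv.subtypeEquiv fun L ↦ by
      rw [← Submodule.finrank_map_subtype_eq U L]
      rfl).symm

theorem exists_subset_ncard_le_forall_rootSpace_le [FiniteDimensional F V]
    {R : Set (V ≃ₗ[F] V)} (hR : ∀ u ∈ R, IsPseudoreflection u) :
    ∃ B ⊆ R, B.Finite ∧ B.ncard ≤ finrank F V ∧ ∀ u ∈ R, rootSpace u ≤ ⨆ s ∈ B, rootSpace s := by
  have hspan (u : R) : ∃ w : V, rootSpace u.1 = F ∙ w :=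
    ((Submodule.finrank_le_one_iff_isPrincipal _).mp (hR u u.2).le).principal
  choose w hw using hspan
  obtain ⟨κ, a, ha, hspan, hindep⟩ := exists_linearIndependent' F w
  have := hindep.finite
  refine ⟨Set.range (Subtype.val ∘ a), by rintro _ ⟨k, rfl⟩; exact (a k).2, Set.finite_range _,
    ?_, fun u hu ↦ ?_⟩
  · let := Fintype.ofFinite κ
    rw [Set.ncard_range_of_injective (Subtype.val_injective.comp ha), Nat.card_eq_fintype_card]
    exact hindep.fintype_card_le_finrank
  · calc rootSpace u ≤ Submodule.span F (Set.range w) :=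
          hw ⟨u, hu⟩ ▸ Submodule.span_mono (Set.singleton_subset_iff.mpr (Set.mem_range_self _))
      _ = ⨆ s ∈ Set.range (Subtype.val ∘ a), rootSpace s := by
          rw [← hspan, Submodule.span_range_eq_iSup, iSup_range]
          simp only [Function.comp_apply, hw]

section PGroup

variable {p : ℕ} [Fact p.Prime] {S : Subgroup (V ≃ₗ[F] V)} [Finite S]

theorem natCast_natCard_ne_zero_of_isPGroup {K : Type*} [Group K] [Finite K] (hK : IsPGroup p K)
    (hp : (p : F) ≠ 0) : (Nat.card K : F) ≠ 0 := by
  obtain ⟨k, hk⟩ := IsPGroup.iff_card.mp hK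
  rw [hk, Nat.cast_pow]
  exact pow_ne_zero k hp

theorem eq_zero_of_mem_iSup_rootSpace_of_isPGroup (hS : IsPGroup p S) (hp : (p : F) ≠ 0)
    {R : Set (V ≃ₗ[F] V)} (hR : R ⊆ S) {x : V} (hx : x ∈ ⨆ u ∈ R, rootSpace u)
    (hfix : ∀ u ∈ R, u x = x) : x = 0 := by
  have hle : Subgroup.closure R ≤ S := (Subgroup.closure_le S).mpr hR
  have := Finite.of_injective _ (Subgroup.inclusion_injective hle)
  exact eq_zero_of_mem_iSup_rootSpace (natCast_natCard_ne_zero_of_isPGroup (hS.to_le hle) hp)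
    hx hfix

theorem eq_zero_of_mem_rootSpace (hS : IsPGroup p S) (hp : (p : F) ≠ 0) {u : V ≃ₗ[F] V}
    (hu : u ∈ S) {x : V} (hx : x ∈ rootSpace u) (hfix : u x = x) : x = 0 :=
  eq_zero_of_mem_iSup_rootSpace_of_isPGroup hS hp (Set.singleton_subset_iff.mpr hu)
    (by rwa [iSup_singleton]) (by rintro _ rfl; exact hfix)

theorem eq_of_rootSpace_le_of_eqOn [FiniteDimensional F V] (hS : IsPGroup p S) (hp : (p : F) ≠ 0)
    {u v : V ≃ₗ[F] V} (hu : u ∈ S) (hv : v ∈ S) {L : Submodule F V} (huL : rootSpace u ≤ L)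
    (hvL : rootSpace v ≤ L) (huv : ∀ x ∈ L, u x = v x) : u = v := by
  have hw : v⁻¹ * u ∈ S := S.mul_mem (S.inv_mem hv) hu
  have hwL (y : V) : (v⁻¹ * u) y - y ∈ L := by
    have hmem : u y - v y ∈ L := by
      simpa using L.sub_mem (huL (sub_mem_rootSpace u y)) (hvL (sub_mem_rootSpace v y))
    have hinv : v⁻¹ • L = L := inv_smul_eq_iff.mpr (smul_eq_self_of_rootSpace_le hvL).symm
    have := hinv ▸ Submodule.smul_mem_pointwise_smul _ v⁻¹ L hmem
    simpa [LinearEquiv.smul_def, smul_sub] using this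
  refine (inv_mul_eq_one.mp (LinearEquiv.ext fun y ↦ ?_)).symm
  refine sub_eq_zero.mp (eq_zero_of_mem_rootSpace hS hp hw (sub_mem_rootSpace _ y) ?_)
  exact (congrArg (v⁻¹ ·) (huv _ (hwL y))).trans (v.symm_apply_apply _)

theorem commute_of_smul_rootSpace_eq [FiniteDimensional F V] (hS : IsPGroup p S)
    (hp : (p : F) ≠ 0) {h u : V ≃ₗ[F] V} (hh : h ∈ S) (hu : u ∈ S) (hrefl : IsPseudoreflection u)
    (hhu : h • rootSpace u = rootSpace u) : Commute h u := by
  obtain ⟨a, ha⟩ := hrefl.exists_forall_apply_eq_smul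
  have hconj : h * u * h⁻¹ ∈ S := S.mul_mem (S.mul_mem hh hu) (S.inv_mem hh)
  refine mul_inv_eq_iff_eq_mul.mp
    (eq_of_rootSpace_le_of_eqOn hS hp hconj hu (rootSpace_conj h u ▸ hhu.le) le_rfl fun x hx ↦ ?_)
  have hx' : h⁻¹ x ∈ rootSpace u :=
    inv_smul_eq_iff.mpr hhu.symm ▸ Submodule.smul_mem_pointwise_smul x h⁻¹ _ hx
  calc h (u (h⁻¹ x)) = a • h (h⁻¹ x) := by rw [ha _ hx', map_smul]
    _ = u x := by rw [ha x hx]; exact congrArg (a • ·) (h.apply_symm_apply x)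

theorem natCard_modEq_one [Finite F] [FiniteDimensional F V] (hS : IsPGroup p S)
    (hp : (p : F) ≠ 0) {u : V ≃ₗ[F] V} (hu : u ∈ S) (hrefl : IsPseudoreflection u) :
    Nat.card F ≡ 1 [MOD p] := by
  let := Fintype.ofFinite F
  obtain ⟨a, ha⟩ := hrefl.exists_forall_apply_eq_smul
  obtain ⟨⟨x, hx⟩, hx0, -⟩ := finrank_eq_one_iff'.mp hrefl
  replace hx0 : x ≠ 0 := fun h ↦ hx0 (Subtype.ext h)
  have ha1 : a ≠ 1 := by
    rintro rfl
    exact hx0 (eq_zero_of_mem_rootSpace hS hp hu hx (by rw [ha x hx, one_smul]))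
  have ha0 : a ≠ 0 := by
    rintro rfl
    exact hx0 (u.map_eq_zero_iff.mp (by rw [ha x hx, zero_smul]))
  obtain ⟨k, hk⟩ := hS ⟨u, hu⟩
  have hak : a ^ p ^ k = 1 := by
    have hpow (m : ℕ) : (u ^ m) x = a ^ m • x := by
      induction m with
      | zero => simp
      | succ m ih => rw [pow_succ, pow_succ', mul_smul, ← ih]; simp [ha x hx]
    have h1 : u ^ p ^ k = 1 := congrArg Subtype.val hk
    exact (smul_left_injective F hx0) (by simp [← hpow, h1])
  by_contra hq
  have hcoprime : (p ^ k).Coprime (Nat.card F - 1) :=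
    .pow_left k ((Nat.Prime.coprime_iff_not_dvd Fact.out).mpr fun h ↦
      hq ((Nat.modEq_iff_dvd' Nat.card_pos).mpr h).symm)
  have := pow_gcd_eq_one.mpr
    ⟨hak, Nat.card_eq_fintype_card (α := F) ▸ FiniteField.pow_card_sub_one_eq_one a ha0⟩
  rw [hcoprime, pow_one] at this
  exact ha1 this

/- The span of the root spaces contains `≡ finrank (mod p)` lines because `q ≡ 1 (mod p)`, so the
`p`-group generated by `R` stabilizes one of them; such a line must be a root space. -/
theorem exists_forall_commute [Finite F] [FiniteDimensional F V] (hS : IsPGroup p S)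
    (hp : (p : F) ≠ 0) (hq : Nat.card F ≡ 1 [MOD p]) {R : Set (V ≃ₗ[F] V)} (hRS : R ⊆ S)
    (hrefl : ∀ u ∈ R, IsPseudoreflection u)
    (hdim : ¬ p ∣ finrank F (⨆ u ∈ R, rootSpace u : Submodule F V)) :
    ∃ s ∈ R, ∀ u ∈ R, Commute u s := by
  set U : Submodule F V := ⨆ u ∈ R, rootSpace u
  let K := Subgroup.closure R
  have hK : IsPGroup p K := hS.to_le ((Subgroup.closure_le S).mpr hRS)
  have hKU : K ≤ MulAction.stabilizer (V ≃ₗ[F] V) U :=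
    (Subgroup.closure_le _).mpr fun u hu ↦ smul_eq_self_of_rootSpace_le (le_biSup rootSpace hu)
  let lines : SubMulAction K (Submodule F V) := {
    carrier := {L | L ≤ U ∧ finrank F L = 1}
    smul_mem' k L hL := by
      refine ⟨?_, ((k : V ≃ₗ[F] V).finrank_map_eq L).trans hL.2⟩
      rw [← (hKU k.2 : k • U = U)]
      exact Submodule.map_mono hL.1 }
  have hcard : ¬ p ∣ Nat.card lines := by
    have hmod : ∑ i ∈ Finset.range (finrank F U), Nat.card F ^ i ≡ finrank F U [MOD p] := by
      simpa using Nat.ModEq.sum (s := Finset.range (finrank F U)) fun i _ ↦ hq.pow i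
    rwa [show Nat.card lines = _ from natCard_lines U, hmod.dvd_iff dvd_rfl]
  obtain ⟨⟨L, hLU, hL⟩, hLfix⟩ := hK.nonempty_fixed_point_of_prime_not_dvd_card lines hcard
  replace hLfix (u) (hu : u ∈ R) : u • L = L :=
    congrArg Subtype.val (hLfix ⟨u, Subgroup.subset_closure hu⟩)
  obtain ⟨s, hs, hLs⟩ : ∃ s ∈ R, L ≤ rootSpace s := by
    by_contra! hle
    obtain ⟨⟨x, hx⟩, hx0, -⟩ := finrank_eq_one_iff'.mp hL
    refine hx0 (Subtype.ext (eq_zero_of_mem_iSup_rootSpace_of_isPGroup hS hp hRS (hLU hx) ?_))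
    exact fun u hu ↦ (le_rootSpace_or_forall_apply_eq hL (hLfix u hu)).resolve_left (hle u hu) x hx
  obtain rfl : L = rootSpace s :=
    Submodule.eq_of_le_of_finrank_eq hLs (hL.trans (hrefl s hs).symm)
  exact ⟨s, hs, fun u hu ↦
    commute_of_smul_rootSpace_eq hS hp (hRS hu) (hRS hs) (hrefl s hs) (hLfix u hu)⟩

theorem dvd_finrank_of_not_commute [Finite F] [FiniteDimensional F V] (hS : IsPGroup p S)
    (hp : (p : F) ≠ 0) {s t u : V ≃ₗ[F] V} (hs : s ∈ S) (ht : t ∈ S) (hu : u ∈ S)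
    (hs1 : IsPseudoreflection s) (ht1 : IsPseudoreflection t) (hu1 : IsPseudoreflection u)
    (hst : ¬ Commute s t) (hsu : ¬ Commute s u) :
    p ∣ finrank F (rootSpace s ⊔ rootSpace t ⊔ rootSpace u : Submodule F V) := by
  have hsup : ⨆ c ∈ ({s, t, u} : Set (V ≃ₗ[F] V)), rootSpace c =
      rootSpace s ⊔ rootSpace t ⊔ rootSpace u := by
    rw [iSup_insert, iSup_pair, sup_assoc]
  rw [← hsup]
  by_contra hdvd
  obtain ⟨c, hc, hcomm⟩ := exists_forall_commute hS hp (natCard_modEq_one hS hp hs hs1)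
    (by rintro _ (rfl | rfl | rfl) <;> assumption)
    (by rintro _ (rfl | rfl | rfl) <;> assumption) hdvd
  obtain rfl | rfl | rfl := hc
  · exact hst (hcomm t (by simp)).symm
  · exact hst (hcomm s (by simp))
  · exact hsu (hcomm s (by simp))

theorem commute_of_isPGroup_of_ne_two [Finite F] [FiniteDimensional F V] (hS : IsPGroup p S)
    (hp : (p : F) ≠ 0) (hp2 : p ≠ 2) {s t : V ≃ₗ[F] V} (hs : s ∈ S) (ht : t ∈ S)
    (hs1 : IsPseudoreflection s) (ht1 : IsPseudoreflection t) : Commute s t := by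
  by_contra hst
  have hdvd := dvd_finrank_of_not_commute hS hp hs ht ht hs1 ht1 ht1 hst hst
  rw [sup_assoc, sup_idem] at hdvd
  have hle := Submodule.finrank_add_le_finrank_add_finrank (rootSpace s) (rootSpace t)
  have hpos := Submodule.finrank_mono (le_sup_left : rootSpace s ≤ rootSpace s ⊔ rootSpace t)
  rw [hs1] at hle hpos
  rw [ht1] at hle
  have := Nat.le_of_dvd hpos hdvd
  have := (Fact.out : p.Prime).two_le
  omega

theorem rootSpace_le_sup_of_not_commute [Finite F] [FiniteDimensional F V]
    {S : Subgroup (V ≃ₗ[F] V)} [Finite S] (hS : IsPGroup 2 S) (h2 : (2 : F) ≠ 0)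
    {s t u : V ≃ₗ[F] V} (hs : s ∈ S) (ht : t ∈ S) (hu : u ∈ S)
    (hs1 : IsPseudoreflection s) (ht1 : IsPseudoreflection t) (hu1 : IsPseudoreflection u)
    (hst : ¬ Commute s t) (hsu : ¬ Commute s u) :
    rootSpace u ≤ rootSpace s ⊔ rootSpace t := by
  have hdvd := dvd_finrank_of_not_commute hS h2 hs ht ht hs1 ht1 ht1 hst hst
  have hdvd' := dvd_finrank_of_not_commute hS h2 hs ht hu hs1 ht1 hu1 hst hsu
  rw [sup_assoc, sup_idem] at hdvd
  have hpos := Submodule.finrank_mono (le_sup_left : rootSpace s ≤ rootSpace s ⊔ rootSpace t)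
  have hle := Submodule.finrank_add_le_finrank_add_finrank (rootSpace s) (rootSpace t)
  have hle' :=
    Submodule.finrank_add_le_finrank_add_finrank (rootSpace s ⊔ rootSpace t) (rootSpace u)
  rw [hs1] at hle hpos
  rw [ht1] at hle
  rw [hu1] at hle'
  have heq := Submodule.eq_of_le_of_finrank_le
    (le_sup_left : rootSpace s ⊔ rootSpace t ≤ rootSpace s ⊔ rootSpace t ⊔ rootSpace u) (by omega)
  exact le_sup_right.trans heq.ge

theorem exists_rootSpace_eq_or_not_commute [FiniteDimensional F V] (hS : IsPGroup p S)
    (hp : (p : F) ≠ 0) {u : V ≃ₗ[F] V} (hu : u ∈ S) (hu1 : IsPseudoreflection u)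
    {B : Set (V ≃ₗ[F] V)} (hB : ∀ s ∈ B, IsPseudoreflection s)
    (huB : rootSpace u ≤ ⨆ s ∈ B, rootSpace s) :
    ∃ s ∈ B, rootSpace u = rootSpace s ∨ ¬ Commute s u := by
  by_contra! hcon
  have hfix : rootSpace u ≤ LinearMap.eqLocus (u : V →ₗ[F] V) LinearMap.id := by
    refine huB.trans (iSup₂_le fun s hs x hx ↦ ?_)
    obtain ⟨hne, hcomm⟩ := hcon s hs
    have husu : u • rootSpace s = rootSpace s := by
      rw [← rootSpace_conj, ← hcomm.eq, mul_inv_cancel_right]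
    refine (le_rootSpace_or_forall_apply_eq (hB s hs) husu).resolve_left (fun hle ↦ hne ?_) x hx
    exact (Submodule.eq_of_le_of_finrank_eq hle ((hB s hs).trans hu1.symm)).symm
  obtain ⟨⟨x, hx⟩, hx0, -⟩ := finrank_eq_one_iff'.mp hu1
  exact hx0 (Subtype.ext (eq_zero_of_mem_rootSpace hS hp hu hx (hfix hx)))

theorem ncard_setOf_rootSpace_eq_le [Finite F] [FiniteDimensional F V] (hS : IsPGroup p S)
    (hp : (p : F) ≠ 0) {L : Submodule F V} (hL : finrank F L = 1) :
    {u | u ∈ S ∧ rootSpace u = L}.ncard ≤ Nat.card F := by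
  have := Module.finite_of_finite F (M := V)
  obtain ⟨⟨w, hw⟩, -, hspan⟩ := finrank_eq_one_iff'.mp hL
  calc {u | u ∈ S ∧ rootSpace u = L}.ncard ≤ (L : Set V).ncard := by
        refine Set.ncard_le_ncard_of_injOn (fun u ↦ u w) ?_ ?_ (Set.toFinite _)
        · rintro u ⟨-, rfl⟩
          simpa using (rootSpace u).add_mem (sub_mem_rootSpace u w) hw
        · rintro u ⟨hu, huL⟩ v ⟨hv, hvL⟩ huv
          refine eq_of_rootSpace_le_of_eqOn hS hp hu hv huL.le hvL.le fun x hx ↦ ?_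
          obtain ⟨c, hc⟩ := hspan ⟨x, hx⟩
          obtain rfl : c • w = x := congrArg Subtype.val hc
          simpa only [map_smul] using congrArg (c • ·) huv
    _ = Nat.card F := (Module.natCard_eq_pow_finrank (K := F) (V := L)).trans (by rw [hL, pow_one])

theorem apply_eq_neg_of_mul_self_eq_one {u : V ≃ₗ[F] V} (hu : u * u = 1) {x : V}
    (hx : x ∈ rootSpace u) : u x = -x := by
  obtain ⟨y, rfl⟩ := mem_rootSpace.mp hx
  have : u (u y) = y := DFunLike.congr_fun hu y
  rw [map_sub, this, neg_sub]

theorem ncard_setOf_rootSpace_le_le [Finite F] [FiniteDimensional F V] {S : Subgroup (V ≃ₗ[F] V)}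
    [Finite S] (hS : IsPGroup 2 S) (h2 : (2 : F) ≠ 0) {U : Submodule F V} (hU : finrank F U ≤ 2) :
    {u | u ∈ S ∧ u * u = 1 ∧ IsPseudoreflection u ∧ rootSpace u ≤ U}.ncard ≤ Nat.card F + 1 := by
  have := Module.finite_of_finite F (M := V)
  have h2' : ((2 : ℕ) : F) ≠ 0 := by exact_mod_cast h2
  calc _ ≤ {L : Submodule F V | L ≤ U ∧ finrank F L = 1}.ncard := by
        refine Set.ncard_le_ncard_of_injOn rootSpace (fun u hu ↦ ⟨hu.2.2.2, hu.2.2.1⟩) ?_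
          (Set.toFinite _)
        rintro u ⟨hu, huu, -⟩ v ⟨hv, hvv, -⟩ huv
        refine eq_of_rootSpace_le_of_eqOn hS h2' hu hv le_rfl huv.ge fun x hx ↦ ?_
        rw [apply_eq_neg_of_mul_self_eq_one huu hx,
          apply_eq_neg_of_mul_self_eq_one hvv (huv ▸ hx : x ∈ rootSpace v)]
    _ = ∑ i ∈ Finset.range (finrank F U), Nat.card F ^ i := natCard_lines U
    _ ≤ ∑ i ∈ Finset.range 2, Nat.card F ^ i :=
        Finset.sum_le_sum_of_subset (Finset.range_subset_range.mpr hU)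
    _ = Nat.card F + 1 := by simp [Finset.sum_range_succ, add_comm]

theorem ncard_setOf_rootSpace_eq_or_not_commute_le [Finite F] [FiniteDimensional F V]
    (hS : IsPGroup p S) (hp : (p : F) ≠ 0) {s : V ≃ₗ[F] V} (hs : s ∈ S)
    (hs1 : IsPseudoreflection s) :
    {u | u ∈ S ∧ u ^ p = 1 ∧ IsPseudoreflection u ∧
      (rootSpace u = rootSpace s ∨ ¬ Commute s u)}.ncard ≤ Nat.card F + 1 := by
  have := Module.finite_of_finite F (M := V)
  have hfin (P : (V ≃ₗ[F] V) → Prop) : {u | u ∈ S ∧ P u}.Finite :=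
    (Set.toFinite (S : Set (V ≃ₗ[F] V))).subset fun u hu ↦ hu.1
  obtain rfl | hp2 := eq_or_ne p 2
  · obtain ⟨U, hU, hsU⟩ : ∃ U : Submodule F V, finrank F U ≤ 2 ∧ ∀ u ∈ S, IsPseudoreflection u →
        rootSpace u = rootSpace s ∨ ¬ Commute s u → rootSpace u ≤ U := by
      by_cases! hcomm : ∀ t ∈ S, IsPseudoreflection t → Commute s t
      · refine ⟨rootSpace s, hs1.le.trans one_le_two, fun u hu hu1 h ↦ ?_⟩
        exact (h.resolve_right (not_not.mpr (hcomm u hu hu1))).le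
      · obtain ⟨t, ht, ht1, hst⟩ := hcomm
        refine ⟨rootSpace s ⊔ rootSpace t, ?_, fun u hu hu1 h ↦ h.elim (fun h ↦ h ▸ le_sup_left)
          (rootSpace_le_sup_of_not_commute hS (by exact_mod_cast hp) hs ht hu hs1 ht1 hu1 hst)⟩
        exact (Submodule.finrank_add_le_finrank_add_finrank _ _).trans (add_le_add hs1.le ht1.le)
    refine (Set.ncard_le_ncard ?_ (hfin _)).trans
      (ncard_setOf_rootSpace_le_le hS (by exact_mod_cast hp) hU)
    exact fun u ⟨hu, hu2, hu1, h⟩ ↦ ⟨hu, pow_two u ▸ hu2, hu1, hsU u hu hu1 h⟩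
  · refine (Set.ncard_le_ncard ?_ (hfin _)).trans
      ((ncard_setOf_rootSpace_eq_le hS hp hs1).trans (Nat.le_succ _))
    exact fun u ⟨hu, _, hu1, h⟩ ↦ ⟨hu, h.resolve_right
      (not_not.mpr (commute_of_isPGroup_of_ne_two hS hp hp2 hs hu hs1 hu1))⟩

theorem ncard_setOf_isPseudoreflection_le [Finite F] [FiniteDimensional F V] (hS : IsPGroup p S)
    (hp : (p : F) ≠ 0) :
    {u | u ∈ S ∧ u ^ p = 1 ∧ IsPseudoreflection u}.ncard ≤ finrank F V * (Nat.card F + 1) := by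
  obtain ⟨B, hB, hBfin, hBcard, hspan⟩ := exists_subset_ncard_le_forall_rootSpace_le
    (R := {u | u ∈ S ∧ u ^ p = 1 ∧ IsPseudoreflection u}) fun u hu ↦ hu.2.2
  let N (s : V ≃ₗ[F] V) : Set (V ≃ₗ[F] V) := {u | u ∈ S ∧ u ^ p = 1 ∧ IsPseudoreflection u ∧
    (rootSpace u = rootSpace s ∨ ¬ Commute s u)}
  have hcover : {u | u ∈ S ∧ u ^ p = 1 ∧ IsPseudoreflection u} ⊆ ⋃ s ∈ hBfin.toFinset, N s := by
    intro u hu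
    obtain ⟨s, hs, h⟩ := exists_rootSpace_eq_or_not_commute hS hp hu.1 hu.2.2
      (fun s hs ↦ (hB hs).2.2) (hspan u hu)
    exact Set.mem_biUnion (hBfin.mem_toFinset.mpr hs) ⟨hu.1, hu.2.1, hu.2.2, h⟩
  have hfin : (⋃ s ∈ hBfin.toFinset, N s).Finite :=
    (Set.toFinite (S : Set (V ≃ₗ[F] V))).subset (Set.iUnion₂_subset fun s _ u hu ↦ hu.1)
  calc _ ≤ (⋃ s ∈ hBfin.toFinset, N s).ncard := Set.ncard_le_ncard hcover hfin
    _ ≤ ∑ s ∈ hBfin.toFinset, (N s).ncard := Finset.set_ncard_biUnion_le _ _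
    _ ≤ ∑ s ∈ hBfin.toFinset, (Nat.card F + 1) := Finset.sum_le_sum fun s hs ↦ by
        have hsB := hB (hBfin.mem_toFinset.mp hs)
        exact ncard_setOf_rootSpace_eq_or_not_commute_le hS hp hsB.1 hsB.2.2
    _ ≤ finrank F V * (Nat.card F + 1) := by
        rw [Finset.sum_const, smul_eq_mul, ← Set.ncard_eq_toFinset_card _ hBfin]
        gcongr

end PGroup

end Pseudoreflection

section Order

open Finset

theorem prod_pow_sub_pow (q n : ℕ) :
    ∏ i : Fin n, (q ^ n - q ^ (i : ℕ)) = q ^ n.choose 2 * ∏ i ∈ range n, (q ^ (i + 1) - 1) := by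
  have hterm : ∀ i ∈ range n, q ^ n - q ^ i = q ^ i * (q ^ (n - 1 - i + 1) - 1) := fun i hi ↦ by
    have hi' := mem_range.mp hi
    rw [Nat.mul_sub, ← pow_add, mul_one, show i + (n - 1 - i + 1) = n by lia]
  rw [Fin.prod_univ_eq_prod_range (fun i ↦ q ^ n - q ^ i) n, prod_congr rfl hterm,
    prod_mul_distrib, prod_pow_eq_pow_sum, sum_range_id, ← Nat.choose_two_right,
    prod_range_reflect (fun i ↦ q ^ (i + 1) - 1) n]

theorem pow_sum_le_two_mul_prod {q : ℕ} (hq : 2 ≤ q) (m : ℕ) :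
    q ^ (∑ i ∈ range m, (i + 2)) ≤ 2 * ∏ i ∈ range m, (q ^ (i + 2) - 1) := by
  have hstrong : (2 ^ m + 1) * q ^ (∑ i ∈ range m, (i + 2)) ≤
      2 ^ m * (2 * ∏ i ∈ range m, (q ^ (i + 2) - 1)) := by
    induction m with
    | zero => simp
    | succ m ih =>
      have hfactor : (2 ^ (m + 1) + 1) * q ^ (m + 2) ≤
          (2 * (2 ^ m + 1)) * (q ^ (m + 2) - 1) := by
        obtain ⟨t, ht⟩ := Nat.exists_eq_add_of_lt (Nat.one_lt_pow (by lia : m + 2 ≠ 0) hq)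
        have hpow := Nat.pow_le_pow_left hq (m + 2)
        rw [pow_add 2] at hpow
        rw [ht] at hpow ⊢
        rw [Nat.add_sub_cancel, pow_succ]
        linarith [Nat.one_le_two_pow (n := m)]
      rw [sum_range_succ, prod_range_succ, pow_add]
      calc _ = q ^ (∑ i ∈ range m, (i + 2)) * ((2 ^ (m + 1) + 1) * q ^ (m + 2)) := by ring
        _ ≤ q ^ (∑ i ∈ range m, (i + 2)) * ((2 * (2 ^ m + 1)) * (q ^ (m + 2) - 1)) := by gcongr
        _ = 2 * (q ^ (m + 2) - 1) * ((2 ^ m + 1) * q ^ (∑ i ∈ range m, (i + 2))) := by ring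
        _ ≤ 2 * (q ^ (m + 2) - 1) * (2 ^ m * (2 * ∏ i ∈ range m, (q ^ (i + 2) - 1))) := by gcongr
        _ = _ := by ring
  refine Nat.le_of_mul_le_mul_left (le_trans ?_ hstrong) (Nat.two_pow_pos m)
  gcongr
  exact Nat.le_succ _

variable (F : Type*) [Field F] (n : ℕ)

theorem natCard_center_specialLinearGroup_le [NeZero n] :
    Nat.card (Subgroup.center (SpecialLinearGroup (Fin n) F)) ≤ n := by
  rw [Nat.card_congr SpecialLinearGroup.center_equiv_rootsOfUnity.toEquiv,
    Fintype.card_fin, max_eq_left NeZero.one_le]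
  exact card_rootsOfUnity F n

theorem natCard_projectiveSpecialLinearGroup_mul :
    Nat.card (ProjectiveSpecialLinearGroup (Fin n) F) *
      Nat.card (Subgroup.center (SpecialLinearGroup (Fin n) F)) =
      Nat.card (SpecialLinearGroup (Fin n) F) :=
  (Subgroup.card_eq_card_quotient_mul_card_subgroup _).symm

variable [Finite F]

theorem natCard_specialLinearGroup :
    Nat.card (SpecialLinearGroup (Fin n) F) =
      Nat.card F ^ n.choose 2 * ∏ i ∈ range (n - 1), (Nat.card F ^ (i + 2) - 1) := by
  have := Fintype.ofFinite F
  obtain _ | n := n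
  · simp
  have hker : (GeneralLinearGroup.det (n := Fin (n + 1)) (R := F)).ker =
      (SpecialLinearGroup.toGL (n := Fin (n + 1)) (R := F)).range :=
    SetLike.coe_injective SpecialLinearGroup.range_toGL.symm
  have hGL : Nat.card (GL (Fin (n + 1)) F) =
      Nat.card (SpecialLinearGroup (Fin (n + 1)) F) * (Nat.card F - 1) := by
    rw [← Subgroup.card_top, ← Subgroup.comap_top GeneralLinearGroup.det,
      natCard_comap_of_surjective GeneralLinearGroup.det_surjective, hker,
      Subgroup.card_top, Nat.card_units, ← Nat.card_congr
        (MonoidHom.ofInjective SpecialLinearGroup.toGL_injective).toEquiv]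
  have hq : 0 < Nat.card F - 1 := Nat.sub_pos_of_lt Finite.one_lt_card
  refine Nat.eq_of_mul_eq_mul_right hq ?_
  rw [← hGL, card_GL_field, prod_pow_sub_pow, prod_range_succ', Fintype.card_eq_nat_card]
  simp [mul_assoc]

theorem pow_sq_le_mul_natCard_specialLinearGroup :
    Nat.card F ^ n ^ 2 ≤ 2 * Nat.card F * Nat.card (SpecialLinearGroup (Fin n) F) := by
  obtain _ | m := n
  · have hq : 0 < Nat.card F := Nat.card_pos
    simpa using (by lia : 1 ≤ 2 * Nat.card F)
  have hexp : (m + 1) ^ 2 = 1 + ((m + 1).choose 2 + ∑ i ∈ range m, (i + 2)) := by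
    have hsum : ∑ i ∈ range m, (i + 2) = m.choose 2 + m * 2 := by
      rw [sum_add_distrib, sum_range_id, ← Nat.choose_two_right]
      simp
    rw [hsum, Nat.choose_succ_succ' m 1, Nat.choose_one_right, Nat.choose_two_right]
    obtain ⟨c, hc⟩ := (Nat.even_mul_pred_self m).two_dvd
    rw [hc]
    obtain _ | m := m
    · lia
    simp only [Nat.add_sub_cancel] at hc
    grind
  rw [natCard_specialLinearGroup, hexp, pow_add, pow_add, pow_one]
  calc _ ≤ Nat.card F * (Nat.card F ^ (m + 1).choose 2 *
        (2 * ∏ i ∈ range m, (Nat.card F ^ (i + 2) - 1))) := by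
        gcongr
        exact pow_sum_le_two_mul_prod Finite.one_lt_card m
    _ = _ := by
      rw [Nat.add_sub_cancel]
      ring

theorem natCard_specialLinearGroup_le :
    Nat.card (SpecialLinearGroup (Fin n) F) ≤ Nat.card F ^ n ^ 2 := by
  refine (Nat.card_le_card_of_injective _ Subtype.val_injective).trans_eq ?_
  rw [Module.natCard_eq_pow_finrank (K := F), Module.finrank_matrix]
  simp [sq]

theorem natCard_projectiveSpecialLinearGroup_le :
    Nat.card (ProjectiveSpecialLinearGroup (Fin n) F) ≤ Nat.card F ^ n ^ 2 :=
  (Nat.card_le_card_of_surjective _ QuotientGroup.mk_surjective).trans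
    (natCard_specialLinearGroup_le F n)

theorem pow_sq_le_mul_natCard_projectiveSpecialLinearGroup [NeZero n] :
    Nat.card F ^ n ^ 2 ≤
      2 * n * Nat.card F * Nat.card (ProjectiveSpecialLinearGroup (Fin n) F) := by
  calc _ ≤ 2 * Nat.card F * (Nat.card (ProjectiveSpecialLinearGroup (Fin n) F) * n) := by
        refine (pow_sq_le_mul_natCard_specialLinearGroup F n).trans ?_
        rw [← natCard_projectiveSpecialLinearGroup_mul]
        gcongr
        exact natCard_center_specialLinearGroup_le F n
    _ = _ := by ring

end Order

section OrdProj

open Finset Nat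

theorem ordProj_prod (p : ℕ) {ι : Type*} {s : Finset ι} {f : ι → ℕ} (hf : ∀ i ∈ s, f i ≠ 0) :
    ordProj[p] (∏ i ∈ s, f i) = ∏ i ∈ s, ordProj[p] (f i) := by
  rw [Nat.factorization_prod hf, Finsupp.finsetSum_apply, prod_pow_eq_pow_sum]

variable {p : ℕ} [Fact p.Prime]

theorem ordProj_factorial_le (m : ℕ) : ordProj[p] m ! ≤ 2 ^ m := by
  have hp : p.Prime := Fact.out
  rw [Nat.factorization_def _ hp]
  calc p ^ padicValNat p m ! ≤ (2 ^ (p - 1)) ^ padicValNat p m ! := by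
        gcongr
        have := Nat.lt_two_pow_self (n := p - 1)
        lia
    _ = 2 ^ (m - (p.digits m).sum) := by rw [← pow_mul, sub_one_mul_padicValNat_factorial]
    _ ≤ 2 ^ m := by gcongr <;> lia

theorem ordProj_pow_sub_one (hp : p ≠ 2) {x n : ℕ} (hx : 1 < x) (hpx : p ∣ x - 1) (hn : n ≠ 0) :
    ordProj[p] (x ^ n - 1) = ordProj[p] (x - 1) * ordProj[p] n := by
  have hprime : p.Prime := Fact.out
  have hndvd : ¬ p ∣ x := fun h ↦
    hprime.one_lt.ne' (Nat.dvd_one.mp ((Nat.dvd_sub_iff_right hx.le h).mp hpx))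
  have := padicValNat.pow_sub_pow (hprime.odd_of_ne_two hp) hx hpx hndvd hn
  rw [one_pow] at this
  simp only [Nat.factorization_def _ hprime, this, pow_add]

theorem ordProj_two_pow_two_mul_sub_one {x j : ℕ} (hx : 1 < x) (hodd : Odd x) (hj : j ≠ 0) :
    ordProj[2] (x ^ (2 * j) - 1) = ordProj[2] (x - 1) * (ordProj[2] (x + 1) * ordProj[2] j) := by
  have h := padicValNat.pow_two_sub_one (n := 2 * j) hx hodd.not_two_dvd_nat (by lia) ⟨j, by lia⟩
  rw [padicValNat.mul two_ne_zero hj, padicValNat_self] at h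
  simp only [Nat.factorization_def _ prime_two, ← pow_add]
  congr 1
  lia

theorem ordProj_two_pow_sub_one_of_odd {x n : ℕ} (hx : Odd x) (hn : Odd n) :
    ordProj[2] (x ^ n - 1) = ordProj[2] (x - 1) := by
  obtain rfl | hx1 := Nat.eq_or_lt_of_le hx.pos
  · simp
  have hodd : Odd (∑ i ∈ range n, x ^ i) := by
    rw [odd_sum_iff_odd_card_odd, filter_true_of_mem fun i _ ↦ hx.pow, card_range]
    exact hn
  rw [← geom_sum_mul_of_one_le hx.pos, Nat.ordProj_mul 2 hodd.pos.ne' (by lia),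
    Nat.factorization_eq_zero_of_not_dvd hodd.not_two_dvd_nat, pow_zero, one_mul]

theorem prod_range_le_two_mul_pow_div {d Y : ℕ} {g : ℕ → ℕ}
    (hdvd : ∀ j ≠ 0, g (d * j) = Y * ordProj[p] j) (hndvd : ∀ i, ¬ d ∣ i → g i = 1) (n : ℕ) :
    ∏ i ∈ range n, g (i + 1) ≤ (2 * Y) ^ (n / d) := by
  have heq : ∏ i ∈ range n, g (i + 1) = Y ^ (n / d) * ordProj[p] (n / d)! := by
    induction n with
    | zero => simp
    | succ n ih =>
      rw [prod_range_succ, ih, Nat.succ_div]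
      split_ifs with h
      · have hn : n + 1 = d * (n / d + 1) := by
          rw [← Nat.succ_div_of_dvd h, Nat.mul_div_cancel' h]
        rw [hn, hdvd _ (by lia), factorial_succ, Nat.ordProj_mul p (by lia) (factorial_ne_zero _)]
        ring
      · rw [hndvd _ h, mul_one, add_zero]
  rw [heq, mul_pow, mul_comm]
  exact Nat.mul_le_mul_right _ (ordProj_factorial_le _)

variable {q : ℕ}

theorem ordProj_sub_one_mul_ordProj_prod (hq : 2 ≤ q) (p m : ℕ) :
    ordProj[p] (q - 1) * ordProj[p] (∏ i ∈ range m, (q ^ (i + 2) - 1)) =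
      ∏ i ∈ range (m + 1), ordProj[p] (q ^ (i + 1) - 1) := by
  have hne (i : ℕ) : q ^ (i + 1) - 1 ≠ 0 := by
    have := Nat.one_lt_pow (n := i + 1) (by lia) hq
    lia
  rw [ordProj_prod p fun i _ ↦ hne (i + 1), prod_range_succ', zero_add, pow_one, mul_comm]

theorem ordProj_prod_le_of_dvd_sub_one (hq : 2 ≤ q) (hp : p ≠ 2) (hpq : p ∣ q - 1) (m : ℕ) :
    ordProj[p] (∏ i ∈ range m, (q ^ (i + 2) - 1)) ≤ 2 ^ (m + 1) * q ^ m := by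
  have h := prod_range_le_two_mul_pow_div (p := p) (d := 1) (Y := ordProj[p] (q - 1))
    (g := fun i ↦ ordProj[p] (q ^ i - 1))
    (fun j hj ↦ by rw [one_mul, ordProj_pow_sub_one hp hq hpq hj]) (fun i hi ↦ by simp at hi)
    (m + 1)
  rw [← ordProj_sub_one_mul_ordProj_prod hq, Nat.div_one] at h
  refine Nat.le_of_mul_le_mul_left (h.trans ?_) (Nat.ordProj_pos (q - 1) p)
  calc (2 * ordProj[p] (q - 1)) ^ (m + 1)
      = ordProj[p] (q - 1) * (2 ^ (m + 1) * ordProj[p] (q - 1) ^ m) := by ring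
    _ ≤ ordProj[p] (q - 1) * (2 ^ (m + 1) * q ^ m) := by
      gcongr
      exact (Nat.ordProj_le p (by lia)).trans (Nat.sub_le q 1)

theorem ordProj_two_sub_one_eq_two_or (hodd : Odd q) :
    ordProj[2] (q - 1) = 2 ∨ ordProj[2] (q + 1) = 2 := by
  have htwo {a : ℕ} (ha : Odd a) : ordProj[2] (2 * a) = 2 := by
    rw [Nat.ordProj_mul 2 two_ne_zero ha.pos.ne', Nat.factorization_eq_zero_of_not_dvd
      ha.not_two_dvd_nat, pow_zero, mul_one, prime_two.factorization_self, pow_one]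
  obtain ⟨k, rfl⟩ := hodd
  obtain hk | hk := Nat.even_or_odd k
  · exact .inr (htwo hk.add_one)
  · exact .inl (htwo hk)

theorem prod_ordProj_two_le (hodd : Odd q) (hq : 2 ≤ q) (n : ℕ) :
    ∏ i ∈ range n, ordProj[2] (q ^ (i + 1) - 1) ≤
      ordProj[2] (q - 1) ^ n * (2 * ordProj[2] (q + 1)) ^ (n / 2) := by
  have h := prod_range_le_two_mul_pow_div (p := 2) (d := 2) (Y := ordProj[2] (q + 1))
    (g := fun i ↦ if 2 ∣ i then ordProj[2] (q + 1) * ordProj[2] (i / 2) else 1)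
    (fun j _ ↦ by simp) (fun i hi ↦ if_neg hi) n
  refine le_of_eq_of_le ?_ (Nat.mul_le_mul_left _ h)
  conv_rhs => enter [1]; rw [← card_range n, ← prod_const]
  rw [← prod_mul_distrib]
  refine prod_congr rfl fun i _ ↦ ?_
  split_ifs with hi
  · obtain ⟨j, hj⟩ := hi
    rw [hj, ordProj_two_pow_two_mul_sub_one hq hodd (by lia), Nat.mul_div_cancel_left _ two_pos]
  · rw [mul_one, ordProj_two_pow_sub_one_of_odd hodd (by grind)]

theorem ordProj_two_prod_le (hodd : Odd q) (hq : 2 ≤ q) (m : ℕ) :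
    ordProj[2] (∏ i ∈ range m, (q ^ (i + 2) - 1)) ≤ 2 * 2 ^ (m + 1) * q ^ m := by
  have hprod := prod_ordProj_two_le hodd hq (m + 1)
  have hα : ordProj[2] (q - 1) ≤ q - 1 := Nat.ordProj_le 2 (by lia)
  have hβ : ordProj[2] (q + 1) ≤ q + 1 := Nat.ordProj_le 2 (by lia)
  have htwo := ordProj_two_sub_one_eq_two_or hodd
  rw [← ordProj_sub_one_mul_ordProj_prod hq] at hprod
  refine Nat.le_of_mul_le_mul_left (hprod.trans ?_) (Nat.ordProj_pos (q - 1) 2)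
  rw [_root_.pow_succ', mul_assoc]
  gcongr ordProj[2] (q - 1) * ?_
  generalize ordProj[2] (q - 1) = α at *
  generalize ordProj[2] (q + 1) = β at *
  have hαβ : 2 * (α * β) ≤ 4 * (2 * q) ∧ 2 * (α ^ 2 * β) ≤ (2 * q) ^ 2 := by
    obtain ⟨t, rfl⟩ := Nat.exists_eq_add_of_le (show 3 ≤ q by grind)
    have hα' : α ≤ t + 2 := by lia
    obtain rfl | rfl := htwo <;> constructor <;> nlinarith
  rw [show 2 * 2 ^ (m + 1) * q ^ m = 4 * (2 * q) ^ m by ring]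
  obtain ⟨k, rfl | rfl⟩ := Nat.even_or_odd' m
  · rw [show (2 * k + 1) / 2 = k by lia]
    calc α ^ (2 * k) * (2 * β) ^ k = (2 * (α ^ 2 * β)) ^ k := by rw [pow_mul]; ring
      _ ≤ ((2 * q) ^ 2) ^ k := Nat.pow_le_pow_left hαβ.2 k
      _ = (2 * q) ^ (2 * k) := (pow_mul _ _ _).symm
      _ ≤ 4 * (2 * q) ^ (2 * k) := Nat.le_mul_of_pos_left _ (by simp)
  · rw [show (2 * k + 1 + 1) / 2 = k + 1 by lia]
    calc α ^ (2 * k + 1) * (2 * β) ^ (k + 1) = (2 * (α ^ 2 * β)) ^ k * (2 * (α * β)) := by ring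
      _ ≤ ((2 * q) ^ 2) ^ k * (4 * (2 * q)) :=
        Nat.mul_le_mul (Nat.pow_le_pow_left hαβ.2 k) hαβ.1
      _ = 4 * (2 * q) ^ (2 * k + 1) := by rw [← pow_mul]; ring

theorem dvd_pow_sub_one_iff_orderOf_dvd (hq : 0 < q) {i : ℕ} :
    p ∣ q ^ i - 1 ↔ orderOf (q : ZMod p) ∣ i := by
  rw [orderOf_dvd_iff_pow_eq_one, ← ZMod.natCast_eq_zero_iff, Nat.cast_sub (Nat.one_le_pow _ _ hq),
    sub_eq_zero]
  simp

theorem ordProj_pow_sub_one_mul_sub_one_le (hq : 2 ≤ q) (hpq : ¬ p ∣ q - 1) {d : ℕ} (hd : d ≠ 0) :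
    ordProj[p] (q ^ d - 1) * (q - 1) ≤ q ^ d - 1 := by
  have hprime : p.Prime := Fact.out
  refine Nat.le_of_dvd (Nat.sub_pos_of_lt (Nat.one_lt_pow hd hq))
    (Nat.Coprime.mul_dvd_of_dvd_of_dvd ?_ (Nat.ordProj_dvd _ _) ?_)
  · exact (hprime.coprime_iff_not_dvd.mpr hpq).pow_left _
  · simpa using Nat.sub_dvd_pow_sub_pow q 1 d

theorem exists_ordProj_prod_le (hq : 2 ≤ q) (hp : p ≠ 2) (hpq : ¬ p ∣ q - 1) (hpq' : ¬ p ∣ q)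
    (m : ℕ) : ∃ k, 2 * k ≤ m + 1 ∧
      ordProj[p] (∏ i ∈ range m, (q ^ (i + 2) - 1)) ≤ 2 * 2 ^ k * q ^ m := by
  have hprime : p.Prime := Fact.out
  set d := orderOf (q : ZMod p)
  have hdvd (i : ℕ) : p ∣ q ^ i - 1 ↔ d ∣ i := dvd_pow_sub_one_iff_orderOf_dvd (by lia)
  have hd : d ≠ 0 := (orderOf_pos_iff.mpr (isOfFinOrder_iff_pow_eq_one.mpr ⟨p - 1,
    tsub_pos_of_lt hprime.one_lt, ZMod.pow_card_sub_one_eq_one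
      (by rwa [Ne, ZMod.natCast_eq_zero_iff])⟩)).ne'
  have hd₁ : d ≠ 1 := fun h ↦ hpq (by simpa using (hdvd 1).mpr h.dvd)
  set Y := ordProj[p] (q ^ d - 1)
  have hqd : 1 < q ^ d := Nat.one_lt_pow hd hq
  have hYq : Y * (q - 1) ≤ q ^ d - 1 := ordProj_pow_sub_one_mul_sub_one_le hq hpq hd
  have hY : Y ≤ q ^ d :=
    (Nat.le_mul_of_pos_right Y (by lia)).trans (hYq.trans (Nat.sub_le _ _))
  have hYq' : Y * q ≤ 2 * q ^ d := by
    calc Y * q ≤ Y * (2 * (q - 1)) := by gcongr; lia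
      _ = 2 * (Y * (q - 1)) := by ring
      _ ≤ 2 * q ^ d := by gcongr; lia
  have hprod := prod_range_le_two_mul_pow_div (p := p) (Y := Y)
    (g := fun i ↦ ordProj[p] (q ^ i - 1))
    (fun j hj ↦ by rw [pow_mul, ordProj_pow_sub_one hp hqd ((hdvd d).mpr dvd_rfl) hj])
    (fun i hi ↦ by
      rw [Nat.factorization_eq_zero_of_not_dvd (mt (hdvd i).mp hi), pow_zero]) (m + 1)
  rw [← ordProj_sub_one_mul_ordProj_prod hq, Nat.factorization_eq_zero_of_not_dvd hpq, pow_zero,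
    one_mul] at hprod
  have hdk := Nat.mul_div_le (m + 1) d
  refine ⟨(m + 1) / d, le_trans ?_ hdk, hprod.trans ?_⟩
  · exact Nat.mul_le_mul_right _ (by lia)
  · rw [mul_pow, mul_right_comm, mul_comm]
    gcongr
    generalize (m + 1) / d = k at hdk ⊢
    obtain _ | k := k
    · have := Nat.one_le_pow m q (by lia)
      lia
    refine Nat.le_of_mul_le_mul_right ?_ (show 0 < q by lia)
    calc Y ^ (k + 1) * q = Y ^ k * (Y * q) := by ring
      _ ≤ (q ^ d) ^ k * (2 * q ^ d) := by gcongr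
      _ = 2 * q ^ (d * (k + 1)) := by ring
      _ ≤ 2 * q ^ (m + 1) := by gcongr; lia
      _ = 2 * q ^ m * q := by ring

theorem ordProj_prod_le_min (hq : 2 ≤ q) (hpq : ¬ p ∣ q) (m : ℕ) :
    ((ordProj[p] (∏ i ∈ range m, (q ^ (i + 2) - 1)) : ℕ) : ℝ) ≤
      2 * min 2 (3 / 4 * (q : ℝ)) ^ (m + 1) * q ^ m := by
  have hprime : p.Prime := Fact.out
  by_cases hsub : p ∣ q - 1
  · have hq₃ : 3 ≤ q := by
      have := hprime.two_le.trans (Nat.le_of_dvd (by lia) hsub)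
      lia
    have hmin : min 2 (3 / 4 * (q : ℝ)) = 2 := min_eq_left (by
      have : (3 : ℝ) ≤ q := mod_cast hq₃
      linarith)
    have hle : ordProj[p] (∏ i ∈ range m, (q ^ (i + 2) - 1)) ≤ 2 * 2 ^ (m + 1) * q ^ m := by
      obtain rfl | hp := eq_or_ne p 2
      · exact ordProj_two_prod_le (Nat.odd_iff.mpr (by lia)) hq m
      · rw [mul_assoc]
        exact (ordProj_prod_le_of_dvd_sub_one hq hp hsub m).trans
          (Nat.le_mul_of_pos_left _ two_pos)
    rw [hmin]
    exact_mod_cast hle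
  · have hp : p ≠ 2 := by
      rintro rfl
      lia
    obtain ⟨k, hk, hle⟩ := exists_ordProj_prod_le hq hp hsub hpq m
    have hq' : (2 : ℝ) ≤ q := mod_cast hq
    have hb : (3 / 2 : ℝ) ≤ min 2 (3 / 4 * (q : ℝ)) := le_min (by norm_num) (by linarith)
    have htwo : (2 : ℝ) ^ k ≤ min 2 (3 / 4 * (q : ℝ)) ^ (m + 1) := by
      calc (2 : ℝ) ^ k ≤ ((3 / 2) ^ 2) ^ k := by gcongr; norm_num
        _ = (3 / 2) ^ (2 * k) := (pow_mul _ _ _).symm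
        _ ≤ (3 / 2) ^ (m + 1) := by gcongr; norm_num
        _ ≤ _ := by gcongr
    calc _ ≤ 2 * (2 : ℝ) ^ k * q ^ m := mod_cast hle
      _ ≤ _ := by gcongr

end OrdProj

section ProjectivePseudoreflection

open Module

section

variable {F V : Type*} [Field F] [AddCommGroup V] [Module F V] {u : V ≃ₗ[F] V} {p : ℕ} {a s : F}

theorem coe_pow_eq_smul_one_iff : (u : End F V) ^ p = s • 1 ↔ ∀ x, (u ^ p) x = s • x := by
  simp only [LinearMap.ext_iff, End.pow_apply, LinearEquiv.pow_apply]
  rfl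

/- If `u - a` has rank one, then `a` is an eigenvalue of `u`, hence `a ^ p = s`, and `a⁻¹ u` is the
required pseudoreflection. -/
theorem exists_units_isPseudoreflection [FiniteDimensional F V]
    (hu : (u : End F V) ^ p = s • 1) (hV : 2 ≤ finrank F V)
    (ha : finrank F (LinearMap.range ((u : End F V) - algebraMap F (End F V) a)) = 1) :
    ∃ c : Fˣ, (DistribMulAction.toModuleAut F V c * u) ^ p = 1 ∧
      IsPseudoreflection (DistribMulAction.toModuleAut F V c * u) := by
  have hdim := finrank_eigenspace_add_finrank_range (u : End F V) a
  obtain ⟨v, hv⟩ : ∃ v, End.HasEigenvector (u : End F V) a v := by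
    refine End.HasEigenvalue.exists_hasEigenvector fun h ↦ ?_
    rw [ha, End.eigenspace, h, finrank_bot] at hdim
    omega
  have ha0 : a ≠ 0 := by
    rintro rfl
    exact hv.2 ((LinearEquiv.map_eq_zero_iff u).mp (hv.apply_eq_smul.trans (zero_smul F v)))
  have hpow : a ^ p = s :=
    smul_left_injective F hv.2 ((hv.pow_apply p).symm.trans (LinearMap.congr_fun hu v))
  have hcoe : (DistribMulAction.toModuleAut F V (Units.mk0 a ha0)⁻¹ * u : V ≃ₗ[F] V) =
      a⁻¹ • (u : End F V) := rfl
  refine ⟨(Units.mk0 a ha0)⁻¹, LinearEquiv.ext fun x ↦ ?_, ?_⟩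
  · have hone : (a⁻¹ • (u : End F V)) ^ p = (1 : F) • 1 := by
      rw [smul_pow, hu, smul_smul, ← hpow, inv_pow, inv_mul_cancel₀ (pow_ne_zero p ha0)]
    exact (coe_pow_eq_smul_one_iff.mp hone x).trans (one_smul F x)
  · have hsub : a⁻¹ • (u : End F V) - 1 = a⁻¹ • ((u : End F V) - algebraMap F (End F V) a) := by
      rw [smul_sub, Algebra.algebraMap_eq_smul_one, smul_smul, inv_mul_cancel₀ ha0, one_smul]
    rw [IsPseudoreflection, rootSpace, hcoe, hsub, LinearMap.range_smul _ _ (inv_ne_zero ha0), ha]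

end

variable {ι F : Type*} [Fintype ι] [DecidableEq ι] [Field F]

/-- The homomorphism sending a unit `c` and a matrix `g` to the automorphism `x ↦ c • g x`, whose
image is the preimage of `PSL(ι, F)` in the general linear group. -/
noncomputable def smulToLin' : Fˣ × Matrix.SpecialLinearGroup ι F →* ((ι → F) ≃ₗ[F] (ι → F)) :=
  (DistribMulAction.toModuleAut F (ι → F)).noncommCoprod Matrix.SpecialLinearGroup.toLin'
    fun c g ↦ LinearEquiv.ext fun x ↦ (map_smul (Matrix.SpecialLinearGroup.toLin' g) (c : F) x).symm

theorem mem_center_specialLinearGroup_iff {g : Matrix.SpecialLinearGroup ι F} :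
    g ∈ Subgroup.center (Matrix.SpecialLinearGroup ι F) ↔
      ∃ a : F, ∀ x, Matrix.SpecialLinearGroup.toLin' g x = a • x := by
  constructor
  · intro hg
    obtain ⟨a, -, ha⟩ := Matrix.SpecialLinearGroup.mem_center_iff.mp hg
    refine ⟨a, fun x ↦ ?_⟩
    ext i
    simp [Matrix.SpecialLinearGroup.toLin'_apply, ← ha, Matrix.mulVec_diagonal]
  · rintro ⟨a, ha⟩
    refine Subgroup.mem_center_iff.mpr fun h ↦ Matrix.SpecialLinearGroup.toLin'_injective ?_
    ext1 x
    simp only [map_mul, LinearEquiv.mul_apply, ha, map_smul]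

theorem mk_eq_mk_of_smulToLin'_eq {a b : Fˣ × Matrix.SpecialLinearGroup ι F}
    (h : smulToLin' a = smulToLin' b) : (a.2 : ProjectiveSpecialLinearGroup ι F) = b.2 := by
  have hone : smulToLin' (a⁻¹ * b) = 1 := by rw [map_mul, map_inv, h, inv_mul_cancel]
  refine QuotientGroup.eq.mpr (mem_center_specialLinearGroup_iff.mpr
    ⟨((a⁻¹ * b).1⁻¹ : Fˣ), fun x ↦ ?_⟩)
  exact (eq_inv_smul_iff (g := (a⁻¹ * b).1)).mpr (LinearEquiv.congr_fun hone x)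

/-- An element of `PSL(ι, F)` is a projective pseudoreflection of exponent `p` if it is the image
of a pseudoreflection `x ↦ c • g x` whose `p`-th power is trivial. -/
def IsProjectivePseudoreflection (p : ℕ) (z : ProjectiveSpecialLinearGroup ι F) : Prop :=
  ∃ a : Fˣ × Matrix.SpecialLinearGroup ι F,
    a.2 = z ∧ smulToLin' a ^ p = 1 ∧ IsPseudoreflection (smulToLin' a)

theorem IsProjectivePseudoreflection.conj {p : ℕ} {z : ProjectiveSpecialLinearGroup ι F}
    (hz : IsProjectivePseudoreflection p z) (x : ProjectiveSpecialLinearGroup ι F) :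
    IsProjectivePseudoreflection p (x * z * x⁻¹) := by
  obtain ⟨a, rfl, hp, ha⟩ := hz
  obtain ⟨y, rfl⟩ := QuotientGroup.mk_surjective x
  refine ⟨(1, y) * a * (1, y)⁻¹, rfl, ?_, ?_⟩
  · rw [map_mul, map_mul, map_inv, conj_pow, hp, mul_one, mul_inv_cancel]
  · rw [map_mul, map_mul, map_inv]
    exact (isPseudoreflection_conj_iff _).mpr ha

variable [Finite F] {p : ℕ}

/- The scalars and the preimage of `P` generate a central extension of `P`, a nilpotent group. -/
theorem exists_isPGroup_forall_smulToLin'_mem [Fact p.Prime]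
    {P : Subgroup (ProjectiveSpecialLinearGroup ι F)} (hP : IsPGroup p P) :
    ∃ S : Subgroup ((ι → F) ≃ₗ[F] (ι → F)), IsPGroup p S ∧
      ∀ a : Fˣ × Matrix.SpecialLinearGroup ι F,
        (a.2 : ProjectiveSpecialLinearGroup ι F) ∈ P → smulToLin' a ^ p = 1 → smulToLin' a ∈ S := by
  let π : Fˣ × Matrix.SpecialLinearGroup ι F →* ProjectiveSpecialLinearGroup ι F :=
    (QuotientGroup.mk' _).comp (MonoidHom.snd _ _)
  have hker : (π.subgroupComap P).ker ≤ Subgroup.center (P.comap π) := by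
    rintro ⟨⟨c, g⟩, _⟩ h
    have hg : g ∈ Subgroup.center _ := (QuotientGroup.eq_one_iff g).mp (congrArg Subtype.val h)
    exact Subgroup.mem_center_iff.mpr fun b ↦
      Subtype.ext (Prod.ext (mul_comm _ _) (Subgroup.mem_center_iff.mp hg _))
  have := hP.isNilpotent
  have := Subgroup.isNilpotent_of_ker_le_center _ hker
  have : Finite ((ι → F) ≃ₗ[F] (ι → F)) := DFunLike.finite _
  have := Group.nilpotent_of_surjective _ (smulToLin'.subgroupMap_surjective (P.comap π))
  obtain ⟨S, hS, hmem⟩ := exists_isPGroup_forall_pow_eq_one_mem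
    (N := (P.comap π).map smulToLin') p
  refine ⟨S.map (Subgroup.subtype _), hS.map _, fun a ha hpow ↦ ?_⟩
  exact ⟨⟨_, a, ha, rfl⟩, hmem _ (Subtype.ext hpow), rfl⟩

theorem ncard_setOf_isProjectivePseudoreflection_le [Fact p.Prime]
    {P : Subgroup (ProjectiveSpecialLinearGroup ι F)} (hP : IsPGroup p P) (hp : (p : F) ≠ 0) :
    {z | z ∈ P ∧ IsProjectivePseudoreflection p z}.ncard ≤
      Fintype.card ι * (Nat.card F + 1) := by
  obtain ⟨S, hS, hmem⟩ := exists_isPGroup_forall_smulToLin'_mem hP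
  have : Finite ((ι → F) ≃ₗ[F] (ι → F)) := DFunLike.finite _
  choose! a ha hpow hrefl using
    fun z (hz : z ∈ {z | z ∈ P ∧ IsProjectivePseudoreflection p z}) ↦ hz.2
  calc _ ≤ {u | u ∈ S ∧ u ^ p = 1 ∧ IsPseudoreflection u}.ncard :=
      Set.ncard_le_ncard_of_injOn (fun z ↦ smulToLin' (a z))
        (fun z hz ↦ ⟨hmem _ ((ha z hz).symm ▸ hz.1) (hpow z hz), hpow z hz, hrefl z hz⟩)
        fun z hz w hw h ↦ (ha z hz).symm.trans ((mk_eq_mk_of_smulToLin'_eq h).trans (ha w hw))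
    _ ≤ _ := ncard_setOf_isPseudoreflection_le hS hp
    _ = _ := by rw [finrank_fintype_fun_eq_card]

theorem natCard_centralizer_mk_le (g : Matrix.SpecialLinearGroup ι F) :
    Nat.card (Subgroup.centralizer {(g : ProjectiveSpecialLinearGroup ι F)}) ≤ Nat.card F ^
      finrank F (Subalgebra.centralizer F
        {(Matrix.SpecialLinearGroup.toLin' g : End F (ι → F))}) := by
  have hmem : ∀ h : Subgroup.centralizer {g},
      (Matrix.SpecialLinearGroup.toLin' h.1 : End F (ι → F)) ∈ Subalgebra.centralizer F
        {(Matrix.SpecialLinearGroup.toLin' g : End F (ι → F))} := by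
    intro h
    refine (Subalgebra.mem_centralizer_iff F).mpr ?_
    rintro _ rfl
    have hcomm := congrArg (fun k ↦ (Matrix.SpecialLinearGroup.toLin' k : End F (ι → F)))
      (Subgroup.mem_centralizer_singleton_iff.mp h.2)
    simp only [map_mul] at hcomm
    exact hcomm.symm
  have := Module.finite_of_finite F (M := End F (ι → F))
  calc _ ≤ Nat.card (Subgroup.centralizer {g}) :=
      natCard_centralizer_map_le (QuotientGroup.mk'_surjective _) g
    _ ≤ _ := Nat.card_le_card_of_injective (fun h ↦ ⟨_, hmem h⟩) fun h h' e ↦ Subtype.ext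
      (Matrix.SpecialLinearGroup.toLin'_injective
        (LinearEquiv.toLinearMap_injective (congrArg Subtype.val e)))
    _ = _ := Module.natCard_eq_pow_finrank

theorem exists_natCard_centralizer_le {z : ProjectiveSpecialLinearGroup ι F}
    (hp : (p : F) ≠ 0) (hz : z ^ p = 1) (hz1 : z ≠ 1) (hι : 3 ≤ Fintype.card ι) :
    ∃ d, Nat.card (Subgroup.centralizer {z}) ≤ Nat.card F ^ d ∧
      (IsProjectivePseudoreflection p z ∧ d + 2 * Fintype.card ι ≤ Fintype.card ι ^ 2 + 2 ∨
        d + 2 * Fintype.card ι ≤ Fintype.card ι ^ 2 ∧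
          d + 4 * Fintype.card ι ≤ Fintype.card ι ^ 2 + 10) := by
  obtain ⟨g, rfl⟩ := QuotientGroup.mk_surjective z
  refine ⟨_, natCard_centralizer_mk_le g, ?_⟩
  have : Nontrivial (ι → F) :=
    Module.nontrivial_of_finrank_pos (R := F) (by rw [finrank_fintype_fun_eq_card]; omega)
  have hcenter : g ^ p ∈ Subgroup.center _ := (QuotientGroup.eq_one_iff _).mp hz
  obtain ⟨s, hs⟩ := mem_center_specialLinearGroup_iff.mp hcenter
  have hs0 : s ≠ 0 := by
    rintro rfl
    obtain ⟨x, hx⟩ := exists_ne (0 : ι → F)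
    exact hx ((LinearEquiv.map_eq_zero_iff _).mp ((hs x).trans (zero_smul F x)))
  have hpow := coe_pow_eq_smul_one_iff.mpr fun x ↦
    map_pow Matrix.SpecialLinearGroup.toLin' g p ▸ hs x
  have hscalar : ∀ a : F, (Matrix.SpecialLinearGroup.toLin' g : End F (ι → F)) ≠
      algebraMap F _ a := fun a ha ↦ hz1 ((QuotientGroup.eq_one_iff g).mpr
        (mem_center_specialLinearGroup_iff.mpr ⟨a, LinearMap.congr_fun ha⟩))
  have hdim := finrank_centralizer_add_le (isSemisimple_of_pow_eq_smul_one hp hs0 hpow) hscalar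
    (by rwa [finrank_fintype_fun_eq_card])
  rw [finrank_fintype_fun_eq_card] at hdim
  refine hdim.imp_left fun ⟨⟨a, ha⟩, hle⟩ ↦ ⟨?_, hle⟩
  obtain ⟨c, hc⟩ := exists_units_isPseudoreflection hpow
    (by rw [finrank_fintype_fun_eq_card]; omega) ha
  exact ⟨(c, g), rfl, hc⟩

end ProjectivePseudoreflection

section NumericalEstimates

variable {n q d : ℕ}

theorem mul_sq_mul_pow_le (hq : 2 ≤ q) (hn : 3 ≤ n) (hd : d + 2 * n ≤ n ^ 2 + 2) :
    ((n * (q + 1)) ^ 2 * q ^ d * (2 * n * q) * q : ℝ) ≤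
      26 * (n ^ 4 * (9 / 16) ^ n) * q ^ n ^ 2 := by
  obtain ⟨m, rfl⟩ : ∃ m, n = m + 3 := ⟨n - 3, by omega⟩
  have hq' : (2 : ℝ) ≤ q := mod_cast hq
  have hn' : (1 : ℝ) ≤ ((m + 3 : ℕ) : ℝ) := mod_cast (by omega)
  have hsq : ((q : ℝ) + 1) ^ 2 ≤ 9 / 4 * q ^ 2 := by nlinarith
  have hpow : (q : ℝ) ^ (d + 4) ≤ (9 / 16) ^ m * q ^ (m + 3) ^ 2 :=
    calc (q : ℝ) ^ (d + 4) ≤ q ^ (d + 4) * (9 / 16 * q ^ 2) ^ m :=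
          le_mul_of_one_le_right (by positivity) (one_le_pow₀ (by nlinarith))
      _ = (9 / 16) ^ m * q ^ (d + 4 + 2 * m) := by ring
      _ ≤ (9 / 16) ^ m * q ^ (m + 3) ^ 2 := by
          gcongr
          · linarith
          · omega
  calc (((m + 3 : ℕ) * (q + 1)) ^ 2 * q ^ d * (2 * (m + 3 : ℕ) * q) * q : ℝ)
      = 2 * (m + 3 : ℕ) ^ 3 * ((q + 1) ^ 2 * q ^ (d + 2)) := by ring
    _ ≤ 2 * (m + 3 : ℕ) ^ 4 * (9 / 4 * q ^ 2 * q ^ (d + 2)) := by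
        gcongr
        norm_num
    _ = 9 / 2 * (m + 3 : ℕ) ^ 4 * q ^ (d + 4) := by ring
    _ ≤ 9 / 2 * (m + 3 : ℕ) ^ 4 * ((9 / 16) ^ m * q ^ (m + 3) ^ 2) := by gcongr
    _ = 9 / 2 * (16 / 9) ^ 3 * ((m + 3 : ℕ) ^ 4 * (9 / 16) ^ (m + 3)) * q ^ (m + 3) ^ 2 := by ring
    _ ≤ 26 * ((m + 3 : ℕ) ^ 4 * (9 / 16) ^ (m + 3)) * q ^ (m + 3) ^ 2 := by
        gcongr
        norm_num

theorem min_pow_mul_pow_le (hq : 2 ≤ q) (hd : d + 2 * n ≤ n ^ 2) (hd' : d + 4 * n ≤ n ^ 2 + 10) :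
    min 2 (3 / 4 * (q : ℝ)) ^ (2 * n) * q ^ (d + 2 * n) ≤
      (64 / 9) ^ 5 * (9 / 16) ^ n * q ^ n ^ 2 := by
  have hq' : (1 : ℝ) ≤ q := mod_cast (by omega)
  have : 0 ≤ min 2 (3 / 4 * (q : ℝ)) := by positivity
  rw [pow_mul]
  obtain hn | ⟨m, rfl⟩ : n ≤ 5 ∨ ∃ m, n = m + 5 := by
    rcases le_total n 5 with hn | hn
    exacts [.inl hn, .inr ⟨n - 5, by omega⟩]
  · have hpow : (min 2 (3 / 4 * (q : ℝ)) ^ 2) ^ n ≤ (64 / 9) ^ 5 * (9 / 16) ^ n :=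
      calc (min 2 (3 / 4 * (q : ℝ)) ^ 2) ^ n ≤ (2 ^ 2) ^ n := by
            gcongr
            exact min_le_left _ _
        _ = (64 / 9) ^ n * (9 / 16) ^ n := by rw [← mul_pow]; norm_num
        _ ≤ (64 / 9) ^ 5 * (9 / 16) ^ n := by
            gcongr
            norm_num
    gcongr
  · calc (min 2 (3 / 4 * (q : ℝ)) ^ 2) ^ (m + 5) * q ^ (d + 2 * (m + 5))
        = (min 2 (3 / 4 * (q : ℝ)) ^ 2) ^ m * (min 2 (3 / 4 * (q : ℝ)) ^ 2) ^ 5 *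
            q ^ (d + 2 * (m + 5)) := by rw [pow_add]
      _ ≤ ((3 / 4 * (q : ℝ)) ^ 2) ^ m * (2 ^ 2) ^ 5 * q ^ (d + 2 * (m + 5)) := by
          gcongr
          exacts [min_le_right _ _, min_le_left _ _]
      _ = (64 / 9) ^ 5 * (9 / 16) ^ (m + 5) * q ^ (2 * m + d + 2 * (m + 5)) := by
          rw [mul_pow (3 / 4 : ℝ)]
          ring
      _ ≤ (64 / 9) ^ 5 * (9 / 16) ^ (m + 5) * q ^ (m + 5) ^ 2 := by
          gcongr
          omega

theorem mul_min_pow_sq_mul_pow_le (hq : 2 ≤ q) (hn : n ≠ 0) (hd : d + 2 * n ≤ n ^ 2)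
    (hd' : d + 4 * n ≤ n ^ 2 + 10) :
    ((2 * min 2 (3 / 4 * (q : ℝ)) ^ n * q ^ (n - 1)) ^ 2 * q ^ d * (2 * n * q) * q : ℝ) ≤
      8 * (64 / 9) ^ 5 * (n ^ 4 * (9 / 16) ^ n) * q ^ n ^ 2 := by
  have hq' : (q : ℝ) ^ (n - 1) * q = q ^ n := pow_sub_one_mul hn _
  have hn' : (n : ℝ) ≤ n ^ 4 := mod_cast Nat.le_self_pow (by norm_num) n
  calc ((2 * min 2 (3 / 4 * (q : ℝ)) ^ n * q ^ (n - 1)) ^ 2 * q ^ d * (2 * n * q) * q : ℝ)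
      = 8 * n * (min 2 (3 / 4 * (q : ℝ)) ^ (2 * n) * ((q ^ (n - 1) * q) ^ 2 * q ^ d)) := by ring
    _ = 8 * n * (min 2 (3 / 4 * (q : ℝ)) ^ (2 * n) * q ^ (d + 2 * n)) := by rw [hq']; ring
    _ ≤ 8 * n ^ 4 * ((64 / 9) ^ 5 * (9 / 16) ^ n * q ^ n ^ 2) := by
        gcongr ?_ * ?_
        · gcongr
        · exact min_pow_mul_pow_le hq hd hd'
    _ = 8 * (64 / 9) ^ 5 * (n ^ 4 * (9 / 16) ^ n) * q ^ n ^ 2 := by ring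

theorem card_primeFactors_le_of_le_pow {m k : ℕ} (hm : m ≠ 0) (h : m ≤ q ^ k) :
    m.primeFactors.card ≤ k * (Nat.log 2 q + 1) := by
  refine (Nat.pow_le_pow_iff_right one_lt_two).mp ?_
  calc 2 ^ m.primeFactors.card ≤ ∏ p ∈ m.primeFactors, p :=
        Finset.pow_card_le_prod _ _ _ fun p hp ↦ (Nat.prime_of_mem_primeFactors hp).two_le
    _ ≤ m := Nat.le_of_dvd (Nat.pos_of_ne_zero hm) (Nat.prod_primeFactors_dvd m)
    _ ≤ q ^ k := h
    _ ≤ (2 ^ (Nat.log 2 q + 1)) ^ k := by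
        gcongr
        exact (Nat.lt_pow_succ_log_self one_lt_two q).le
    _ = 2 ^ (k * (Nat.log 2 q + 1)) := by rw [← pow_mul, mul_comm]

theorem tendsto_log_two_add_one_div_atTop :
    Filter.Tendsto (fun q : ℕ ↦ ((Nat.log 2 q + 1 : ℝ) / q)) Filter.atTop (nhds 0) := by
  have hpow : Filter.Tendsto (fun k : ℕ ↦ ((k : ℝ) + 1) / 2 ^ k) Filter.atTop (nhds 0) := by
    simpa [add_div] using
      (tendsto_pow_const_div_const_pow_of_one_lt 1 one_lt_two).add
        (tendsto_pow_atTop_nhds_zero_of_lt_one (r := (1 / 2 : ℝ)) (by norm_num) (by norm_num))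
  have hlog : Filter.Tendsto (Nat.log 2) Filter.atTop Filter.atTop :=
    Filter.tendsto_atTop_atTop.mpr fun k ↦ ⟨2 ^ k, fun q hq ↦ Nat.le_log_of_pow_le one_lt_two hq⟩
  refine squeeze_zero' (.of_forall fun q ↦ by positivity) ?_ (hpow.comp hlog)
  filter_upwards [Filter.eventually_ne_atTop 0] with q hq
  simp only [Function.comp_apply]
  gcongr
  exact mod_cast Nat.pow_log_le_self 2 hq

theorem exists_forall_mul_lt_of_le_pow {f g : ℕ → ℝ}
    (hf : Filter.Tendsto f Filter.atTop (nhds 0)) (hg : Filter.Tendsto g Filter.atTop (nhds 0))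
    {ε : ℝ} (hε : 0 < ε) :
    ∃ N : ℕ, ∀ n q : ℕ, N ≤ q ^ n ^ 2 → f n * g q < ε := by
  rw [← Nat.cofinite_eq_atTop] at hf hg
  have hfin := (tendsto_mul_cofinite_nhds_zero hf hg).eventually_lt_const hε
  obtain ⟨N, hN⟩ := (Set.Finite.image (fun x : ℕ × ℕ ↦ x.2 ^ x.1 ^ 2) hfin).bddAbove
  refine ⟨N + 1, fun n q hle ↦ ?_⟩
  by_contra h
  exact absurd (hN (Set.mem_image_of_mem _ (show (n, q) ∈ _ from h))) (by simp only; omega)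

end NumericalEstimates

section IntersectionRatio

variable {F : Type*} [Field F] [Finite F] {n p : ℕ} [Fact p.Prime]

theorem natCard_le_of_isPGroup {P : Subgroup (ProjectiveSpecialLinearGroup (Fin n) F)}
    (hP : IsPGroup p P) (hp : ¬ p ∣ Nat.card F) (hn : n ≠ 0) :
    (Nat.card P : ℝ) ≤ 2 * min 2 (3 / 4 * (Nat.card F : ℝ)) ^ n * Nat.card F ^ (n - 1) := by
  obtain ⟨m, rfl⟩ : ∃ m, n = m + 1 := ⟨n - 1, by omega⟩
  obtain ⟨k, hk⟩ := IsPGroup.iff_card.mp hP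
  have hdvd : p ^ k ∣ Nat.card F ^ (m + 1).choose 2 *
      ∏ i ∈ Finset.range m, (Nat.card F ^ (i + 2) - 1) := by
    rw [← hk, show Finset.range m = Finset.range (m + 1 - 1) from rfl,
      ← natCard_specialLinearGroup F (m + 1), ← natCard_projectiveSpecialLinearGroup_mul]
    exact P.card_subgroup_dvd_card.mul_right _
  have hcop : (p ^ k).Coprime (Nat.card F ^ (m + 1).choose 2) :=
    (((Fact.out : p.Prime).coprime_iff_not_dvd).mpr hp).pow _ _
  have hprod : ∏ i ∈ Finset.range m, (Nat.card F ^ (i + 2) - 1) ≠ 0 :=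
    Finset.prod_ne_zero_iff.mpr fun i _ ↦
      Nat.sub_ne_zero_of_lt (Nat.one_lt_pow (by omega) Finite.one_lt_card)
  have hle : Nat.card P ≤ ordProj[p] (∏ i ∈ Finset.range m, (Nat.card F ^ (i + 2) - 1)) := by
    rw [hk]
    exact Nat.pow_le_pow_right (Fact.out : p.Prime).pos
      (((Fact.out : p.Prime).pow_dvd_iff_le_factorization hprod).mp (hcop.dvd_of_dvd_mul_left hdvd))
  exact (Nat.cast_le.mpr hle).trans (ordProj_prod_le_min Finite.one_lt_card hp m)

theorem natCard_inf_conj_ne_bot_le_of_isPGroup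
    {P : Subgroup (ProjectiveSpecialLinearGroup (Fin n) F)} (hP : IsPGroup p P)
    (hp : (p : F) ≠ 0) (hn : 3 ≤ n) :
    Nat.card {x : ProjectiveSpecialLinearGroup (Fin n) F |
        P ⊓ P.map (MulAut.conj x⁻¹).toMonoidHom ≠ ⊥} ≤
      (n * (Nat.card F + 1)) ^ 2 * Nat.card F ^ (n ^ 2 + 2 - 2 * n) +
        Nat.card P ^ 2 * Nat.card F ^ min (n ^ 2 - 2 * n) (n ^ 2 + 10 - 4 * n) := by
  have hcentralizer (z : ProjectiveSpecialLinearGroup (Fin n) F) (hz : orderOf z = p) :=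
    exists_natCard_centralizer_le (p := p) (z := z) hp (hz ▸ pow_orderOf_eq_one z)
      (fun h ↦ (Fact.out : p.Prime).ne_one (hz.symm.trans (orderOf_eq_one_iff.mpr h)))
      (by rwa [Fintype.card_fin])
  simp only [Fintype.card_fin] at hcentralizer
  have hcount := ncard_setOf_isProjectivePseudoreflection_le hP hp
  rw [Fintype.card_fin] at hcount
  refine (natCard_inf_conj_ne_bot_le hP (T := {z | IsProjectivePseudoreflection p z})
    (fun x z hz ↦ hz.conj x) (M₁ := Nat.card F ^ (n ^ 2 + 2 - 2 * n))
    (M₂ := Nat.card F ^ min (n ^ 2 - 2 * n) (n ^ 2 + 10 - 4 * n)) ?_ ?_).trans ?_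
  · intro z _ hz
    obtain ⟨d, hle, hd⟩ := hcentralizer z hz
    exact hle.trans (Nat.pow_le_pow_right Nat.card_pos (by omega))
  · intro z hzT hz
    obtain ⟨d, hle, hd⟩ := hcentralizer z hz
    have hd := hd.resolve_left fun h ↦ hzT h.1
    exact hle.trans (Nat.pow_le_pow_right Nat.card_pos (by omega))
  · gcongr
    exact (Nat.card_mono (Set.toFinite {z | z ∈ P ∧ IsProjectivePseudoreflection p z})
      fun z hz ↦ ⟨hz.1, hz.2.2⟩).trans hcount

theorem natCast_ne_zero_of_not_dvd_natCard (hp : ¬ p ∣ Nat.card F) : (p : F) ≠ 0 := by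
  intro h
  have : CharP F p := (CharP.charP_iff_prime_eq_zero Fact.out).mpr h
  have := Fintype.ofFinite F
  rw [Nat.card_eq_fintype_card] at hp
  exact hp ((CharP.cast_eq_zero_iff F p _).mp (FiniteField.cast_card_eq_zero F))

theorem natCard_inf_conj_ne_bot_mul_le {P : Subgroup (ProjectiveSpecialLinearGroup (Fin n) F)}
    (hP : IsPGroup p P) (hp : ¬ p ∣ Nat.card F) (hn : 3 ≤ n) :
    (Nat.card {x : ProjectiveSpecialLinearGroup (Fin n) F |
        P ⊓ P.map (MulAut.conj x⁻¹).toMonoidHom ≠ ⊥} : ℝ) * (2 * n * Nat.card F) * Nat.card F ≤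
      2 * 10 ^ 5 * (n ^ 4 * (9 / 16) ^ n) * Nat.card F ^ n ^ 2 := by
  have hq : 2 ≤ Nat.card F := Finite.one_lt_card
  have hsq : 2 * n ≤ n ^ 2 := by nlinarith
  have hsq' : 4 * n ≤ n ^ 2 + 10 := by nlinarith [sq_nonneg ((n : ℤ) - 2)]
  have hcount := Nat.cast_le (α := ℝ).mpr
    (natCard_inf_conj_ne_bot_le_of_isPGroup hP (natCast_ne_zero_of_not_dvd_natCard hp) hn)
  push_cast at hcount
  have hcardP := natCard_le_of_isPGroup hP hp (by omega)
  have hfirst := mul_sq_mul_pow_le hq hn (d := n ^ 2 + 2 - 2 * n) (by omega)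
  have hsecond := mul_min_pow_sq_mul_pow_le hq (n := n) (by omega)
    (d := min (n ^ 2 - 2 * n) (n ^ 2 + 10 - 4 * n)) (by omega) (by omega)
  set q := Nat.card F
  set K : ℝ := n ^ 4 * (9 / 16) ^ n
  calc (_ : ℝ) * (2 * n * q) * q
      ≤ ((n * (q + 1)) ^ 2 * q ^ (n ^ 2 + 2 - 2 * n) + (Nat.card P : ℝ) ^ 2 *
          q ^ min (n ^ 2 - 2 * n) (n ^ 2 + 10 - 4 * n)) * (2 * n * q) * q := by gcongr
    _ ≤ ((n * (q + 1)) ^ 2 * q ^ (n ^ 2 + 2 - 2 * n) +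
          (2 * min 2 (3 / 4 * (q : ℝ)) ^ n * q ^ (n - 1)) ^ 2 *
            q ^ min (n ^ 2 - 2 * n) (n ^ 2 + 10 - 4 * n)) * (2 * n * q) * q := by gcongr
    _ ≤ 26 * K * q ^ n ^ 2 + 8 * (64 / 9) ^ 5 * K * q ^ n ^ 2 := by linarith
    _ = (26 + 8 * (64 / 9) ^ 5) * K * q ^ n ^ 2 := by ring
    _ ≤ 2 * 10 ^ 5 * K * q ^ n ^ 2 := by
        gcongr
        norm_num

theorem intersectionRatio_le {P : Subgroup (ProjectiveSpecialLinearGroup (Fin n) F)}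
    (hP : IsPGroup p P) (hp : ¬ p ∣ Nat.card F) (hn : 3 ≤ n) :
    intersectionRatio P ≤ 2 * 10 ^ 5 * (n ^ 4 * (9 / 16) ^ n) / Nat.card F := by
  have : NeZero n := ⟨by omega⟩
  have hq : 0 < (Nat.card F : ℝ) := mod_cast Nat.card_pos
  have : 0 < (n : ℝ) := mod_cast (by omega)
  have horder : (Nat.card F : ℝ) ^ n ^ 2 ≤
      2 * n * Nat.card F * Nat.card (ProjectiveSpecialLinearGroup (Fin n) F) :=
    mod_cast pow_sq_le_mul_natCard_projectiveSpecialLinearGroup F n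
  rw [intersectionRatio, div_le_div_iff₀ (mod_cast Nat.card_pos) hq]
  refine le_of_mul_le_mul_right ?_ (show 0 < 2 * n * (Nat.card F : ℝ) by positivity)
  rw [mul_right_comm]
  refine (natCard_inf_conj_ne_bot_mul_le hP hp hn).trans ((mul_le_mul_of_nonneg_left horder
    (by positivity)).trans_eq ?_)
  ring

theorem sum_intersectionRatio_le
    (H : ∀ p : ℕ, Sylow p (ProjectiveSpecialLinearGroup (Fin n) F)) (hn : 3 ≤ n) :
    ∑ p ∈ (Nat.card (ProjectiveSpecialLinearGroup (Fin n) F)).primeFactors with ¬ p ∣ Nat.card F,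
        intersectionRatio (H p : Subgroup (ProjectiveSpecialLinearGroup (Fin n) F)) ≤
      2 * 10 ^ 5 * (n ^ 6 * (9 / 16) ^ n * ((Nat.log 2 (Nat.card F) + 1) / Nat.card F)) := by
  have hle : ∀ p ∈ (Nat.card (ProjectiveSpecialLinearGroup (Fin n) F)).primeFactors.filter
      (¬ · ∣ Nat.card F),
      intersectionRatio (H p : Subgroup (ProjectiveSpecialLinearGroup (Fin n) F)) ≤
        2 * 10 ^ 5 * (n ^ 4 * (9 / 16) ^ n) / Nat.card F := fun p hp ↦
    have hp' := Finset.mem_filter.mp hp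
    have : Fact p.Prime := ⟨Nat.prime_of_mem_primeFactors hp'.1⟩
    intersectionRatio_le (H p).isPGroup' hp'.2 hn
  have hcard : (((Nat.card (ProjectiveSpecialLinearGroup (Fin n) F)).primeFactors.filter
      (¬ · ∣ Nat.card F)).card : ℝ) ≤ n ^ 2 * (Nat.log 2 (Nat.card F) + 1) :=
    mod_cast (Finset.card_filter_le _ _).trans <| card_primeFactors_le_of_le_pow Nat.card_pos.ne'
      (natCard_projectiveSpecialLinearGroup_le F n)
  calc _ ≤ (_ : ℝ) := Finset.sum_le_card_nsmul _ _ _ hle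
    _ ≤ n ^ 2 * (Nat.log 2 (Nat.card F) + 1) *
          (2 * 10 ^ 5 * (n ^ 4 * (9 / 16) ^ n) / Nat.card F) := by
        rw [nsmul_eq_mul]
        gcongr
    _ = _ := by ring

theorem exists_forall_sum_intersectionRatio_lt {ε : ℝ} (hε : 0 < ε) :
    ∃ N : ℕ, ∀ (n : ℕ) (F : Type*) [Field F] [Finite F]
      (H : ∀ p : ℕ, Sylow p (ProjectiveSpecialLinearGroup (Fin n) F)), 3 ≤ n →
      N ≤ Nat.card (ProjectiveSpecialLinearGroup (Fin n) F) →
      ∑ p ∈ (Nat.card (ProjectiveSpecialLinearGroup (Fin n) F)).primeFactors with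
          ¬ p ∣ Nat.card F,
        intersectionRatio (H p : Subgroup (ProjectiveSpecialLinearGroup (Fin n) F)) < ε := by
  have hpow : Filter.Tendsto (fun n : ℕ ↦ (n : ℝ) ^ 6 * (9 / 16) ^ n) Filter.atTop (nhds 0) :=
    tendsto_pow_const_mul_const_pow_of_abs_lt_one 6 (by norm_num [abs_of_pos])
  obtain ⟨N, hN⟩ := exists_forall_mul_lt_of_le_pow hpow tendsto_log_two_add_one_div_atTop
    (show 0 < ε / (2 * 10 ^ 5) by positivity)
  refine ⟨N, fun n F _ _ H hn hle ↦ (sum_intersectionRatio_le H hn).trans_lt ?_⟩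
  exact (lt_div_iff₀' (by norm_num)).mp
    (hN n (Nat.card F) (hle.trans (natCard_projectiveSpecialLinearGroup_le F n)))

end IntersectionRatio

/-- Asymptotics for `β(G)` (Theorem 5.1(iii) for linear groups, `n ≥ 3`): for every
`ε > 0` there is `N` such that whenever `G = PSLₙ(q)` with `n ≥ 3`, `q = r^f` a power
of a prime `r`, and `|G| ≥ N`, the sum of `Q_p(G)` over the prime divisors `p ≠ r`
of `|G|` is less than `ε`. -/
theorem stmt17 : ∀ ε : ℝ, 0 < ε → ∃ N : ℕ,
    ∀ (r f n q : ℕ), r.Prime → 0 < f → q = r ^ f → 3 ≤ n →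
    ∀ (F : Type) [Field F] [Fintype F], Fintype.card F = q →
    ∀ H : (p : ℕ) → Sylow p (ProjectiveSpecialLinearGroup (Fin n) F),
    N ≤ Nat.card (ProjectiveSpecialLinearGroup (Fin n) F) →
    ∑ p ∈ (Nat.card (ProjectiveSpecialLinearGroup (Fin n) F)).primeFactors.filter
        (fun p => p ≠ r),
      (Nat.card {x : ProjectiveSpecialLinearGroup (Fin n) F |
          (H p : Subgroup (ProjectiveSpecialLinearGroup (Fin n) F)) ⊓
            Subgroup.map (MulAut.conj x⁻¹).toMonoidHom
              (H p : Subgroup (ProjectiveSpecialLinearGroup (Fin n) F)) ≠ ⊥} : ℝ)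
        / (Nat.card (ProjectiveSpecialLinearGroup (Fin n) F) : ℝ)
      < ε := by
  intro ε hε
  obtain ⟨N, hN⟩ := exists_forall_sum_intersectionRatio_lt hε
  refine ⟨N, fun r f n q hr hf hq hn F _ _ hF H hle ↦ ?_⟩
  have hdvd {p : ℕ} (hp : p.Prime) : ¬ p ∣ Nat.card F ↔ p ≠ r := by
    rw [Nat.card_eq_fintype_card, hF, hq, hp.prime.dvd_pow_iff_dvd hf.ne',
      Nat.prime_dvd_prime_iff_eq hp hr]
  have hsum := hN n F H hn hle
  rwa [Finset.filter_congr fun p hp ↦ hdvd (Nat.prime_of_mem_primeFactors hp)] at hsum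
end
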